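/- Suppose m > n ≥ 1. Then there exists a Σ1 provability predicate PR_T(x) of T such that: (1) for any modal formula A and any arithmetical interpretation f based on PR_T(x), if N⁺A_{m,n} ⊢ A then T ⊢ f(A); and (2) there exists an arithmetical interpretation f based on PR_T(x) such that for every modal formula A, N⁺A_{m,n} ⊢ A if and only if T ⊢ f(A). (No Σ1-soundness assumption on T is needed.) -/

import Mathlib

namespace PLN

/-! ### Modal formulas and the logics N⁺A_{m,n} -/

/-- Formulas of modal propositional logic. -/
inductive MFml : Type
  | var : ℕ → MFml
  | bot : MFml
  | neg : MFml → MFml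
  | and : MFml → MFml → MFml
  | or : MFml → MFml → MFml
  | imp : MFml → MFml → MFml
  | box : MFml → MFml
  deriving DecidableEq

/-- `boxIter n A` is `□ⁿ A`, where `□⁰ A = A` and `□^(k+1) A = □ (□ᵏ A)`. -/
def boxIter : ℕ → MFml → MFml
  | 0, A => A
  | k + 1, A => .box (boxIter k A)

/-- Evaluation of a modal formula under a valuation of its "propositional atoms"
(propositional variables, and boxed formulas); used to define propositional tautologies
in the modal language. -/
def MFml.evalTC (v : MFml → Prop) : MFml → Prop
  | .bot => False
  | .neg A => ¬ A.evalTC v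
  | .and A B => A.evalTC v ∧ B.evalTC v
  | .or A B => A.evalTC v ∨ B.evalTC v
  | .imp A B => A.evalTC v → B.evalTC v
  | A => v A

/-- Propositional tautologies in the modal language. -/
def MTaut (A : MFml) : Prop := ∀ v, A.evalTC v

/-- Provability in the logic `N⁺A_{m,n}`: the pure logic of necessitation `N`
(propositional tautologies, modus ponens, necessitation) together with the axiom scheme
`□ⁿA → □ᵐA` and the rule `Ros□` (from `¬□A` infer `¬□□A`). -/
inductive NAProves (m n : ℕ) : MFml → Prop
  | taut {A} : MTaut A → NAProves m n A
  | acc (A) : NAProves m n (.imp (boxIter n A) (boxIter m A))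
  | mp {A B} : NAProves m n (.imp A B) → NAProves m n A → NAProves m n B
  | nec {A} : NAProves m n A → NAProves m n (.box A)
  | ros {A} : NAProves m n (.neg (.box A)) → NAProves m n (.neg (.box (.box A)))

/-- `IsSub B A` : `B` is a subformula of `A`. -/
inductive IsSub : MFml → MFml → Prop
  | refl (A) : IsSub A A
  | neg {B A} : IsSub B A → IsSub B (.neg A)
  | andL {B A C} : IsSub B A → IsSub B (.and A C)
  | andR {B A C} : IsSub B C → IsSub B (.and A C)
  | orL {B A C} : IsSub B A → IsSub B (.or A C)
  | orR {B A C} : IsSub B C → IsSub B (.or A C)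
  | impL {B A C} : IsSub B A → IsSub B (.imp A C)
  | impR {B A C} : IsSub B C → IsSub B (.imp A C)
  | box {B A} : IsSub B A → IsSub B (.box A)

/-! ### N-frames and N-models -/

/-- An N-model on a set `W` of worlds: an N-frame (a binary relation `≺_B` on `W`
for each modal formula `B`) together with a valuation of propositional variables. -/
structure NModel (W : Type) where
  rel : MFml → W → W → Prop
  val : W → ℕ → Prop

/-- The forcing relation of an N-model:
`x ⊩ □B` iff every `y` with `x ≺_B y` satisfies `y ⊩ B`. -/
def NModel.Forces {W : Type} (M : NModel W) : W → MFml → Prop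
  | x, .var p => M.val x p
  | _, .bot => False
  | x, .neg A => ¬ NModel.Forces M x A
  | x, .and A B => NModel.Forces M x A ∧ NModel.Forces M x B
  | x, .or A B => NModel.Forces M x A ∨ NModel.Forces M x B
  | x, .imp A B => NModel.Forces M x A → NModel.Forces M x B
  | x, .box A => ∀ y, M.rel A x y → NModel.Forces M y A

/-- The relations `≺_B^k` : `x ≺_B^0 y` iff `x = y`, and
`x ≺_B^(k+1) y` iff `∃ w, x ≺_{□ᵏB} w` and `w ≺_B^k y`. -/
def NModel.relIter {W : Type} (M : NModel W) (B : MFml) : ℕ → W → W → Prop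
  | 0, x, y => x = y
  | k + 1, x, y => ∃ w, M.rel (boxIter k B) x w ∧ NModel.relIter M B k w y

/-- `(m,n)`-accessibility of (the frame of) an N-model. -/
def NModel.Accessible {W : Type} (M : NModel W) (m n : ℕ) : Prop :=
  ∀ (B : MFml) (x y : W), NModel.relIter M B m x y → NModel.relIter M B n x y

/-! ### The language of first-order arithmetic -/

/-- Terms of the language of arithmetic, with de Bruijn variables. -/
inductive ATerm : Type
  | var : ℕ → ATerm
  | zero : ATerm
  | succ : ATerm → ATerm
  | add : ATerm → ATerm → ATerm
  | mul : ATerm → ATerm → ATerm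
  deriving DecidableEq

/-- Formulas of the language of arithmetic (with `≤` primitive), de Bruijn variables. -/
inductive AFml : Type
  | eq : ATerm → ATerm → AFml
  | le : ATerm → ATerm → AFml
  | neg : AFml → AFml
  | and : AFml → AFml → AFml
  | or : AFml → AFml → AFml
  | imp : AFml → AFml → AFml
  | all : AFml → AFml
  | ex : AFml → AFml
  deriving DecidableEq

/-- Lift (shift up by one) the variables `≥ c` of a term. -/
def ATerm.lift (c : ℕ) : ATerm → ATerm
  | .var n => .var (if n < c then n else n + 1)
  | .zero => .zero
  | .succ t => .succ (t.lift c)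
  | .add t s => .add (t.lift c) (s.lift c)
  | .mul t s => .mul (t.lift c) (s.lift c)

/-- Simultaneous substitution in terms. -/
def ATerm.substAll (σ : ℕ → ATerm) : ATerm → ATerm
  | .var n => σ n
  | .zero => .zero
  | .succ t => .succ (t.substAll σ)
  | .add t s => .add (t.substAll σ) (s.substAll σ)
  | .mul t s => .mul (t.substAll σ) (s.substAll σ)

/-- Pushing a substitution under a binder. -/
def liftSub (σ : ℕ → ATerm) : ℕ → ATerm
  | 0 => .var 0
  | n + 1 => (σ n).lift 0

/-- Lift (shift up by one) the free variables `≥ c` of a formula. -/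
def AFml.lift (c : ℕ) : AFml → AFml
  | .eq t s => .eq (t.lift c) (s.lift c)
  | .le t s => .le (t.lift c) (s.lift c)
  | .neg φ => .neg (φ.lift c)
  | .and φ ψ => .and (φ.lift c) (ψ.lift c)
  | .or φ ψ => .or (φ.lift c) (ψ.lift c)
  | .imp φ ψ => .imp (φ.lift c) (ψ.lift c)
  | .all φ => .all (φ.lift (c + 1))
  | .ex φ => .ex (φ.lift (c + 1))

/-- Simultaneous (capture-avoiding) substitution in formulas. -/
def AFml.substAll (σ : ℕ → ATerm) : AFml → AFml
  | .eq t s => .eq (t.substAll σ) (s.substAll σ)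
  | .le t s => .le (t.substAll σ) (s.substAll σ)
  | .neg φ => .neg (φ.substAll σ)
  | .and φ ψ => .and (φ.substAll σ) (ψ.substAll σ)
  | .or φ ψ => .or (φ.substAll σ) (ψ.substAll σ)
  | .imp φ ψ => .imp (φ.substAll σ) (ψ.substAll σ)
  | .all φ => .all (φ.substAll (liftSub σ))
  | .ex φ => .ex (φ.substAll (liftSub σ))

def subst0Env (t : ATerm) : ℕ → ATerm
  | 0 => t
  | n + 1 => .var n

def subst2Env (t s : ATerm) : ℕ → ATerm
  | 0 => t
  | 1 => s
  | n + 2 => .var n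

/-- Substitute the term `t` for the free variable `0` (decrementing other variables). -/
def AFml.subst0 (φ : AFml) (t : ATerm) : AFml := φ.substAll (subst0Env t)

/-- Substitute the terms `t`, `s` for the free variables `0`, `1` simultaneously. -/
def AFml.subst2 (φ : AFml) (t s : ATerm) : AFml := φ.substAll (subst2Env t s)

/-- Substitute `S(var 0)` for `var 0`, leaving all other free variables unchanged. -/
def succSubst (φ : AFml) : AFml :=
  φ.substAll fun n => if n = 0 then .succ (.var 0) else .var n

/-- All variables of a term are `< c`. -/
def ATerm.FreeLt (c : ℕ) : ATerm → Prop
  | .var n => n < c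
  | .zero => True
  | .succ t => t.FreeLt c
  | .add t s => t.FreeLt c ∧ s.FreeLt c
  | .mul t s => t.FreeLt c ∧ s.FreeLt c

/-- All free variables of a formula are `< c`; `FreeLt 0 φ` says that `φ` is a sentence. -/
def AFml.FreeLt (c : ℕ) : AFml → Prop
  | .eq t s => t.FreeLt c ∧ s.FreeLt c
  | .le t s => t.FreeLt c ∧ s.FreeLt c
  | .neg φ => φ.FreeLt c
  | .and φ ψ => φ.FreeLt c ∧ ψ.FreeLt c
  | .or φ ψ => φ.FreeLt c ∧ ψ.FreeLt c
  | .imp φ ψ => φ.FreeLt c ∧ ψ.FreeLt c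
  | .all φ => φ.FreeLt (c + 1)
  | .ex φ => φ.FreeLt (c + 1)

/-- The numeral `n̄`. -/
def numeral : ℕ → ATerm
  | 0 => .zero
  | n + 1 => .succ (numeral n)

/-- A Gödel numbering of terms. -/
def ATerm.code : ATerm → ℕ
  | .var n => Nat.pair 0 n
  | .zero => Nat.pair 1 0
  | .succ t => Nat.pair 2 t.code
  | .add t s => Nat.pair 3 (Nat.pair t.code s.code)
  | .mul t s => Nat.pair 4 (Nat.pair t.code s.code)

/-- A Gödel numbering of formulas. -/
def AFml.code : AFml → ℕ
  | .eq t s => Nat.pair 0 (Nat.pair t.code s.code)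
  | .le t s => Nat.pair 1 (Nat.pair t.code s.code)
  | .neg φ => Nat.pair 2 φ.code
  | .and φ ψ => Nat.pair 3 (Nat.pair φ.code ψ.code)
  | .or φ ψ => Nat.pair 4 (Nat.pair φ.code ψ.code)
  | .imp φ ψ => Nat.pair 5 (Nat.pair φ.code ψ.code)
  | .all φ => Nat.pair 6 φ.code
  | .ex φ => Nat.pair 7 φ.code

/-- `⌜φ⌝`, the numeral of the Gödel number of `φ`. -/
def gnum (φ : AFml) : ATerm := numeral φ.code

/-- For a formula `P(x)` (with free variable `var 0`), `P.appNum φ` is `P(⌜φ⌝)`. -/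
def AFml.appNum (P φ : AFml) : AFml := P.subst0 (gnum φ)

/-- Iterated application of a predicate: `iterPred P k φ = P(⌜P(⌜⋯P(⌜φ⌝)⋯⌝)⌝)` (`k` times). -/
def iterPred (P : AFml) : ℕ → AFml → AFml
  | 0, φ => φ
  | k + 1, φ => P.appNum (iterPred P k φ)

/-! ### Satisfaction in the standard model -/

def ATerm.val (ρ : ℕ → ℕ) : ATerm → ℕ
  | .var n => ρ n
  | .zero => 0
  | .succ t => t.val ρ + 1
  | .add t s => t.val ρ + s.val ρ
  | .mul t s => t.val ρ * s.val ρ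

def consEnv (a : ℕ) (ρ : ℕ → ℕ) : ℕ → ℕ
  | 0 => a
  | n + 1 => ρ n

/-- Satisfaction in the standard model `ℕ` under an environment `ρ`. -/
def AFml.Sat (ρ : ℕ → ℕ) : AFml → Prop
  | .eq t s => t.val ρ = s.val ρ
  | .le t s => t.val ρ ≤ s.val ρ
  | .neg φ => ¬ φ.Sat ρ
  | .and φ ψ => φ.Sat ρ ∧ ψ.Sat ρ
  | .or φ ψ => φ.Sat ρ ∨ ψ.Sat ρ
  | .imp φ ψ => φ.Sat ρ → ψ.Sat ρ
  | .all φ => ∀ a, φ.Sat (consEnv a ρ)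
  | .ex φ => ∃ a, φ.Sat (consEnv a ρ)

/-- `ℕ ⊨ φ`. -/
def TrueN (φ : AFml) : Prop := φ.Sat fun _ => 0

/-! ### The arithmetical hierarchy: Δ₀, Σ₁, Π₁ -/

/-- `Δ₀` formulas: every quantifier is bounded. -/
inductive IsDelta0 : AFml → Prop
  | eq (t s : ATerm) : IsDelta0 (.eq t s)
  | le (t s : ATerm) : IsDelta0 (.le t s)
  | neg {φ} : IsDelta0 φ → IsDelta0 (.neg φ)
  | and {φ ψ} : IsDelta0 φ → IsDelta0 ψ → IsDelta0 (.and φ ψ)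
  | or {φ ψ} : IsDelta0 φ → IsDelta0 ψ → IsDelta0 (.or φ ψ)
  | imp {φ ψ} : IsDelta0 φ → IsDelta0 ψ → IsDelta0 (.imp φ ψ)
  | ball {φ : AFml} (t : ATerm) : IsDelta0 φ → IsDelta0 (.all (.imp (.le (.var 0) (ATerm.lift 0 t)) φ))
  | bex {φ : AFml} (t : ATerm) : IsDelta0 φ → IsDelta0 (.ex (.and (.le (.var 0) (ATerm.lift 0 t)) φ))

mutual
  /-- `Σ₁` formulas. -/
  inductive IsSigma1 : AFml → Prop
    | delta0 {φ} : IsDelta0 φ → IsSigma1 φ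
    | and {φ ψ} : IsSigma1 φ → IsSigma1 ψ → IsSigma1 (.and φ ψ)
    | or {φ ψ} : IsSigma1 φ → IsSigma1 ψ → IsSigma1 (.or φ ψ)
    | ex {φ} : IsSigma1 φ → IsSigma1 (.ex φ)
    | negPi {φ} : IsPi1 φ → IsSigma1 (.neg φ)
    | impPiSigma {φ ψ} : IsPi1 φ → IsSigma1 ψ → IsSigma1 (.imp φ ψ)
  /-- `Π₁` formulas. -/
  inductive IsPi1 : AFml → Prop
    | delta0 {φ} : IsDelta0 φ → IsPi1 φ
    | and {φ ψ} : IsPi1 φ → IsPi1 ψ → IsPi1 (.and φ ψ)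
    | or {φ ψ} : IsPi1 φ → IsPi1 ψ → IsPi1 (.or φ ψ)
    | all {φ} : IsPi1 φ → IsPi1 (.all φ)
    | negSigma {φ} : IsSigma1 φ → IsPi1 (.neg φ)
    | impSigmaPi {φ ψ} : IsSigma1 φ → IsPi1 ψ → IsPi1 (.imp φ ψ)
end

/-! ### A Hilbert-style proof system for first-order arithmetic -/

/-- Evaluation of an arithmetical formula under a valuation of its "propositionally atomic"
subformulas (atomic or quantified formulas); used for propositional tautologies and
tautological consequence. -/
def AFml.evalProp (v : AFml → Prop) : AFml → Prop
  | .neg φ => ¬ φ.evalProp v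
  | .and φ ψ => φ.evalProp v ∧ ψ.evalProp v
  | .or φ ψ => φ.evalProp v ∨ ψ.evalProp v
  | .imp φ ψ => φ.evalProp v → ψ.evalProp v
  | φ => v φ

/-- Propositional tautologies in the language of arithmetic. -/
def ATaut (φ : AFml) : Prop := ∀ v, φ.evalProp v

/-- `φ` is a tautological consequence of the set `X` of formulas. -/
def TC (X : Set AFml) (φ : AFml) : Prop :=
  ∀ v : AFml → Prop, (∀ ψ ∈ X, ψ.evalProp v) → φ.evalProp v

def iffF (φ ψ : AFml) : AFml := .and (.imp φ ψ) (.imp ψ φ)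

/-- Hilbert-style provability from the set of axioms `Γ` in classical first-order
logic with equality. -/
inductive Proves (Γ : Set AFml) : AFml → Prop
  | ax {φ} : φ ∈ Γ → Proves Γ φ
  | taut {φ} : ATaut φ → Proves Γ φ
  | mp {φ ψ} : Proves Γ (.imp φ ψ) → Proves Γ φ → Proves Γ ψ
  | allE (φ : AFml) (t : ATerm) : Proves Γ (.imp (.all φ) (φ.subst0 t))
  | exI (φ : AFml) (t : ATerm) : Proves Γ (.imp (φ.subst0 t) (.ex φ))
  | allImp (φ ψ : AFml) : Proves Γ (.imp (.all (.imp φ ψ)) (.imp (.all φ) (.all ψ)))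
  | vacAll (φ : AFml) : Proves Γ (.imp φ (.all (AFml.lift 0 φ)))
  | exDef (φ : AFml) : Proves Γ (iffF (.ex φ) (.neg (.all (.neg φ))))
  | gen {φ} : Proves Γ φ → Proves Γ (.all φ)
  | eqRefl (t : ATerm) : Proves Γ (.eq t t)
  | eqSubst (φ : AFml) (t s : ATerm) : Proves Γ (.imp (.eq t s) (.imp (φ.subst0 t) (φ.subst0 s)))

/-! ### Peano arithmetic -/

/-- The axioms of Peano arithmetic. -/
inductive PAax : AFml → Prop
  | succNeZero : PAax (.all (.neg (.eq (.succ (.var 0)) .zero)))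
  | succInj :
      PAax (.all (.all (.imp (.eq (.succ (.var 1)) (.succ (.var 0))) (.eq (.var 1) (.var 0)))))
  | addZero : PAax (.all (.eq (.add (.var 0) .zero) (.var 0)))
  | addSucc :
      PAax (.all (.all (.eq (.add (.var 1) (.succ (.var 0))) (.succ (.add (.var 1) (.var 0))))))
  | mulZero : PAax (.all (.eq (.mul (.var 0) .zero) .zero))
  | mulSucc :
      PAax (.all (.all (.eq (.mul (.var 1) (.succ (.var 0)))
        (.add (.mul (.var 1) (.var 0)) (.var 1)))))
  | leDef :
      PAax (.all (.all (iffF (.le (.var 1) (.var 0))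
        (.ex (.eq (.add (.var 0) (.var 2)) (.var 1))))))
  | ind (φ : AFml) :
      PAax (.imp (.and (φ.subst0 .zero) (.all (.imp φ (succSubst φ)))) (.all φ))

/-- Peano arithmetic, as a set of axioms. -/
def PA : Set AFml := {φ | PAax φ}

/-- The sentence `0 = 1`. -/
def botFml : AFml := .eq .zero (.succ .zero)

/-- `t < s`, as the formula `S(t) ≤ s`. -/
def ltF (t s : ATerm) : AFml := .le (.succ t) s

/-- `Δ₁(PA)` formulas: `Σ₁` formulas which are `PA`-provably equivalent to a `Π₁` formula. -/
def IsDelta1PA (φ : AFml) : Prop :=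
  IsSigma1 φ ∧ ∃ ψ, IsPi1 ψ ∧ Proves PA (iffF φ ψ)

/-! ### Theories, provability predicates, arithmetical interpretations -/

/-- `Tax` is primitive recursively axiomatized (via the Gödel numbering). -/
def PrAxiomatized (Tax : Set AFml) : Prop :=
  ∃ p : ℕ → Bool, Primrec p ∧ ∀ φ : AFml, φ ∈ Tax ↔ p φ.code = true

/-- `Σ₁`-soundness: every `T`-provable `Σ₁` sentence is true in `ℕ`. -/
def Sigma1Sound (Tax : Set AFml) : Prop :=
  ∀ φ : AFml, IsSigma1 φ → φ.FreeLt 0 → Proves Tax φ → TrueN φ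

/-- `P` is a provability predicate of `T`: a formula `P(x)` with at most the free
variable `x` such that for every formula `φ`, `T ⊢ φ` iff `PA ⊢ P(⌜φ⌝)`. -/
def IsProvPred (Tax : Set AFml) (P : AFml) : Prop :=
  P.FreeLt 1 ∧ ∀ φ : AFml, Proves Tax φ ↔ Proves PA (P.appNum φ)

/-- `f` is an arithmetical interpretation based on the predicate `P`. -/
def IsInterp (P : AFml) (f : MFml → AFml) : Prop :=
  (∀ i, (f (.var i)).FreeLt 0) ∧
  f .bot = botFml ∧
  (∀ A, f (.neg A) = .neg (f A)) ∧
  (∀ A B, f (.and A B) = .and (f A) (f B)) ∧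
  (∀ A B, f (.or A B) = .or (f A) (f B)) ∧
  (∀ A B, f (.imp A B) = .imp (f A) (f B)) ∧
  (∀ A, f (.box A) = P.appNum (f A))

/-- The provability logic of the predicate `P` (relative to the theory `Tax`). -/
def PL (Tax : Set AFml) (P : AFml) : Set MFml :=
  {A | ∀ f : MFml → AFml, IsInterp P f → Proves Tax (f A)}

/-- The formulas with a `T`-proof of code `≤ s` (relative to a proof enumeration `prf`). -/
def PTset (prf : ℕ → Option AFml) (s : ℕ) : Set AFml :=
  {φ | ∃ y ≤ s, prf y = some φ}

/-!
Write `m = n + d` with `d ≥ 1`. A Rosser-style diagonalization gives a Σ₁ formula `τ` that is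
*flexible*: `PA` proves `τ(k)` when `k` codes a theorem of `T`, while over `T` all other instances
of `τ` are independent of each other. The fixed point theorem then gives a Σ₁ formula `P` with
`P(x) ↔ ∃ z ≤ x, (x is reached from z) ∧ τ(z)`, where `x` is reached from `z` if `x = z`, or if
`z` has the form `⌜P(⌜…P(y)…⌝)⌝` with `n - 1` occurrences of `P` and `x` results from `z` by a
multiple of `d` applications of `y ↦ ⌜P(y)⌝`. So the scheme `□ⁿA → □ᵐA` holds in `PA` by the
choice of `P`, and the rule `Ros□` holds because `N⁺A_{m,n}` has no theorem of the form `¬□A`: all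
theorems are true when every box is read as true. For completeness, let the variables be
interpreted by further instances of `τ`. A valuation of the modal language that satisfies
`N⁺A_{m,n}` but not `A` prescribes truth values for the instances of `τ`; by flexibility some
model of `T` realizes them, and it refutes the interpretation of `A`. The models used here are
propositional: truth assignments to the atomic and quantified formulas under which the theorems of
a theory are true.
-/

/-! ### Substitution -/

/-- The renaming that shifts the variables `≥ c` up by one, so that `AFml.lift c` becomes an
instance of simultaneous substitution. -/
def shiftSub (c : ℕ) : ℕ → ATerm := fun n => .var (if n < c then n else n + 1)

theorem ATerm.lift_eq_substAll (c : ℕ) (t : ATerm) : t.lift c = t.substAll (shiftSub c) := by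
  induction t <;> simp_all [ATerm.lift, ATerm.substAll, shiftSub]

theorem liftSub_shiftSub (c : ℕ) : liftSub (shiftSub c) = shiftSub (c + 1) := by
  funext n
  cases n with
  | zero => simp [liftSub, shiftSub]
  | succ n => simp only [liftSub, shiftSub, ATerm.lift]; grind

theorem AFml.lift_eq_substAll (c : ℕ) (φ : AFml) : φ.lift c = φ.substAll (shiftSub c) := by
  induction φ generalizing c <;>
    simp_all [AFml.lift, AFml.substAll, ATerm.lift_eq_substAll, liftSub_shiftSub]

theorem ATerm.substAll_substAll (σ τ : ℕ → ATerm) (t : ATerm) :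
    (t.substAll σ).substAll τ = t.substAll fun n => (σ n).substAll τ := by
  induction t <;> simp_all [ATerm.substAll]

theorem ATerm.lift_substAll_liftSub (σ : ℕ → ATerm) (t : ATerm) :
    (t.lift 0).substAll (liftSub σ) = (t.substAll σ).lift 0 := by
  simp only [ATerm.lift_eq_substAll, ATerm.substAll_substAll]
  congr 1
  funext k
  simp [shiftSub, ATerm.substAll, liftSub, ATerm.lift_eq_substAll]

theorem liftSub_substAll (σ τ : ℕ → ATerm) :
    (fun n => (liftSub σ n).substAll (liftSub τ)) = liftSub fun n => (σ n).substAll τ := by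
  funext n
  cases n with
  | zero => rfl
  | succ n => exact ATerm.lift_substAll_liftSub τ (σ n)

theorem AFml.substAll_substAll (σ τ : ℕ → ATerm) (φ : AFml) :
    (φ.substAll σ).substAll τ = φ.substAll fun n => (σ n).substAll τ := by
  induction φ generalizing σ τ <;>
    simp_all [AFml.substAll, ATerm.substAll_substAll, liftSub_substAll]

theorem ATerm.substAll_congr {c : ℕ} {σ τ : ℕ → ATerm} (h : ∀ n < c, σ n = τ n) {t : ATerm}
    (ht : t.FreeLt c) : t.substAll σ = t.substAll τ := by
  induction t <;> simp_all [ATerm.substAll, ATerm.FreeLt]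

theorem liftSub_congr {c : ℕ} {σ τ : ℕ → ATerm} (h : ∀ n < c, σ n = τ n) :
    ∀ n < c + 1, liftSub σ n = liftSub τ n
  | 0, _ => rfl
  | n + 1, hn => congrArg (ATerm.lift 0) (h n (by omega))

theorem AFml.substAll_congr {c : ℕ} {σ τ : ℕ → ATerm} (h : ∀ n < c, σ n = τ n) {φ : AFml}
    (hφ : φ.FreeLt c) : φ.substAll σ = φ.substAll τ := by
  induction φ generalizing c σ τ with
  | eq t s => exact congrArg₂ AFml.eq (ATerm.substAll_congr h hφ.1) (ATerm.substAll_congr h hφ.2)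
  | le t s => exact congrArg₂ AFml.le (ATerm.substAll_congr h hφ.1) (ATerm.substAll_congr h hφ.2)
  | neg φ ih => exact congrArg AFml.neg (ih h hφ)
  | and φ ψ ih₁ ih₂ => exact congrArg₂ AFml.and (ih₁ h hφ.1) (ih₂ h hφ.2)
  | or φ ψ ih₁ ih₂ => exact congrArg₂ AFml.or (ih₁ h hφ.1) (ih₂ h hφ.2)
  | imp φ ψ ih₁ ih₂ => exact congrArg₂ AFml.imp (ih₁ h hφ.1) (ih₂ h hφ.2)
  | all φ ih => exact congrArg AFml.all (ih (liftSub_congr h) hφ)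
  | ex φ ih => exact congrArg AFml.ex (ih (liftSub_congr h) hφ)

theorem ATerm.substAll_var (t : ATerm) : t.substAll .var = t := by
  induction t <;> simp_all [ATerm.substAll]

theorem liftSub_var : liftSub .var = .var := by
  funext n
  cases n <;> simp [liftSub, ATerm.lift]

theorem AFml.substAll_var (φ : AFml) : φ.substAll .var = φ := by
  induction φ <;> simp_all [AFml.substAll, ATerm.substAll_var, liftSub_var]

theorem ATerm.substAll_of_freeLt_zero {t : ATerm} (ht : t.FreeLt 0) (σ : ℕ → ATerm) :
    t.substAll σ = t := by
  rw [ATerm.substAll_congr (τ := .var) (by simp) ht, ATerm.substAll_var]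

theorem AFml.substAll_of_freeLt_zero {φ : AFml} (hφ : φ.FreeLt 0) (σ : ℕ → ATerm) :
    φ.substAll σ = φ := by
  rw [AFml.substAll_congr (τ := .var) (by simp) hφ, AFml.substAll_var]

theorem ATerm.FreeLt.substAll {σ : ℕ → ATerm} {c d : ℕ} {t : ATerm} (ht : t.FreeLt c)
    (h : ∀ n < c, (σ n).FreeLt d) : (t.substAll σ).FreeLt d := by
  induction t <;> simp_all [ATerm.substAll, ATerm.FreeLt]

theorem freeLt_liftSub {σ : ℕ → ATerm} {c d : ℕ} (h : ∀ n < c, (σ n).FreeLt d) :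
    ∀ n < c + 1, (liftSub σ n).FreeLt (d + 1)
  | 0, _ => Nat.succ_pos d
  | n + 1, hn => by
    rw [liftSub, ATerm.lift_eq_substAll]
    exact (h n (by omega)).substAll fun k hk => Nat.succ_lt_succ hk

theorem AFml.FreeLt.substAll {σ : ℕ → ATerm} {c d : ℕ} {φ : AFml} (hφ : φ.FreeLt c)
    (h : ∀ n < c, (σ n).FreeLt d) : (φ.substAll σ).FreeLt d := by
  induction φ generalizing σ c d with
  | eq t s => exact ⟨hφ.1.substAll h, hφ.2.substAll h⟩
  | le t s => exact ⟨hφ.1.substAll h, hφ.2.substAll h⟩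
  | neg φ ih => exact ih hφ h
  | and φ ψ ih₁ ih₂ => exact ⟨ih₁ hφ.1 h, ih₂ hφ.2 h⟩
  | or φ ψ ih₁ ih₂ => exact ⟨ih₁ hφ.1 h, ih₂ hφ.2 h⟩
  | imp φ ψ ih₁ ih₂ => exact ⟨ih₁ hφ.1 h, ih₂ hφ.2 h⟩
  | all φ ih => exact ih (c := c + 1) (d := d + 1) hφ (freeLt_liftSub h)
  | ex φ ih => exact ih (c := c + 1) (d := d + 1) hφ (freeLt_liftSub h)

theorem ATerm.freeLt_substAll {σ : ℕ → ATerm} {c : ℕ} (h : ∀ n, (σ n).FreeLt c) (t : ATerm) :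
    (t.substAll σ).FreeLt c := by
  induction t <;> grind [ATerm.FreeLt, ATerm.substAll]

theorem AFml.freeLt_substAll {σ : ℕ → ATerm} {c : ℕ} (h : ∀ n, (σ n).FreeLt c) (φ : AFml) :
    (φ.substAll σ).FreeLt c := by
  induction φ generalizing σ c with
  | eq t s | le t s => exact ⟨t.freeLt_substAll h, s.freeLt_substAll h⟩
  | neg _ ih => exact ih h
  | and _ _ ih₁ ih₂ | or _ _ ih₁ ih₂ | imp _ _ ih₁ ih₂ => exact ⟨ih₁ h, ih₂ h⟩
  | all _ ih | ex _ ih =>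
    exact ih fun n => freeLt_liftSub (c := n) (fun k _ => h k) n n.lt_succ_self

theorem ATerm.FreeLt.mono {c d : ℕ} (hcd : c ≤ d) {t : ATerm} (ht : t.FreeLt c) :
    t.FreeLt d := by
  simpa [ATerm.substAll_var] using ht.substAll (σ := .var) fun _ hn => hn.trans_le hcd

theorem AFml.FreeLt.mono {c d : ℕ} (hcd : c ≤ d) {φ : AFml} (hφ : φ.FreeLt c) :
    φ.FreeLt d := by
  simpa [AFml.substAll_var] using hφ.substAll (σ := .var) fun _ hn => hn.trans_le hcd

theorem ATerm.val_substAll (σ : ℕ → ATerm) (ρ : ℕ → ℕ) (t : ATerm) :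
    (t.substAll σ).val ρ = t.val fun n => (σ n).val ρ := by
  induction t <;> simp_all [ATerm.substAll, ATerm.val]

theorem ATerm.val_lift_zero (t : ATerm) (a : ℕ) (ρ : ℕ → ℕ) :
    (t.lift 0).val (consEnv a ρ) = t.val ρ := by
  rw [ATerm.lift_eq_substAll, ATerm.val_substAll]
  rfl

theorem val_liftSub (σ : ℕ → ATerm) (ρ : ℕ → ℕ) (a : ℕ) :
    (fun n => (liftSub σ n).val (consEnv a ρ)) = consEnv a fun n => (σ n).val ρ := by
  funext n
  cases n with
  | zero => rfl
  | succ n => exact ATerm.val_lift_zero (σ n) a ρ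

theorem AFml.sat_substAll (σ : ℕ → ATerm) (ρ : ℕ → ℕ) (φ : AFml) :
    (φ.substAll σ).Sat ρ ↔ φ.Sat fun n => (σ n).val ρ := by
  induction φ generalizing σ ρ <;>
    simp_all [AFml.substAll, AFml.Sat, ATerm.val_substAll, val_liftSub]

theorem IsDelta0.substAll {φ : AFml} (h : IsDelta0 φ) (σ : ℕ → ATerm) :
    IsDelta0 (φ.substAll σ) := by
  induction h generalizing σ with
  | eq t s => exact .eq _ _
  | le t s => exact .le _ _
  | neg _ ih => exact .neg (ih σ)
  | and _ _ ih₁ ih₂ => exact .and (ih₁ σ) (ih₂ σ)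
  | or _ _ ih₁ ih₂ => exact .or (ih₁ σ) (ih₂ σ)
  | imp _ _ ih₁ ih₂ => exact .imp (ih₁ σ) (ih₂ σ)
  | ball t _ ih =>
    simp only [AFml.substAll, ATerm.lift_substAll_liftSub]
    exact .ball _ (ih _)
  | bex t _ ih =>
    simp only [AFml.substAll, ATerm.lift_substAll_liftSub]
    exact .bex _ (ih _)

theorem ATerm.lift_zero_subst0Env (t s : ATerm) : (t.lift 0).substAll (subst0Env s) = t := by
  rw [ATerm.lift_eq_substAll, ATerm.substAll_substAll]
  exact t.substAll_var

theorem freeLt_numeral (n : ℕ) : (numeral n).FreeLt 0 := by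
  induction n with
  | zero => trivial
  | succ _ ih => exact ih

@[simp] theorem substAll_numeral (n : ℕ) (σ : ℕ → ATerm) : (numeral n).substAll σ = numeral n :=
  ATerm.substAll_of_freeLt_zero (freeLt_numeral n) σ

@[simp] theorem lift_numeral (n c : ℕ) : (numeral n).lift c = numeral n := by
  rw [ATerm.lift_eq_substAll, substAll_numeral]

@[simp] theorem val_numeral (n : ℕ) (ρ : ℕ → ℕ) : (numeral n).val ρ = n := by
  induction n with
  | zero => rfl
  | succ n ih => simp [numeral, ATerm.val, ih]

theorem numeral_injective : Function.Injective numeral := fun a b h => by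
  simpa using congrArg (ATerm.val fun _ => 0) h

/-- `t.inst ρ` replaces every variable of `t` by the numeral of its value under `ρ`. -/
def ATerm.inst (t : ATerm) (ρ : ℕ → ℕ) : ATerm := t.substAll fun n => numeral (ρ n)

/-- `φ.inst ρ` replaces every free variable of `φ` by the numeral of its value under `ρ`. -/
def AFml.inst (φ : AFml) (ρ : ℕ → ℕ) : AFml := φ.substAll fun n => numeral (ρ n)

theorem AFml.freeLt_inst (φ : AFml) (ρ : ℕ → ℕ) : (φ.inst ρ).FreeLt 0 :=
  φ.freeLt_substAll fun n => freeLt_numeral (ρ n)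

theorem AFml.lift_inst (φ : AFml) (ρ : ℕ → ℕ) : (φ.inst ρ).lift 0 = φ.inst ρ := by
  rw [lift_eq_substAll, substAll_of_freeLt_zero (φ.freeLt_inst ρ)]

/-- `φ.instSucc ρ` keeps the variable `0` of `φ` and replaces the variable `n + 1` by the numeral
of `ρ n`; it is the body of `(∀x φ).inst ρ`. -/
def AFml.instSucc (φ : AFml) (ρ : ℕ → ℕ) : AFml := φ.substAll (liftSub fun n => numeral (ρ n))

theorem AFml.instSucc_substAll (φ : AFml) (ρ : ℕ → ℕ) (σ : ℕ → ATerm) :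
    (φ.instSucc ρ).substAll σ =
      φ.substAll fun n => match n with | 0 => σ 0 | n + 1 => numeral (ρ n) := by
  rw [AFml.instSucc, AFml.substAll_substAll]
  congr 1
  funext n
  cases n with
  | zero => rfl
  | succ n => simp [liftSub]

theorem AFml.instSucc_subst0_numeral (φ : AFml) (ρ : ℕ → ℕ) (a : ℕ) :
    (φ.instSucc ρ).subst0 (numeral a) = φ.inst (consEnv a ρ) := by
  rw [AFml.subst0, AFml.instSucc_substAll, AFml.inst]
  congr 1
  funext n
  cases n <;> rfl

theorem AFml.instSucc_subst0_var (φ : AFml) (ρ : ℕ → ℕ) :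
    (φ.instSucc ρ).subst0 (.var 0) = φ.instSucc ρ := by
  rw [AFml.subst0, AFml.instSucc_substAll, AFml.instSucc]
  congr 1
  funext n
  cases n <;> simp [liftSub, subst0Env]

theorem ATerm.inst_substAll (t : ATerm) (ρ : ℕ → ℕ) (σ : ℕ → ATerm) :
    (t.inst ρ).substAll σ = t.inst ρ :=
  (substAll_substAll _ σ t).trans (congrArg t.substAll (funext fun n => substAll_numeral (ρ n) σ))

theorem ATerm.lift_substAll_liftSub_numeral (t : ATerm) (ρ : ℕ → ℕ) :
    (t.lift 0).substAll (liftSub fun n => numeral (ρ n)) = t.inst ρ := by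
  rw [ATerm.lift_substAll_liftSub, ATerm.lift_eq_substAll]
  exact t.inst_substAll ρ _

theorem AFml.subst0_numeral {φ : AFml} (hφ : φ.FreeLt 1) (k : ℕ) (ρ : ℕ → ℕ) :
    φ.subst0 (numeral k) = φ.inst (consEnv k ρ) :=
  AFml.substAll_congr (c := 1) (fun n hn => by rw [Nat.lt_one_iff.1 hn]; rfl) hφ

/-! ### Propositional compactness -/

theorem exists_ultrafilter_eventually_of_not_provable {V F : Type*} {eval : V → F → Prop}
    {conj : F → F → F} (eval_conj : ∀ v a b, eval v (conj a b) ↔ eval v a ∧ eval v b)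
    {thm : F → Prop} (thm_nonempty : ∃ a, thm a)
    (thm_of_forall : ∀ a b c, thm a → thm b → (∀ v, eval v a → eval v b → eval v c) → thm c)
    {ψ : F} (hψ : ¬ thm ψ) :
    ∃ U : Ultrafilter V, (∀ φ, thm φ → ∀ᶠ v in U, eval v φ) ∧ ∀ᶠ v in U, ¬ eval v ψ := by
  let 𝓕 : Filter V :=
    { sets := {S | ∃ a, thm a ∧ ∀ v, eval v a → v ∈ S}
      univ_sets := thm_nonempty.imp fun a ha => ⟨ha, fun _ _ => trivial⟩
      sets_of_superset := fun ⟨a, ha, hS⟩ hST => ⟨a, ha, fun v hv => hST (hS v hv)⟩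
      inter_sets := fun ⟨a, ha, hS⟩ ⟨b, hb, hT⟩ =>
        ⟨conj a b, thm_of_forall a b _ ha hb fun v h h' => (eval_conj v a b).2 ⟨h, h'⟩,
          fun v h => ⟨hS v ((eval_conj v a b).1 h).1, hT v ((eval_conj v a b).1 h).2⟩⟩ }
  have : (𝓕 ⊓ Filter.principal {v | ¬ eval v ψ}).NeBot := by
    refine Filter.inf_principal_neBot_iff.2 fun S ⟨a, ha, hS⟩ => ?_
    by_contra h
    refine hψ (thm_of_forall a a ψ ha ha fun v hv _ => ?_)
    by_contra hv'
    exact h ⟨v, hS v hv, hv'⟩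
  have hU := Ultrafilter.of_le (𝓕 ⊓ Filter.principal {v | ¬ eval v ψ})
  exact ⟨Ultrafilter.of _, fun φ hφ => hU (Filter.mem_inf_of_left ⟨φ, hφ, fun _ hv => hv⟩),
    hU (Filter.mem_inf_of_right (Filter.mem_principal_self _))⟩

theorem AFml.evalProp_eventually (U : Ultrafilter (AFml → Prop)) (φ : AFml) :
    φ.evalProp (fun ψ => ∀ᶠ v : AFml → Prop in U, v ψ) ↔ ∀ᶠ v in U, φ.evalProp v := by
  induction φ with
  | neg φ ih => exact (not_congr ih).trans Ultrafilter.eventually_not.symm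
  | and φ ψ ih₁ ih₂ => exact (and_congr ih₁ ih₂).trans Filter.eventually_and.symm
  | or φ ψ ih₁ ih₂ => exact (or_congr ih₁ ih₂).trans Ultrafilter.eventually_or.symm
  | imp φ ψ ih₁ ih₂ => exact (imp_congr ih₁ ih₂).trans Ultrafilter.eventually_imp.symm
  | eq | le | all | ex => exact Iff.rfl

theorem exists_evalProp_of_not_provable {thm : AFml → Prop}
    (taut : ∀ φ, ATaut φ → thm φ) (mp : ∀ φ ψ, thm (.imp φ ψ) → thm φ → thm ψ)
    {ψ : AFml} (hψ : ¬ thm ψ) :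
    ∃ v, (∀ φ, thm φ → φ.evalProp v) ∧ ¬ ψ.evalProp v := by
  obtain ⟨U, hthm, hU⟩ := exists_ultrafilter_eventually_of_not_provable
    (eval := fun v φ => AFml.evalProp v φ) (conj := .and) (fun _ _ _ => Iff.rfl)
    ⟨.imp ψ ψ, taut _ fun _ h => h⟩
    (fun a b c ha hb h => mp _ _ (mp _ _ (taut (.imp a (.imp b c)) h) ha) hb) hψ
  refine ⟨fun φ => ∀ᶠ v : AFml → Prop in U, v φ,
    fun φ hφ => (φ.evalProp_eventually U).2 (hthm φ hφ), ?_⟩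
  rw [AFml.evalProp_eventually]
  exact Ultrafilter.eventually_not.1 hU

/-- `v` is a propositional model of the theory `Γ`: a valuation of the propositionally atomic
formulas under which all theorems of `Γ` are true. By compactness, derivability from `Γ` is truth
in all propositional models. -/
def IsPropModel (Γ : Set AFml) (v : AFml → Prop) : Prop := ∀ ⦃φ⦄, Proves Γ φ → φ.evalProp v

theorem Proves.of_forall_propModel {Γ : Set AFml} {φ : AFml}
    (h : ∀ v, IsPropModel Γ v → φ.evalProp v) : Proves Γ φ := by
  by_contra hφ
  obtain ⟨v, hv, hvφ⟩ :=
    exists_evalProp_of_not_provable (fun _ => .taut) (fun _ _ => Proves.mp) hφ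
  exact hvφ (h v fun φ => hv φ)

/-! ### First-order derivations -/

theorem Proves.of_axioms {Γ Δ : Set AFml} (h : ∀ φ ∈ Γ, Proves Δ φ) {φ : AFml}
    (hφ : Proves Γ φ) : Proves Δ φ := by
  induction hφ with
  | ax hφ => exact h _ hφ
  | taut hφ => exact .taut hφ
  | mp _ _ ih₁ ih₂ => exact .mp ih₁ ih₂
  | allE φ t => exact .allE φ t
  | exI φ t => exact .exI φ t
  | allImp φ ψ => exact .allImp φ ψ
  | vacAll φ => exact .vacAll φ
  | exDef φ => exact .exDef φ
  | gen _ ih => exact .gen ih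
  | eqRefl t => exact .eqRefl t
  | eqSubst φ t s => exact .eqSubst φ t s

theorem Proves.mono {Γ Δ : Set AFml} (h : Γ ⊆ Δ) {φ : AFml} (hφ : Proves Γ φ) : Proves Δ φ :=
  hφ.of_axioms fun _ hψ => .ax (h hψ)

section Hilbert

variable {Γ : Set AFml}

theorem Proves.subst0 {φ : AFml} (h : Proves Γ φ) (t : ATerm) : Proves Γ (φ.subst0 t) :=
  .mp (.allE φ t) (.gen h)

theorem Proves.ex_imp {φ ψ : AFml} (h : Proves Γ (.imp φ (ψ.lift 0))) :
    Proves Γ (.imp (.ex φ) ψ) := by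
  have contrapositive : Proves Γ (.imp (.neg (ψ.lift 0)) (.neg φ)) :=
    .of_forall_propModel fun v hv hψ hφ => hψ (hv h hφ)
  have all_contrapositive := Proves.mp (.allImp _ _) (.gen contrapositive)
  refine .of_forall_propModel fun v hv hex => by_contra fun hψ => ?_
  exact (hv (.exDef φ)).1 hex (hv all_contrapositive (hv (.vacAll (.neg ψ)) hψ))

theorem Proves.neg_ex {φ : AFml} (h : Proves Γ (.neg φ)) : Proves Γ (.neg (.ex φ)) :=
  .of_forall_propModel fun _ hv hex => (hv (.exDef φ)).1 hex (hv (.gen h))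

theorem IsPropModel.eq_refl {v : AFml → Prop} (hv : IsPropModel Γ v) (t : ATerm) :
    v (.eq t t) :=
  hv (.eqRefl t)

theorem IsPropModel.rewrite {v : AFml → Prop} (hv : IsPropModel Γ v) (φ : AFml) {t s : ATerm}
    (h : v (.eq t s)) (hφ : (φ.subst0 t).evalProp v) : (φ.subst0 s).evalProp v :=
  hv (.eqSubst φ t s) h hφ

theorem IsPropModel.eq_symm {v : AFml → Prop} (hv : IsPropModel Γ v) {t s : ATerm}
    (h : v (.eq t s)) : v (.eq s t) := by
  have := hv.rewrite (.eq (.var 0) (t.lift 0)) h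
  simp only [AFml.subst0, AFml.substAll, ATerm.lift_zero_subst0Env] at this
  exact this (hv.eq_refl t)

theorem IsPropModel.eq_trans {v : AFml → Prop} (hv : IsPropModel Γ v) {t s r : ATerm}
    (h₁ : v (.eq t s)) (h₂ : v (.eq s r)) : v (.eq t r) := by
  have := hv.rewrite (.eq (t.lift 0) (.var 0)) h₂
  simp only [AFml.subst0, AFml.substAll, ATerm.lift_zero_subst0Env] at this
  exact this h₁

theorem IsPropModel.eq_congr {v : AFml → Prop} (hv : IsPropModel Γ v) (u : ATerm) {t s : ATerm}
    (h : v (.eq t s)) : v (.eq (u.substAll (subst0Env t)) (u.substAll (subst0Env s))) := by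
  have := hv.rewrite (.eq ((u.substAll (subst0Env t)).lift 0) u) h
  simp only [AFml.subst0, AFml.substAll, ATerm.lift_zero_subst0Env] at this
  exact this (hv.eq_refl _)

theorem IsPropModel.succ_congr {v : AFml → Prop} (hv : IsPropModel Γ v) {t s : ATerm}
    (h : v (.eq t s)) : v (.eq (.succ t) (.succ s)) :=
  hv.eq_congr (.succ (.var 0)) h

theorem IsPropModel.add_congr {v : AFml → Prop} (hv : IsPropModel Γ v) {t t' s s' : ATerm}
    (ht : v (.eq t t')) (hs : v (.eq s s')) : v (.eq (.add t s) (.add t' s')) := by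
  have h₁ := hv.eq_congr (.add (.var 0) (s.lift 0)) ht
  have h₂ := hv.eq_congr (.add (t'.lift 0) (.var 0)) hs
  simp only [ATerm.substAll, ATerm.lift_zero_subst0Env] at h₁ h₂
  exact hv.eq_trans h₁ h₂

theorem IsPropModel.mul_congr {v : AFml → Prop} (hv : IsPropModel Γ v) {t t' s s' : ATerm}
    (ht : v (.eq t t')) (hs : v (.eq s s')) : v (.eq (.mul t s) (.mul t' s')) := by
  have h₁ := hv.eq_congr (.mul (.var 0) (s.lift 0)) ht
  have h₂ := hv.eq_congr (.mul (t'.lift 0) (.var 0)) hs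
  simp only [ATerm.substAll, ATerm.lift_zero_subst0Env] at h₁ h₂
  exact hv.eq_trans h₁ h₂

theorem IsPropModel.le_congr {v : AFml → Prop} (hv : IsPropModel Γ v) {t t' s s' : ATerm}
    (ht : v (.eq t t')) (hs : v (.eq s s')) (h : v (.le t s)) : v (.le t' s') := by
  have h₁ := hv.rewrite (.le (.var 0) (s.lift 0)) ht
  have h₂ := hv.rewrite (.le (t'.lift 0) (.var 0)) hs
  simp only [AFml.subst0, AFml.substAll, ATerm.lift_zero_subst0Env] at h₁ h₂
  exact h₂ (h₁ h)

end Hilbert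

/-! ### Arithmetic in PA -/

section PeanoArithmetic

variable {v : AFml → Prop}

theorem Proves.subst0_of_paAx {φ : AFml} (h : PAax (.all φ)) (t : ATerm) : Proves PA (φ.subst0 t) :=
  .mp (.allE φ t) (.ax h)

theorem Proves.subst0_of_paAx₂ {φ : AFml} (h : PAax (.all (.all φ))) (t s : ATerm) :
    Proves PA ((φ.substAll (liftSub (subst0Env t))).subst0 s) :=
  .mp (.allE _ s) (.subst0_of_paAx h t)

theorem IsPropModel.add_zero (hv : IsPropModel PA v) (t : ATerm) : v (.eq (.add t .zero) t) :=
  hv (.subst0_of_paAx .addZero t)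

theorem IsPropModel.mul_zero (hv : IsPropModel PA v) (t : ATerm) :
    v (.eq (.mul t .zero) .zero) :=
  hv (.subst0_of_paAx .mulZero t)

theorem IsPropModel.succ_ne_zero (hv : IsPropModel PA v) (t : ATerm) :
    ¬ v (.eq (.succ t) .zero) :=
  hv (.subst0_of_paAx .succNeZero t)

theorem IsPropModel.add_succ (hv : IsPropModel PA v) (t s : ATerm) :
    v (.eq (.add t (.succ s)) (.succ (.add t s))) := by
  simpa only [AFml.subst0, AFml.substAll, ATerm.substAll, liftSub, subst0Env,
    ATerm.lift_zero_subst0Env, AFml.evalProp] using hv (.subst0_of_paAx₂ .addSucc t s)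

theorem IsPropModel.mul_succ (hv : IsPropModel PA v) (t s : ATerm) :
    v (.eq (.mul t (.succ s)) (.add (.mul t s) t)) := by
  simpa only [AFml.subst0, AFml.substAll, ATerm.substAll, liftSub, subst0Env,
    ATerm.lift_zero_subst0Env, AFml.evalProp] using hv (.subst0_of_paAx₂ .mulSucc t s)

theorem IsPropModel.succ_inj (hv : IsPropModel PA v) {t s : ATerm}
    (h : v (.eq (.succ t) (.succ s))) : v (.eq t s) := by
  have := hv (.subst0_of_paAx₂ .succInj t s)
  simp only [AFml.subst0, AFml.substAll, ATerm.substAll, liftSub, subst0Env,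
    ATerm.lift_zero_subst0Env] at this
  exact this h

theorem Proves.le_iff (a b : ATerm) :
    Proves PA (iffF (.le a b) (.ex (.eq (.add (.var 0) (a.lift 0)) (b.lift 0)))) := by
  simpa only [iffF, AFml.subst0, AFml.substAll, ATerm.substAll, liftSub, subst0Env, ATerm.lift,
    ATerm.lift_substAll_liftSub, ATerm.lift_zero_subst0Env, Nat.not_lt_zero, if_false] using
      Proves.subst0_of_paAx₂ .leDef a b

theorem IsPropModel.le_of_add_eq (hv : IsPropModel PA v) {z a b : ATerm}
    (h : v (.eq (.add z a) b)) : v (.le a b) := by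
  have := hv (.exI (.eq (.add (.var 0) (a.lift 0)) (b.lift 0)) z)
  simp only [AFml.subst0, AFml.substAll, ATerm.substAll, subst0Env,
    ATerm.lift_zero_subst0Env] at this
  exact (hv (.le_iff a b)).2 (this h)

theorem Proves.le_imp {a b : ATerm} {ψ : AFml}
    (h : Proves PA (.imp (.eq (.add (.var 0) (a.lift 0)) (b.lift 0)) (ψ.lift 0))) :
    Proves PA (.imp (.le a b) ψ) :=
  .of_forall_propModel fun _ hv hle => hv (.ex_imp h) ((hv (.le_iff a b)).1 hle)

theorem Proves.zero_or_succ :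
    Proves PA (.or (.eq (.var 0) .zero) (.ex (.eq (.var 1) (.succ (.var 0))))) := by
  let φ : AFml := .or (.eq (.var 0) .zero) (.ex (.eq (.var 1) (.succ (.var 0))))
  have base : Proves PA (φ.subst0 .zero) :=
    .of_forall_propModel fun v hv => Or.inl (hv.eq_refl .zero)
  have step : Proves PA (.imp φ (succSubst φ)) := .of_forall_propModel fun v hv _ =>
    Or.inr (hv (.exI (.eq (.succ (.var 1)) (.succ (.var 0))) (.var 0)) (hv.eq_refl _))
  have all : Proves PA (.all φ) := .of_forall_propModel fun v hv =>
    hv (.ax (PAax.ind φ)) ⟨hv base, hv (.gen step)⟩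
  exact .mp (.allE φ (.var 0)) all

theorem Proves.of_zero_of_succ {t : ATerm} {ψ : AFml} (zero : Proves PA (.imp (.eq t .zero) ψ))
    (succ : Proves PA (.imp (.eq (t.lift 0) (.succ (.var 0))) (ψ.lift 0))) : Proves PA ψ :=
  .of_forall_propModel fun _ hv => Or.elim (hv (Proves.zero_or_succ.subst0 t))
    (fun h => hv zero h) fun h => hv (.ex_imp succ) h

theorem Proves.not_succ_le_zero (t : ATerm) : Proves PA (.neg (.le (.succ t) .zero)) := by
  have : Proves PA (.imp (.le (.succ t) .zero) (.neg (.eq .zero .zero))) := by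
    refine .le_imp (.of_forall_propModel fun v hv h _ => ?_)
    exact hv.succ_ne_zero _ (hv.eq_trans (hv.eq_symm (hv.add_succ (.var 0) (t.lift 0))) h)
  exact .of_forall_propModel fun v hv h => hv this h (hv.eq_refl _)

theorem Proves.le_of_succ_le_succ (t s : ATerm) :
    Proves PA (.imp (.le (.succ t) (.succ s)) (.le t s)) :=
  .le_imp <| .of_forall_propModel fun _ hv h =>
    hv.le_of_add_eq (hv.succ_inj (hv.eq_trans (hv.eq_symm (hv.add_succ _ _)) h))

/-- The disjunction `p 0 ∨ ⋯ ∨ p n`. -/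
def disjUpTo (p : ℕ → AFml) : ℕ → AFml
  | 0 => p 0
  | n + 1 => .or (disjUpTo p n) (p (n + 1))

theorem disjUpTo_lift (p : ℕ → AFml) (n : ℕ) :
    (disjUpTo p n).lift 0 = disjUpTo (fun i => (p i).lift 0) n := by
  induction n with
  | zero => rfl
  | succ n ih => simp only [disjUpTo, AFml.lift, ih]

theorem evalProp_disjUpTo {p : ℕ → AFml} {n : ℕ} :
    (disjUpTo p n).evalProp v ↔ ∃ i ≤ n, (p i).evalProp v := by
  induction n with
  | zero => simp [disjUpTo]
  | succ n ih => simp [disjUpTo, AFml.evalProp, ih, Nat.le_succ_iff, or_and_right, exists_or]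

theorem Proves.le_numeral_imp (n : ℕ) (t : ATerm) :
    Proves PA (.imp (.le t (numeral n)) (disjUpTo (fun i => .eq t (numeral i)) n)) := by
  induction n generalizing t with
  | zero =>
    refine .of_zero_of_succ (t := t) (.of_forall_propModel fun v _ h _ => h) ?_
    refine .of_forall_propModel fun v hv h hle => absurd ?_ (hv (.not_succ_le_zero (.var 0)))
    exact hv.le_congr h (hv.eq_refl _) hle
  | succ n ih =>
    refine .of_zero_of_succ (t := t)
      (.of_forall_propModel fun v _ h _ => evalProp_disjUpTo.2 ⟨0, Nat.zero_le _, h⟩) ?_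
    simp only [AFml.lift, disjUpTo_lift, lift_numeral]
    refine .of_forall_propModel fun v hv h hle => ?_
    have hle' := hv (.le_of_succ_le_succ _ _) (hv.le_congr h (hv.eq_refl _) hle)
    obtain ⟨i, hi, h'⟩ := evalProp_disjUpTo.1 (hv (ih (.var 0)) hle')
    exact evalProp_disjUpTo.2
      ⟨i + 1, Nat.succ_le_succ hi, hv.eq_trans h (hv.succ_congr h')⟩

theorem IsPropModel.exists_eq_of_le_numeral (hv : IsPropModel PA v) {n : ℕ} {t : ATerm}
    (h : v (.le t (numeral n))) : ∃ i ≤ n, v (.eq t (numeral i)) :=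
  evalProp_disjUpTo.1 (hv (.le_numeral_imp n t) h)

theorem IsPropModel.numeral_add (hv : IsPropModel PA v) (a b : ℕ) :
    v (.eq (.add (numeral a) (numeral b)) (numeral (a + b))) := by
  induction b with
  | zero => exact hv.add_zero _
  | succ b ih => exact hv.eq_trans (hv.add_succ _ _) (hv.succ_congr ih)

theorem IsPropModel.numeral_mul (hv : IsPropModel PA v) (a b : ℕ) :
    v (.eq (.mul (numeral a) (numeral b)) (numeral (a * b))) := by
  induction b with
  | zero => exact hv.mul_zero _
  | succ b ih =>
    exact hv.eq_trans (hv.mul_succ _ _)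
      (hv.eq_trans (hv.add_congr ih (hv.eq_refl _)) (hv.numeral_add _ _))

theorem IsPropModel.numeral_eq (hv : IsPropModel PA v) {a b : ℕ} :
    v (.eq (numeral a) (numeral b)) ↔ a = b := by
  refine ⟨fun h => ?_, fun h => h ▸ hv.eq_refl _⟩
  induction a generalizing b with
  | zero =>
    cases b with
    | zero => rfl
    | succ b => exact absurd (hv.eq_symm h) (hv.succ_ne_zero _)
  | succ a ih =>
    cases b with
    | zero => exact absurd h (hv.succ_ne_zero _)
    | succ b => exact congrArg _ (ih (hv.succ_inj h))

theorem IsPropModel.numeral_le (hv : IsPropModel PA v) {a b : ℕ} :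
    v (.le (numeral a) (numeral b)) ↔ a ≤ b := by
  refine ⟨fun h => ?_, fun h => ?_⟩
  · obtain ⟨i, hi, h⟩ := hv.exists_eq_of_le_numeral h
    exact (hv.numeral_eq.1 h).trans_le hi
  · obtain ⟨c, rfl⟩ := Nat.exists_eq_add_of_le' h
    exact hv.le_of_add_eq (hv.numeral_add c a)

theorem IsPropModel.succ_add_numeral (hv : IsPropModel PA v) (t : ATerm) (n : ℕ) :
    v (.eq (.add (.succ t) (numeral n)) (.add t (.succ (numeral n)))) := by
  induction n with
  | zero =>
    exact hv.eq_trans (hv.add_zero _)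
      (hv.eq_symm (hv.eq_trans (hv.add_succ t .zero) (hv.succ_congr (hv.add_zero t))))
  | succ n ih =>
    exact hv.eq_trans (hv.add_succ _ _)
      (hv.eq_trans (hv.succ_congr ih) (hv.eq_symm (hv.add_succ t _)))

theorem Proves.le_numeral_or_succ_le (n : ℕ) (t : ATerm) :
    Proves PA (.imp (.le (numeral n) t)
      (.or (.le t (numeral n)) (.le (numeral (n + 1)) t))) := by
  refine .le_imp (.of_zero_of_succ (t := .var 0) ?_ ?_)
  all_goals simp only [AFml.lift, ATerm.lift, lift_numeral, Nat.not_lt_zero, if_false]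
  · refine .of_forall_propModel fun v hv h0 h => Or.inl ?_
    have : v (.eq (.add (.var 0) (numeral n)) (numeral n)) := by
      simpa using hv.eq_trans (hv.add_congr h0 (hv.eq_refl _)) (hv.numeral_add 0 n)
    exact hv.le_congr (hv.eq_trans (hv.eq_symm this) h) (hv.eq_refl _) (hv.numeral_le.2 le_rfl)
  · refine .of_forall_propModel fun v hv hs h => Or.inr (hv.le_of_add_eq (z := .var 0) ?_)
    have := hv.eq_trans (hv.add_congr hs (hv.eq_refl _)) (hv.succ_add_numeral (.var 0) n)
    exact hv.eq_trans (hv.eq_symm this) h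

theorem IsPropModel.le_numeral_total (hv : IsPropModel PA v) (n : ℕ) (t : ATerm) :
    v (.le t (numeral n)) ∨ v (.le (numeral n) t) := by
  have le_of_le_numeral {k : ℕ} (hk : k ≤ n) (h : v (.le t (numeral k))) :
      v (.le t (numeral n)) := by
    obtain ⟨i, hi, h⟩ := hv.exists_eq_of_le_numeral h
    exact hv.le_congr (hv.eq_symm h) (hv.eq_refl _) (hv.numeral_le.2 (hi.trans hk))
  suffices ∀ k ≤ n, v (.le t (numeral n)) ∨ v (.le (numeral k) t) from this n le_rfl
  intro k hk
  induction k with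
  | zero => exact .inr (hv.le_of_add_eq (hv.add_zero t))
  | succ k ih =>
    refine (ih (Nat.le_of_succ_le hk)).elim .inl fun h => ?_
    exact (hv (.le_numeral_or_succ_le k t) h).imp_left (le_of_le_numeral (Nat.le_of_succ_le hk))

/-! ### Completeness of PA for Δ₀ formulas -/

theorem IsPropModel.inst_eq_val (hv : IsPropModel PA v) (t : ATerm) (ρ : ℕ → ℕ) :
    v (.eq (t.inst ρ) (numeral (t.val ρ))) := by
  induction t with
  | var n => exact hv.eq_refl _
  | zero => exact hv.eq_refl _
  | succ t ih => exact hv.succ_congr ih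
  | add t s ih₁ ih₂ => exact hv.eq_trans (hv.add_congr ih₁ ih₂) (hv.numeral_add _ _)
  | mul t s ih₁ ih₂ => exact hv.eq_trans (hv.mul_congr ih₁ ih₂) (hv.numeral_mul _ _)

theorem IsPropModel.evalProp_instSucc (hv : IsPropModel PA v) (φ : AFml) (ρ : ℕ → ℕ) {i : ℕ}
    (h : v (.eq (.var 0) (numeral i))) :
    (φ.instSucc ρ).evalProp v ↔ (φ.inst (consEnv i ρ)).evalProp v := by
  have h₁ := hv.rewrite (φ.instSucc ρ) h
  have h₂ := hv.rewrite (φ.instSucc ρ) (hv.eq_symm h)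
  rw [AFml.instSucc_subst0_numeral, AFml.instSucc_subst0_var] at h₁ h₂
  exact ⟨h₁, h₂⟩

theorem AFml.inst_all_le_imp (t : ATerm) (φ : AFml) (ρ : ℕ → ℕ) :
    (AFml.all (.imp (.le (.var 0) (t.lift 0)) φ)).inst ρ =
      .all (.imp (.le (.var 0) (t.inst ρ)) (φ.instSucc ρ)) := by
  simp only [AFml.inst, AFml.substAll, ATerm.lift_substAll_liftSub_numeral, AFml.instSucc,
    ATerm.substAll, liftSub]

theorem AFml.inst_ex_le_and (t : ATerm) (φ : AFml) (ρ : ℕ → ℕ) :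
    (AFml.ex (.and (.le (.var 0) (t.lift 0)) φ)).inst ρ =
      .ex (.and (.le (.var 0) (t.inst ρ)) (φ.instSucc ρ)) := by
  simp only [AFml.inst, AFml.substAll, ATerm.lift_substAll_liftSub_numeral, AFml.instSucc,
    ATerm.substAll, liftSub]

theorem Proves.all_le_imp {φ : AFml} {ρ : ℕ → ℕ} {t : ATerm}
    (h : ∀ a ≤ t.val ρ, Proves PA (φ.inst (consEnv a ρ))) :
    Proves PA ((AFml.all (.imp (.le (.var 0) (t.lift 0)) φ)).inst ρ) := by
  rw [AFml.inst_all_le_imp]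
  refine .gen (.of_forall_propModel fun v hv hle => ?_)
  obtain ⟨a, ha, hva⟩ := hv.exists_eq_of_le_numeral
    (hv.le_congr (hv.eq_refl _) (hv.inst_eq_val t ρ) hle)
  exact (hv.evalProp_instSucc φ ρ hva).2 (hv (h a ha))

theorem IsPropModel.evalProp_of_all_le_imp (hv : IsPropModel PA v) {φ : AFml} {ρ : ℕ → ℕ}
    {t : ATerm} {a : ℕ} (ha : a ≤ t.val ρ)
    (h : ((AFml.all (.imp (.le (.var 0) (t.lift 0)) φ)).inst ρ).evalProp v) :
    (φ.inst (consEnv a ρ)).evalProp v := by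
  rw [AFml.inst_all_le_imp] at h
  have := hv (.allE _ (numeral a)) h
  rw [AFml.subst0, AFml.substAll, AFml.substAll, ATerm.inst_substAll, ← AFml.subst0,
    AFml.instSucc_subst0_numeral] at this
  exact this (hv.le_congr (hv.eq_refl _) (hv.eq_symm (hv.inst_eq_val t ρ)) (hv.numeral_le.2 ha))

theorem Proves.ex_le_and_imp (φ : AFml) (ρ : ℕ → ℕ) (t : ATerm) :
    Proves PA (.imp ((AFml.ex (.and (.le (.var 0) (t.lift 0)) φ)).inst ρ)
      (disjUpTo (fun a => φ.inst (consEnv a ρ)) (t.val ρ))) := by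
  rw [AFml.inst_ex_le_and]
  refine .ex_imp (.of_forall_propModel fun v hv hand => ?_)
  obtain ⟨a, ha, hva⟩ := hv.exists_eq_of_le_numeral
    (hv.le_congr (hv.eq_refl _) (hv.inst_eq_val t ρ) hand.1)
  simp only [disjUpTo_lift, AFml.lift_inst]
  exact evalProp_disjUpTo.2 ⟨a, ha, (hv.evalProp_instSucc φ ρ hva).1 hand.2⟩

theorem IsPropModel.evalProp_ex_le_and (hv : IsPropModel PA v) {φ : AFml} {ρ : ℕ → ℕ}
    {t : ATerm} : ((AFml.ex (.and (.le (.var 0) (t.lift 0)) φ)).inst ρ).evalProp v ↔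
      ∃ a ≤ t.val ρ, (φ.inst (consEnv a ρ)).evalProp v := by
  refine ⟨fun h => evalProp_disjUpTo.1 (hv (.ex_le_and_imp φ ρ t) h), fun ⟨a, ha, h⟩ => ?_⟩
  rw [AFml.inst_ex_le_and]
  refine hv (.exI _ (numeral a)) ?_
  rw [AFml.subst0, AFml.substAll, AFml.substAll, ATerm.inst_substAll, ← AFml.subst0,
    AFml.instSucc_subst0_numeral]
  exact ⟨hv.le_congr (hv.eq_refl _) (hv.eq_symm (hv.inst_eq_val t ρ)) (hv.numeral_le.2 ha), h⟩

theorem AFml.sat_le_var_zero_lift (t : ATerm) (ρ : ℕ → ℕ) (a : ℕ) :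
    (AFml.le (.var 0) (t.lift 0)).Sat (consEnv a ρ) ↔ a ≤ t.val ρ := by
  rw [AFml.Sat, ATerm.val_lift_zero]
  rfl

theorem IsDelta0.evalProp_inst_iff_sat {φ : AFml} (hφ : IsDelta0 φ) (hv : IsPropModel PA v)
    (ρ : ℕ → ℕ) : (φ.inst ρ).evalProp v ↔ φ.Sat ρ := by
  induction hφ generalizing v ρ with
  | eq t s =>
    refine Iff.trans ⟨fun h => ?_, fun h => ?_⟩ hv.numeral_eq
    · exact hv.eq_trans (hv.eq_symm (hv.inst_eq_val t ρ)) (hv.eq_trans h (hv.inst_eq_val s ρ))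
    · exact hv.eq_trans (hv.inst_eq_val t ρ) (hv.eq_trans h (hv.eq_symm (hv.inst_eq_val s ρ)))
  | le t s =>
    refine Iff.trans ⟨fun h => ?_, fun h => ?_⟩ hv.numeral_le
    · exact hv.le_congr (hv.inst_eq_val t ρ) (hv.inst_eq_val s ρ) h
    · exact hv.le_congr (hv.eq_symm (hv.inst_eq_val t ρ)) (hv.eq_symm (hv.inst_eq_val s ρ)) h
  | neg _ ih => exact not_congr (ih hv ρ)
  | and _ _ ih₁ ih₂ => exact and_congr (ih₁ hv ρ) (ih₂ hv ρ)
  | or _ _ ih₁ ih₂ => exact or_congr (ih₁ hv ρ) (ih₂ hv ρ)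
  | imp _ _ ih₁ ih₂ => exact imp_congr (ih₁ hv ρ) (ih₂ hv ρ)
  | ball t _ ih =>
    refine ⟨fun h a ha => ?_, fun h => hv (.all_le_imp fun a ha => ?_)⟩
    · exact (ih hv _).1 (hv.evalProp_of_all_le_imp ((AFml.sat_le_var_zero_lift t ρ a).1 ha) h)
    · exact .of_forall_propModel fun v' hv' =>
        (ih hv' _).2 (h a ((AFml.sat_le_var_zero_lift t ρ a).2 ha))
  | bex t _ ih =>
    exact hv.evalProp_ex_le_and.trans (exists_congr fun a =>
      and_congr (AFml.sat_le_var_zero_lift t ρ a).symm (ih hv _))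

end PeanoArithmetic

/-! ### Rosser comparison of witnesses -/

/-- The formula `B(s) ∧ ∀ t ≤ s (t = s ∨ ¬ C(t))` under the existential quantifier of
`rosser B C`. -/
def rosserMatrix (B C : AFml) : AFml :=
  .and B (.all (.imp (.le (.var 0) (ATerm.lift 0 (.var 0)))
    (.or (.eq (.var 0) (.var 1)) (.neg (C.lift 1)))))

/-- The Rosser formula `∃ s (B(s) ∧ ∀ t ≤ s (t = s ∨ ¬ C(t)))`: some witness of `B` is preceded
by no witness of `C`. -/
def rosser (B C : AFml) : AFml := .ex (rosserMatrix B C)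

theorem IsDelta0.rosserMatrix {B C : AFml} (hB : IsDelta0 B) (hC : IsDelta0 C) :
    IsDelta0 (rosserMatrix B C) := by
  refine .and hB (.ball _ (.or (.eq _ _) (.neg ?_)))
  rw [AFml.lift_eq_substAll]
  exact hC.substAll _

theorem AFml.FreeLt.rosser {B C : AFml} {c : ℕ} (hB : B.FreeLt (c + 1)) (hC : C.FreeLt (c + 1)) :
    (rosser B C).FreeLt c := by
  refine ⟨hB, ⟨Nat.succ_pos _, Nat.lt_add_of_pos_left (Nat.succ_pos c)⟩,
    ⟨Nat.succ_pos _, Nat.lt_add_of_pos_left (Nat.succ_pos c)⟩, ?_⟩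
  rw [AFml.lift_eq_substAll]
  exact hC.substAll fun n hn => by
    change ite _ _ _ < c + 2
    split <;> omega

theorem AFml.sat_lift_one (C : AFml) (s t : ℕ) (ρ : ℕ → ℕ) :
    (C.lift 1).Sat (consEnv t (consEnv s ρ)) ↔ C.Sat (consEnv t ρ) := by
  rw [AFml.lift_eq_substAll, AFml.sat_substAll]
  have : (fun n => (shiftSub 1 n).val (consEnv t (consEnv s ρ))) = consEnv t ρ := by
    funext n
    cases n with
    | zero => rfl
    | succ n => simp [shiftSub, ATerm.val, consEnv]
  rw [this]

theorem sat_rosserMatrix {B C : AFml} {s : ℕ} {ρ : ℕ → ℕ} :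
    (rosserMatrix B C).Sat (consEnv s ρ) ↔
      B.Sat (consEnv s ρ) ∧ ∀ t < s, ¬ C.Sat (consEnv t ρ) := by
  refine and_congr_right fun _ => forall_congr' fun t => ?_
  change (t ≤ s → t = s ∨ ¬ (C.lift 1).Sat _) ↔ _
  rw [AFml.sat_lift_one]
  grind

theorem provable_rosser {B C : AFml} (hB : IsDelta0 B) (hC : IsDelta0 C) {ρ : ℕ → ℕ} {s : ℕ}
    (hs : B.Sat (consEnv s ρ)) (before : ∀ t < s, ¬ C.Sat (consEnv t ρ)) :
    Proves PA ((rosser B C).inst ρ) := by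
  refine .of_forall_propModel fun v hv => hv (.exI _ (numeral s)) ?_
  have := ((hB.rosserMatrix hC).evalProp_inst_iff_sat hv _).2 (sat_rosserMatrix.2 ⟨hs, before⟩)
  rwa [← AFml.instSucc_subst0_numeral] at this

theorem instSucc_rosserMatrix (B C : AFml) (ρ : ℕ → ℕ) :
    (rosserMatrix B C).instSucc ρ = .and (B.instSucc ρ) (.all (.imp (.le (.var 0) (.var 1))
      (.or (.eq (.var 0) (.var 1)) (.neg (C.instSucc ρ))))) := by
  have : (C.lift 1).substAll (liftSub (liftSub fun n => numeral (ρ n))) = C.instSucc ρ := by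
    rw [AFml.lift_eq_substAll, AFml.substAll_substAll, AFml.instSucc]
    congr 1
    funext n
    cases n with
    | zero => rfl
    | succ n => simp [shiftSub, ATerm.substAll, liftSub]
  simp only [rosserMatrix, AFml.instSucc, AFml.substAll, this, ATerm.lift, ATerm.substAll,
    liftSub, Nat.not_lt_zero, if_false]

theorem refutable_rosser {B C : AFml} (hB : IsDelta0 B) (hC : IsDelta0 C) {ρ : ℕ → ℕ} {t : ℕ}
    (ht : C.Sat (consEnv t ρ)) (before : ∀ s ≤ t, ¬ B.Sat (consEnv s ρ)) :
    Proves PA (.neg ((rosser B C).inst ρ)) := by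
  refine .neg_ex (.of_forall_propModel fun v hv hM => ?_)
  change ((rosserMatrix B C).instSucc ρ).evalProp v at hM
  have not_eq {s : ℕ} (hs : s ≤ t) (h : v (.eq (.var 0) (numeral s))) : False := by
    refine before s hs (sat_rosserMatrix (C := C).1 ?_).1
    exact ((hB.rosserMatrix hC).evalProp_inst_iff_sat hv _).1 ((hv.evalProp_instSucc _ ρ h).1 hM)
  refine (hv.le_numeral_total t (.var 0)).elim (fun hle => ?_) fun hle => ?_
  · obtain ⟨s, hs, h⟩ := hv.exists_eq_of_le_numeral hle
    exact not_eq hs h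
  · rw [instSucc_rosserMatrix] at hM
    have at_t := hv (.allE _ (numeral t)) hM.2 hle
    refine Or.elim at_t (fun h => not_eq le_rfl (hv.eq_symm h)) fun h => h ?_
    change ((C.instSucc ρ).subst0 (numeral t)).evalProp v
    rw [AFml.instSucc_subst0_numeral]
    exact (hC.evalProp_inst_iff_sat hv _).2 ht

/-! ### Σ₁ relations -/

/-- Relations between natural numbers defined by a Δ₀ formula; the arguments of the relation are
the values of the variables in an environment. -/
def Delta0Rel (R : (ℕ → ℕ) → Prop) : Prop := ∃ θ, IsDelta0 θ ∧ ∀ ρ, θ.Sat ρ ↔ R ρ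

theorem IsDelta0.delta0Rel {θ : AFml} (h : IsDelta0 θ) : Delta0Rel fun ρ => θ.Sat ρ :=
  ⟨θ, h, fun _ => Iff.rfl⟩

namespace Delta0Rel

variable {R S : (ℕ → ℕ) → Prop} {Q : ℕ → (ℕ → ℕ) → Prop}

theorem and (hR : Delta0Rel R) (hS : Delta0Rel S) : Delta0Rel fun ρ => R ρ ∧ S ρ :=
  let ⟨θ, hθ, h⟩ := hR
  let ⟨η, hη, h'⟩ := hS
  ⟨.and θ η, .and hθ hη, fun ρ => and_congr (h ρ) (h' ρ)⟩

theorem or (hR : Delta0Rel R) (hS : Delta0Rel S) : Delta0Rel fun ρ => R ρ ∨ S ρ :=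
  let ⟨θ, hθ, h⟩ := hR
  let ⟨η, hη, h'⟩ := hS
  ⟨.or θ η, .or hθ hη, fun ρ => or_congr (h ρ) (h' ρ)⟩

theorem not (h : Delta0Rel R) : Delta0Rel fun ρ => ¬ R ρ :=
  let ⟨θ, hθ, h⟩ := h
  ⟨.neg θ, .neg hθ, fun ρ => not_congr (h ρ)⟩

theorem ball (k : ℕ) (h : Delta0Rel fun ρ => Q (ρ 0) fun n => ρ (n + 1)) :
    Delta0Rel fun ρ => ∀ x ≤ ρ k, Q x ρ :=
  let ⟨_, hθ, h⟩ := h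
  ⟨_, .ball (.var k) hθ, fun _ => forall_congr' fun x => imp_congr Iff.rfl (h (consEnv x _))⟩

theorem bex (k : ℕ) (h : Delta0Rel fun ρ => Q (ρ 0) fun n => ρ (n + 1)) :
    Delta0Rel fun ρ => ∃ x ≤ ρ k, Q x ρ :=
  let ⟨_, hθ, h⟩ := h
  ⟨_, .bex (.var k) hθ, fun _ => exists_congr fun x => and_congr Iff.rfl (h (consEnv x _))⟩

theorem rename (h : Delta0Rel R) (r : ℕ → ℕ) : Delta0Rel fun ρ => R fun n => ρ (r n) :=
  let ⟨θ, hθ, h⟩ := h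
  ⟨θ.substAll fun n => .var (r n), hθ.substAll _, fun ρ => (AFml.sat_substAll _ ρ θ).trans (h _)⟩

end Delta0Rel

/-- Relations between natural numbers defined by a Σ₁ formula `∃ s θ` with `θ` a Δ₀ formula. -/
def Sigma1Rel (R : (ℕ → ℕ) → Prop) : Prop :=
  ∃ D, Delta0Rel D ∧ ∀ ρ, R ρ ↔ ∃ s, D (consEnv s ρ)

namespace Sigma1Rel

variable {R S : (ℕ → ℕ) → Prop} {Q : ℕ → (ℕ → ℕ) → Prop}

theorem of_delta0Rel (h : Delta0Rel R) : Sigma1Rel R :=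
  ⟨_, h.rename Nat.succ, fun _ => exists_const ℕ |>.symm⟩

theorem of_isDelta0 {θ : AFml} (h : IsDelta0 θ) : Sigma1Rel fun ρ => θ.Sat ρ :=
  of_delta0Rel h.delta0Rel

theorem rename (h : Sigma1Rel R) (r : ℕ → ℕ) : Sigma1Rel fun ρ => R fun n => ρ (r n) := by
  obtain ⟨D, hD, h⟩ := h
  refine ⟨_, hD.rename fun | 0 => 0 | n + 1 => r n + 1, fun ρ => (h _).trans ?_⟩
  refine exists_congr fun s => iff_of_eq (congrArg D (funext fun n => ?_))
  cases n <;> rfl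

theorem and (hR : Sigma1Rel R) (hS : Sigma1Rel S) : Sigma1Rel fun ρ => R ρ ∧ S ρ := by
  obtain ⟨D, hD, hR⟩ := hR
  obtain ⟨E, hE, hS⟩ := hS
  refine ⟨fun ρ => ∃ x ≤ ρ 0, ∃ y ≤ ρ 0, D (consEnv x fun n => ρ (n + 1)) ∧
    E (consEnv y fun n => ρ (n + 1)), ?_, fun ρ => ?_⟩
  · refine .bex 0 (.bex 1 (.and ?_ ?_))
    · convert hD.rename (fun | 0 => 1 | n + 1 => n + 3) using 3 with ρ
      funext n; cases n <;> rfl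
    · convert hE.rename (fun | 0 => 0 | n + 1 => n + 3) using 3 with ρ
      funext n; cases n <;> rfl
  · beta_reduce
    rw [hR, hS]
    constructor
    · rintro ⟨⟨x, hx⟩, ⟨y, hy⟩⟩
      exact ⟨max x y, x, le_max_left _ _, y, le_max_right _ _, hx, hy⟩
    · rintro ⟨s, x, -, y, -, hx, hy⟩
      exact ⟨⟨x, hx⟩, ⟨y, hy⟩⟩

theorem or (hR : Sigma1Rel R) (hS : Sigma1Rel S) : Sigma1Rel fun ρ => R ρ ∨ S ρ :=
  let ⟨_, hD, hR⟩ := hR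
  let ⟨_, hE, hS⟩ := hS
  ⟨_, hD.or hE, fun ρ => (or_congr (hR ρ) (hS ρ)).trans exists_or.symm⟩

theorem ex (h : Sigma1Rel fun ρ => Q (ρ 0) fun n => ρ (n + 1)) :
    Sigma1Rel fun ρ => ∃ x, Q x ρ := by
  obtain ⟨D, hD, h⟩ := h
  refine ⟨fun ρ => ∃ x ≤ ρ 0, ∃ y ≤ ρ 0, D (consEnv y (consEnv x fun n => ρ (n + 1))), ?_,
    fun ρ => ?_⟩
  · refine .bex 0 (.bex 1 ?_)
    convert hD.rename (fun | 0 => 0 | 1 => 1 | n + 2 => n + 3) using 3 with ρ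
    funext n; rcases n with _ | _ | n <;> rfl
  · refine (exists_congr fun x => h (consEnv x ρ)).trans ⟨?_, ?_⟩
    · rintro ⟨x, y, hxy⟩
      exact ⟨max x y, x, le_max_left _ _, y, le_max_right _ _, hxy⟩
    · rintro ⟨s, x, -, y, -, hxy⟩
      exact ⟨x, y, hxy⟩

theorem ball (k : ℕ) (h : Sigma1Rel fun ρ => Q (ρ 0) fun n => ρ (n + 1)) :
    Sigma1Rel fun ρ => ∀ x ≤ ρ k, Q x ρ := by
  obtain ⟨D, hD, h⟩ := h
  refine ⟨fun ρ => ∀ x ≤ ρ (k + 1), ∃ y ≤ ρ 0, D (consEnv y (consEnv x fun n => ρ (n + 1))), ?_,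
    fun ρ => ?_⟩
  · refine .ball (k + 1) (.bex 1 ?_)
    convert hD.rename (fun | 0 => 0 | 1 => 1 | n + 2 => n + 3) using 3 with ρ
    funext n; rcases n with _ | _ | n <;> rfl
  · refine (forall₂_congr fun x _ => h (consEnv x ρ)).trans ⟨fun hy => ?_, ?_⟩
    · choose! y hy using hy
      exact ⟨(Finset.range (ρ k + 1)).sup y, fun x hx =>
        ⟨y x, Finset.le_sup (Finset.mem_range_succ_iff.2 hx), hy x hx⟩⟩
    · rintro ⟨s, hs⟩ x hx
      exact (hs x hx).imp fun _ => And.right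

end Sigma1Rel

/-! ### Σ₁ predicates and Σ₁ functions on encodable types -/

theorem ATerm.code_injective : Function.Injective ATerm.code := by
  intro t
  induction t <;> intro s h <;> cases s <;> simp_all [ATerm.code, Nat.pair_eq_pair] <;> grind

theorem AFml.code_injective : Function.Injective AFml.code := by
  intro φ
  induction φ <;> intro ψ h <;> cases ψ <;>
    simp_all [AFml.code, Nat.pair_eq_pair, ATerm.code_injective.eq_iff] <;> grind

noncomputable instance : Encodable ATerm :=
  haveI : Nonempty ATerm := ⟨.zero⟩
  .ofLeftInverse ATerm.code _ (Function.leftInverse_invFun ATerm.code_injective)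

noncomputable instance : Encodable AFml :=
  haveI : Nonempty AFml := ⟨botFml⟩
  .ofLeftInverse AFml.code _ (Function.leftInverse_invFun AFml.code_injective)

section Encodable

open Encodable

variable {α β γ : Type*} [Encodable α] [Encodable β] [Encodable γ]

/-- A predicate on an encodable type is Σ₁ if some Σ₁ relation agrees with it on all codes; nothing
is required at numbers that are not codes. -/
def SigmaPred (R : α → Prop) : Prop :=
  ∃ S : ℕ → Prop, Sigma1Rel (fun ρ => S (ρ 0)) ∧ ∀ a, R a ↔ S (encode a)

/-- A function between encodable types is Σ₁ if its graph is given by a Σ₁ relation which, at the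
code of an argument, holds only for the code of the value. -/
@[fun_prop]
def SigmaFun (f : α → β) : Prop :=
  ∃ S : ℕ → ℕ → Prop, Sigma1Rel (fun ρ => S (ρ 0) (ρ 1)) ∧
    ∀ a y, S (encode a) y ↔ y = encode (f a)

variable (α) in
/-- The set of codes of elements of the encodable type is Σ₁. -/
class Sigma1Range : Prop where
  sigmaPred_range : SigmaPred fun n : ℕ => n ∈ Set.range (encode : α → ℕ)

theorem Sigma1Rel.rename₁ {S : ℕ → Prop} (h : Sigma1Rel fun ρ => S (ρ 0)) (i : ℕ) :
    Sigma1Rel fun ρ => S (ρ i) :=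
  h.rename fun _ => i

theorem Sigma1Rel.rename₂ {S : ℕ → ℕ → Prop} (h : Sigma1Rel fun ρ => S (ρ 0) (ρ 1)) (i j : ℕ) :
    Sigma1Rel fun ρ => S (ρ i) (ρ j) :=
  h.rename fun | 0 => i | _ => j

theorem delta0Rel_pair : Delta0Rel fun ρ => ρ 0 = Nat.pair (ρ 1) (ρ 2) := by
  have := IsDelta0.delta0Rel (.or
    (.and (.le (.succ (.var 1)) (.var 2)) (.eq (.var 0) (.add (.mul (.var 2) (.var 2)) (.var 1))))
    (.and (.le (.var 2) (.var 1))
      (.eq (.var 0) (.add (.add (.mul (.var 1) (.var 1)) (.var 1)) (.var 2)))))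
  convert this using 2 with ρ
  simp only [Nat.pair, AFml.Sat, ATerm.val]
  grind

theorem Sigma1Rel.pair (i j k : ℕ) : Sigma1Rel fun ρ => ρ i = Nat.pair (ρ j) (ρ k) :=
  .of_delta0Rel (delta0Rel_pair.rename fun | 0 => i | 1 => j | _ => k)

namespace SigmaFun

@[fun_prop]
theorem id : SigmaFun fun a : α => a :=
  ⟨fun x y => y = x, .of_isDelta0 (.eq (.var 1) (.var 0)), fun _ _ => Iff.rfl⟩

@[fun_prop]
theorem const (b : β) : SigmaFun fun _ : α => b := by
  refine ⟨fun _ y => y = encode b, ?_, fun _ _ => Iff.rfl⟩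
  simpa only [AFml.Sat, ATerm.val, val_numeral] using
    Sigma1Rel.of_isDelta0 (.eq (.var 1) (numeral (encode b)))

@[fun_prop]
theorem comp {g : β → γ} {f : α → β} (hg : SigmaFun g) (hf : SigmaFun f) :
    SigmaFun fun a => g (f a) := by
  obtain ⟨S, hS, h⟩ := hg
  obtain ⟨T, hT, h'⟩ := hf
  refine ⟨fun x z => ∃ y, T x y ∧ S y z, .ex (.and (hT.rename₂ 1 0) (hS.rename₂ 0 2)),
    fun a z => ?_⟩
  simp [h', h]

@[fun_prop]
theorem prodMk {f : α → β} {g : α → γ} (hf : SigmaFun f) (hg : SigmaFun g) :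
    SigmaFun fun a => (f a, g a) := by
  obtain ⟨S, hS, h⟩ := hf
  obtain ⟨T, hT, h'⟩ := hg
  refine ⟨fun x z => ∃ y y', S x y ∧ T x y' ∧ z = Nat.pair y y',
    .ex (.ex (.and (hS.rename₂ 2 1) (.and (hT.rename₂ 2 0) (.pair 3 1 0)))), fun a z => ?_⟩
  simp [h', h]

@[fun_prop]
theorem fst : SigmaFun (Prod.fst : α × β → α) :=
  ⟨fun x y => ∃ z, x = Nat.pair y z, .ex (.pair 1 2 0), fun ⟨a, b⟩ y => by
    simp [Nat.pair_eq_pair, eq_comm]⟩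

@[fun_prop]
theorem snd : SigmaFun (Prod.snd : α × β → β) :=
  ⟨fun x z => ∃ y, x = Nat.pair y z, .ex (.pair 1 0 2), fun ⟨a, b⟩ z => by
    simp [Nat.pair_eq_pair, eq_comm]⟩

@[fun_prop]
theorem encode : SigmaFun (encode : α → ℕ) :=
  ⟨fun x y => y = x, .of_isDelta0 (.eq (.var 1) (.var 0)), fun _ _ => Iff.rfl⟩

theorem of_encode {f : α → β} (h : SigmaFun fun a => Encodable.encode (f a)) : SigmaFun f := h

@[fun_prop]
theorem natPair {f g : α → ℕ} (hf : SigmaFun f) (hg : SigmaFun g) :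
    SigmaFun fun a => Nat.pair (f a) (g a) :=
  hf.prodMk hg

end SigmaFun

theorem Sigma1Rel.sigmaFun {S : ℕ → ℕ → ℕ → Prop} {f : ℕ → ℕ → ℕ}
    (hS : Sigma1Rel fun ρ => S (ρ 0) (ρ 1) (ρ 2)) (h : ∀ x y z, S x y z ↔ z = f x y) :
    SigmaFun fun p : ℕ × ℕ => f p.1 p.2 :=
  ⟨fun w z => ∃ x y, w = Nat.pair x y ∧ S x y z,
    .ex (.ex (.and (.pair 2 1 0) (hS.rename fun | 0 => 1 | 1 => 0 | _ => 3))),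
    fun ⟨x, y⟩ z => by
      simp [h, Nat.pair_eq_pair]⟩

namespace SigmaFun

@[fun_prop]
theorem add {f g : α → ℕ} (hf : SigmaFun f) (hg : SigmaFun g) : SigmaFun fun a => f a + g a :=
  (Sigma1Rel.sigmaFun (.of_isDelta0 (.eq (.var 2) (.add (.var 0) (.var 1))))
    fun _ _ _ => Iff.rfl).comp (hf.prodMk hg)

@[fun_prop]
theorem mul {f g : α → ℕ} (hf : SigmaFun f) (hg : SigmaFun g) : SigmaFun fun a => f a * g a :=
  (Sigma1Rel.sigmaFun (.of_isDelta0 (.eq (.var 2) (.mul (.var 0) (.var 1))))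
    fun _ _ _ => Iff.rfl).comp (hf.prodMk hg)

end SigmaFun

namespace SigmaPred

variable {R S : α → Prop}

theorem congr (hS : SigmaPred S) (h : ∀ a, R a ↔ S a) : SigmaPred R :=
  let ⟨S', hS', h'⟩ := hS
  ⟨S', hS', fun a => (h a).trans (h' a)⟩

theorem comp {R : β → Prop} (hR : SigmaPred R) {f : α → β} (hf : SigmaFun f) :
    SigmaPred fun a => R (f a) := by
  obtain ⟨S, hS, h⟩ := hR
  obtain ⟨T, hT, h'⟩ := hf
  refine ⟨fun x => ∃ y, T x y ∧ S y, .ex (.and (hT.rename₂ 1 0) (hS.rename₁ 0)), fun a => ?_⟩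
  simp [h', h]

theorem and (hR : SigmaPred R) (hS : SigmaPred S) : SigmaPred fun a => R a ∧ S a :=
  let ⟨R', hR', h⟩ := hR
  let ⟨S', hS', h'⟩ := hS
  ⟨fun x => R' x ∧ S' x, hR'.and hS', fun a => and_congr (h a) (h' a)⟩

theorem or (hR : SigmaPred R) (hS : SigmaPred S) : SigmaPred fun a => R a ∨ S a :=
  let ⟨R', hR', h⟩ := hR
  let ⟨S', hS', h'⟩ := hS
  ⟨fun x => R' x ∨ S' x, hR'.or hS', fun a => or_congr (h a) (h' a)⟩

theorem eq {f g : α → β} (hf : SigmaFun f) (hg : SigmaFun g) : SigmaPred fun a => f a = g a := by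
  obtain ⟨S, hS, h⟩ := hf
  obtain ⟨T, hT, h'⟩ := hg
  refine ⟨fun x => ∃ y, S x y ∧ T x y, .ex (.and (hS.rename₂ 1 0) (hT.rename₂ 1 0)), fun a => ?_⟩
  simp [h', h]

theorem le {f g : α → ℕ} (hf : SigmaFun f) (hg : SigmaFun g) : SigmaPred fun a => f a ≤ g a := by
  refine SigmaPred.comp (R := fun p : ℕ × ℕ => p.1 ≤ p.2) ⟨fun w => ∃ x y, w = Nat.pair x y ∧ x ≤ y,
    .ex (.ex (.and (.pair 2 1 0) (.of_isDelta0 (.le (.var 1) (.var 0))))), fun ⟨x, y⟩ => ?_⟩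
    (hf.prodMk hg)
  simp [Nat.pair_eq_pair]

theorem lt {f g : α → ℕ} (hf : SigmaFun f) (hg : SigmaFun g) : SigmaPred fun a => f a < g a :=
  le (f := fun a => f a + 1) (by fun_prop) hg

theorem ne {f g : α → ℕ} (hf : SigmaFun f) (hg : SigmaFun g) : SigmaPred fun a => f a ≠ g a :=
  ((lt hf hg).or (lt hg hf)).congr fun _ => ne_iff_lt_or_gt

theorem ex [Sigma1Range β] {R : α → β → Prop} (h : SigmaPred fun p : α × β => R p.1 p.2) :
    SigmaPred fun a => ∃ b, R a b := by
  obtain ⟨S, hS, h⟩ := h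
  obtain ⟨T, hT, h'⟩ := Sigma1Range.sigmaPred_range (α := β)
  refine ⟨fun x => ∃ y p, p = Nat.pair x y ∧ S p ∧ T y,
    .ex (.ex (.and (.pair 0 2 1) (.and (hS.rename₁ 0) (hT.rename₁ 1)))), fun a => ?_⟩
  refine (exists_congr fun b => h (a, b)).trans ⟨?_, ?_⟩
  · rintro ⟨b, hb⟩
    exact ⟨_, _, rfl, hb, (h' _).1 ⟨b, rfl⟩⟩
  · rintro ⟨y, _, rfl, hS, hT⟩
    obtain ⟨b, rfl⟩ := (h' y).2 hT
    exact ⟨b, hS⟩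

theorem ball_le {R : α → ℕ → Prop} (h : SigmaPred fun p : α × ℕ => R p.1 p.2) {f : α → ℕ}
    (hf : SigmaFun f) : SigmaPred fun a => ∀ x ≤ f a, R a x := by
  obtain ⟨S, hS, h⟩ := h
  obtain ⟨T, hT, h'⟩ := hf
  refine ⟨fun x => ∃ y, T x y ∧ ∀ i ≤ y, ∃ p, p = Nat.pair x i ∧ S p,
    .ex (.and (hT.rename₂ 1 0) (.ball 0 (.ex (.and (.pair 0 3 1) (hS.rename₁ 0))))), fun a => ?_⟩
  simp [h', fun i => h (a, i)]

theorem ball_lt {R : α → ℕ → Prop} (h : SigmaPred fun p : α × ℕ => R p.1 p.2) {f : α → ℕ}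
    (hf : SigmaFun f) : SigmaPred fun a => ∀ x < f a, R a x :=
  (ball_le (R := fun a x => f a ≤ x ∨ R a x) (.or (.le (by fun_prop) (by fun_prop)) h) hf).congr
    fun a => by grind

end SigmaPred

instance : Sigma1Range ℕ :=
  ⟨.congr (.eq .id .id) fun n => ⟨fun _ => rfl, fun _ => ⟨n, rfl⟩⟩⟩

instance [Sigma1Range α] [Sigma1Range β] : Sigma1Range (α × β) where
  sigmaPred_range := by
    have hα := Sigma1Range.sigmaPred_range (α := α)
    have hβ := Sigma1Range.sigmaPred_range (α := β)
    have h : SigmaPred fun n : ℕ => ∃ x y : ℕ, n = Nat.pair x y ∧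
        x ∈ Set.range (encode : α → ℕ) ∧ y ∈ Set.range (encode : β → ℕ) :=
      .ex (.ex (.and (.eq (by fun_prop) (by fun_prop))
        (.and (hα.comp (by fun_prop)) (hβ.comp (by fun_prop)))))
    refine h.congr fun n => ⟨?_, ?_⟩
    · rintro ⟨⟨a, b⟩, rfl⟩
      exact ⟨_, _, rfl, ⟨a, rfl⟩, ⟨b, rfl⟩⟩
    · rintro ⟨_, _, rfl, ⟨a, rfl⟩, ⟨b, rfl⟩⟩
      exact ⟨(a, b), rfl⟩

theorem SigmaFun.of_graph [Sigma1Range β] {f : α → β}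
    (h : SigmaPred fun p : α × β => p.2 = f p.1) : SigmaFun f := by
  obtain ⟨S, hS, h⟩ := h
  obtain ⟨T, hT, h'⟩ := Sigma1Range.sigmaPred_range (α := β)
  refine ⟨fun x y => ∃ p, p = Nat.pair x y ∧ S p ∧ T y,
    .ex (.and (.pair 0 1 2) (.and (hS.rename₁ 0) (hT.rename₁ 2))), fun a y => ?_⟩
  constructor
  · rintro ⟨_, rfl, hS, hT⟩
    obtain ⟨b, rfl⟩ := (h' y).2 hT
    exact congrArg _ ((h (a, b)).2 hS)
  · rintro rfl
    exact ⟨_, rfl, (h (a, f a)).1 rfl, (h' _).1 ⟨_, rfl⟩⟩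

end Encodable

namespace SigmaFun

variable {α : Type*} [Encodable α]

@[fun_prop]
theorem natDiv {f g : α → ℕ} (hf : SigmaFun f) (hg : SigmaFun g) : SigmaFun fun a => f a / g a := by
  refine SigmaFun.comp (g := fun p : ℕ × ℕ => p.1 / p.2) (.of_graph ?_) (hf.prodMk hg)
  have h : SigmaPred fun p : (ℕ × ℕ) × ℕ => (p.1.2 = 0 ∧ p.2 = 0) ∨
      (p.2 * p.1.2 ≤ p.1.1 ∧ p.1.1 < (p.2 + 1) * p.1.2) := by
    refine .or (.and (.eq ?_ ?_) (.eq ?_ ?_)) (.and (.le ?_ ?_) (.lt ?_ ?_)) <;> fun_prop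
  refine h.congr fun ⟨⟨x, y⟩, z⟩ => ?_
  rcases y.eq_zero_or_pos with rfl | hy
  · simp
  · simp [eq_comm (a := z), Nat.div_eq_iff hy, hy.ne', add_mul]
    grind

@[fun_prop]
theorem natMod {f g : α → ℕ} (hf : SigmaFun f) (hg : SigmaFun g) : SigmaFun fun a => f a % g a := by
  refine .of_graph ?_
  have h : SigmaPred fun p : α × ℕ => p.2 + g p.1 * (f p.1 / g p.1) = f p.1 :=
    .eq (by fun_prop) (by fun_prop)
  refine h.congr fun ⟨a, z⟩ => ?_
  have := Nat.mod_add_div (f a) (g a)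
  grind

@[fun_prop]
theorem natUnpair : SigmaFun Nat.unpair := by
  have h : SigmaPred fun p : ℕ × ℕ × ℕ => p.1 = Nat.pair p.2.1 p.2.2 :=
    .eq (by fun_prop) (by fun_prop)
  refine .of_graph (h.congr fun ⟨x, y, z⟩ => ?_)
  exact ⟨fun h => h ▸ (Nat.pair_unpair x).symm, fun h => h ▸ (Nat.unpair_pair y z).symm⟩

@[fun_prop]
theorem natBeta {f g : α → ℕ} (hf : SigmaFun f) (hg : SigmaFun g) :
    SigmaFun fun a => Nat.beta (f a) (g a) := by
  unfold Nat.beta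
  fun_prop

end SigmaFun

theorem exists_beta_eq (s : ℕ → ℕ) (l : ℕ) : ∃ c, ∀ i < l, Nat.beta c i = s i := by
  refine ⟨Nat.unbeta ((List.range l).map s), fun i hi => ?_⟩
  simpa using Nat.beta_unbeta_coe ((List.range l).map s) ⟨i, by simpa using hi⟩

/-- The least set containing `Ax` and closed under the inference rule with two premises `R`, where
`R x y z` means that `x` may be inferred from `y` and `z`. -/
inductive Derivable {α : Type*} (Ax : α → Prop) (R : α → α → α → Prop) : α → Prop
  | ax {x} : Ax x → Derivable Ax R x
  | rule {x y z} : Derivable Ax R y → Derivable Ax R z → R x y z → Derivable Ax R x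

theorem SigmaPred.comp₃ {α β γ δ : Type*} [Encodable α] [Encodable β] [Encodable γ] [Encodable δ]
    {R : β → γ → δ → Prop} (hR : SigmaPred fun p : β × γ × δ => R p.1 p.2.1 p.2.2) {f : α → β}
    {g : α → γ} {h : α → δ} (hf : SigmaFun f) (hg : SigmaFun g) (hh : SigmaFun h) :
    SigmaPred fun a => R (f a) (g a) (h a) :=
  hR.comp (hf.prodMk (hg.prodMk hh))

namespace Derivable

variable {α : Type*} {Ax : α → Prop} {R : α → α → α → Prop}

theorem iff_exists_seq {x : α} : Derivable Ax R x ↔ ∃ (s : ℕ → α) (l : ℕ), s l = x ∧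
    ∀ i ≤ l, Ax (s i) ∨ ∃ j < i, ∃ k < i, R (s i) (s j) (s k) := by
  constructor
  · intro h
    induction h with
    | @ax x hx => exact ⟨fun _ => x, 0, rfl, fun _ _ => .inl hx⟩
    | @rule x _ _ _ _ hR ihy ihz =>
      obtain ⟨s, l, rfl, hs⟩ := ihy
      obtain ⟨t, r, rfl, ht⟩ := ihz
      refine ⟨fun i => if i ≤ l then s i else if i ≤ l + 1 + r then t (i - (l + 1)) else x,
        l + r + 2, by grind, fun i hi => ?_⟩
      rcases lt_or_ge l i with hl | hl
      · rcases lt_or_ge (l + 1 + r) i with hr | hr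
        · exact .inr ⟨l, by omega, l + 1 + r, by omega, by grind⟩
        · refine (ht (i - (l + 1)) (by omega)).imp (by grind) fun ⟨j, hj, k, hk, h⟩ => ?_
          exact ⟨j + (l + 1), by omega, k + (l + 1), by omega, by grind⟩
      · exact (hs i hl).imp (by grind) fun ⟨j, hj, k, hk, h⟩ => ⟨j, hj, k, hk, by grind⟩
  · rintro ⟨s, l, rfl, hs⟩
    suffices ∀ i ≤ l, Derivable Ax R (s i) from this l le_rfl
    intro i
    induction i using Nat.strong_induction_on with
    | _ i ih =>
      intro hi
      obtain h | ⟨j, hj, k, hk, h⟩ := hs i hi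
      · exact .ax h
      · exact .rule (ih j hj (by omega)) (ih k hk (by omega)) h

theorem sigmaPred [Encodable α] [Sigma1Range α] (hAx : SigmaPred Ax)
    (hR : SigmaPred fun p : α × α × α => R p.1 p.2.1 p.2.2) : SigmaPred (Derivable Ax R) := by
  have h : SigmaPred fun x : α => ∃ c l : ℕ, Nat.beta c l = Encodable.encode x ∧
      ∀ i ≤ l, ∃ y : α, Nat.beta c i = Encodable.encode y ∧ (Ax y ∨ ∃ j k : ℕ, j < i ∧ k < i ∧
        ∃ z w : α, Nat.beta c j = Encodable.encode z ∧ Nat.beta c k = Encodable.encode w ∧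
          R y z w) := by
    refine .ex (.ex (.and (.eq ?_ ?_) (.ball_le ?_ ?_)))
    case refine_3 =>
      refine .ex (.and (.eq ?_ ?_) (.or (hAx.comp ?_) (.ex (.ex (.and (.lt ?_ ?_)
        (.and (.lt ?_ ?_) (.ex (.ex (.and (.eq ?_ ?_) (.and (.eq ?_ ?_)
          (.comp₃ hR ?_ ?_ ?_))))))))))) <;> fun_prop
    all_goals fun_prop
  refine h.congr fun x => iff_exists_seq.trans ⟨?_, ?_⟩
  · rintro ⟨s, l, rfl, hs⟩
    obtain ⟨c, hc⟩ := exists_beta_eq (fun i => Encodable.encode (s i)) (l + 1)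
    refine ⟨c, l, hc l (by omega), fun i hi => ⟨s i, hc i (by omega), (hs i hi).imp_right ?_⟩⟩
    rintro ⟨j, hj, k, hk, h⟩
    exact ⟨j, k, hj, hk, s j, s k, hc j (by omega), hc k (by omega), h⟩
  · rintro ⟨c, l, hl, hc⟩
    have : Nonempty α := ⟨x⟩
    choose! s hs hc using hc
    refine ⟨s, l, Encodable.encode_injective ((hs l le_rfl).symm.trans hl), fun i hi =>
      (hc i hi).imp_right ?_⟩
    rintro ⟨j, k, hj, hk, z, w, hz, hw, h⟩
    refine ⟨j, hj, k, hk, ?_⟩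
    rwa [Encodable.encode_injective ((hs j (by omega)).symm.trans hz),
      Encodable.encode_injective ((hs k (by omega)).symm.trans hw)]

end Derivable

@[fun_prop]
theorem SigmaFun.iterate {α β : Type*} [Encodable α] [Encodable β] [Sigma1Range β] {f : β → β}
    (hf : SigmaFun f) {n : α → ℕ} {g : α → β} (hn : SigmaFun n) (hg : SigmaFun g) :
    SigmaFun fun a => f^[n a] (g a) := by
  refine SigmaFun.comp (g := fun p : ℕ × β => f^[p.1] p.2) (.of_graph ?_) (hn.prodMk hg)
  have h : SigmaPred (Derivable (fun p : (ℕ × β) × β => p.1.1 = 0 ∧ p.2 = p.1.2)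
      fun p q _ => p = ((q.1.1 + 1, q.1.2), f q.2)) :=
    Derivable.sigmaPred (.and (.eq (by fun_prop) (by fun_prop)) (.eq (by fun_prop) (by fun_prop)))
      (.eq (by fun_prop) (by fun_prop))
  refine h.congr fun ⟨⟨n, a⟩, b⟩ => ⟨fun hb => ?_, fun h => ?_⟩
  · obtain rfl : b = f^[n] a := hb
    induction n with
    | zero => exact .ax ⟨rfl, rfl⟩
    | succ n ih => exact .rule ih ih (by simp [Function.iterate_succ_apply'])
  · generalize ((n, a), b) = p at h ⊢
    induction h with
    | ax h => rw [h.1, h.2, Function.iterate_zero_apply]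
    | rule _ _ h ih _ => rw [h, Function.iterate_succ_apply', ih]

@[fun_prop]
theorem SigmaFun.two_pow {α : Type*} [Encodable α] {f : α → ℕ} (hf : SigmaFun f) :
    SigmaFun fun a => 2 ^ f a := by
  have h : SigmaFun fun a => (fun x => 2 * x)^[f a] 1 := by fun_prop
  simpa only [mul_left_iterate, mul_one] using h

theorem SigmaFun.iterate_param {α β : Type*} [Encodable α] [Sigma1Range α] [Encodable β]
    [Sigma1Range β] {f : α → β → β} (hf : SigmaFun fun p : α × β => f p.1 p.2) :
    SigmaFun fun p : α × ℕ × β => (f p.1)^[p.2.1] p.2.2 := by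
  have h : SigmaFun fun p : α × ℕ × β =>
      (fun q : α × β => (q.1, f q.1 q.2))^[p.2.1] (p.1, p.2.2) := by
    fun_prop
  have iterate_eq (a : α) (b : β) (j : ℕ) :
      (fun q : α × β => (q.1, f q.1 q.2))^[j] (a, b) = (a, (f a)^[j] b) := by
    induction j with
    | zero => rfl
    | succ j ih => simp only [Function.iterate_succ_apply', ih]
  simp only [iterate_eq] at h
  exact SigmaFun.snd.comp h

theorem SigmaFun.natRec {α : Type*} [Encodable α] [Sigma1Range α] {f : α → ℕ} {g : α → ℕ → ℕ → ℕ}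
    (hf : SigmaFun f) (hg : SigmaFun fun p : α × ℕ × ℕ => g p.1 p.2.1 p.2.2) :
    SigmaFun fun p : α × ℕ => (Nat.rec (f p.1) (g p.1) p.2 : ℕ) := by
  have iterate_eq (a : α) (k : ℕ) :
      (fun s : ℕ × ℕ => (s.1 + 1, g a s.1 s.2))^[k] (0, f a) = (k, Nat.rec (f a) (g a) k) := by
    induction k with
    | zero => rfl
    | succ k ih => simp only [Function.iterate_succ_apply', ih]
  have hstep : SigmaFun fun p : α × ℕ × ℕ => (p.2.1 + 1, g p.1 p.2.1 p.2.2) :=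
    .prodMk (by fun_prop) hg
  have h := (SigmaFun.iterate_param (f := fun a s => (s.1 + 1, g a s.1 s.2)) hstep).comp
    (f := fun p : α × ℕ => (p.1, p.2, (0, f p.1))) (by fun_prop)
  simp only [iterate_eq] at h
  exact SigmaFun.snd.comp h

theorem sigmaFun_of_natPrimrec {f : ℕ → ℕ} (hf : Nat.Primrec f) : SigmaFun f := by
  induction hf with
  | zero => exact .const 0
  | succ => exact .add .id (.const 1)
  | left => exact SigmaFun.fst.comp .natUnpair
  | right => exact SigmaFun.snd.comp .natUnpair
  | pair _ _ hf hg => exact hf.natPair hg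
  | comp _ _ hf hg => exact hf.comp hg
  | @prec f g _ _ hf hg =>
    have hstep : SigmaFun fun p : ℕ × ℕ × ℕ => g (Nat.pair p.1 (Nat.pair p.2.1 p.2.2)) :=
      hg.comp (by fun_prop)
    exact (hf.natRec (g := fun z y IH => g (Nat.pair z (Nat.pair y IH))) hstep).comp .natUnpair

theorem PrAxiomatized.sigmaPred {Γ : Set AFml} (hΓ : PrAxiomatized Γ) :
    SigmaPred fun φ => φ ∈ Γ := by
  obtain ⟨p, hp, hpΓ⟩ := hΓ
  have hcode : SigmaFun fun φ : AFml => (Encodable.encode (p φ.code)) :=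
    (sigmaFun_of_natPrimrec (Primrec.nat_iff.1 (Primrec.encode.comp hp))).comp (.encode (α := AFml))
  refine (SigmaPred.eq hcode (.const 1)).congr fun φ => ?_
  rw [hpΓ]
  cases p φ.code <;> simp

/-! ### Arithmetization of syntax -/

section Formulas

open Encodable

variable {α : Type*} [Encodable α]

namespace SigmaFun

variable {f g : α → ATerm} {F G : α → AFml}

@[fun_prop]
theorem atermVar {f : α → ℕ} (hf : SigmaFun f) : SigmaFun fun a => ATerm.var (f a) :=
  of_encode (natPair (const 0) hf)

@[fun_prop]
theorem atermSucc (hf : SigmaFun f) : SigmaFun fun a => ATerm.succ (f a) :=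
  of_encode (natPair (const 2) hf)

@[fun_prop]
theorem atermAdd (hf : SigmaFun f) (hg : SigmaFun g) : SigmaFun fun a => ATerm.add (f a) (g a) :=
  of_encode (natPair (const 3) (hf.prodMk hg))

@[fun_prop]
theorem atermMul (hf : SigmaFun f) (hg : SigmaFun g) : SigmaFun fun a => ATerm.mul (f a) (g a) :=
  of_encode (natPair (const 4) (hf.prodMk hg))

@[fun_prop]
theorem afmlEq (hf : SigmaFun f) (hg : SigmaFun g) : SigmaFun fun a => AFml.eq (f a) (g a) :=
  of_encode (natPair (const 0) (hf.prodMk hg))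

@[fun_prop]
theorem afmlLe (hf : SigmaFun f) (hg : SigmaFun g) : SigmaFun fun a => AFml.le (f a) (g a) :=
  of_encode (natPair (const 1) (hf.prodMk hg))

@[fun_prop]
theorem afmlNeg (hF : SigmaFun F) : SigmaFun fun a => AFml.neg (F a) :=
  of_encode (natPair (const 2) hF)

@[fun_prop]
theorem afmlAnd (hF : SigmaFun F) (hG : SigmaFun G) : SigmaFun fun a => AFml.and (F a) (G a) :=
  of_encode (natPair (const 3) (hF.prodMk hG))

@[fun_prop]
theorem afmlOr (hF : SigmaFun F) (hG : SigmaFun G) : SigmaFun fun a => AFml.or (F a) (G a) :=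
  of_encode (natPair (const 4) (hF.prodMk hG))

@[fun_prop]
theorem afmlImp (hF : SigmaFun F) (hG : SigmaFun G) : SigmaFun fun a => AFml.imp (F a) (G a) :=
  of_encode (natPair (const 5) (hF.prodMk hG))

@[fun_prop]
theorem afmlAll (hF : SigmaFun F) : SigmaFun fun a => AFml.all (F a) :=
  of_encode (natPair (const 6) hF)

@[fun_prop]
theorem afmlEx (hF : SigmaFun F) : SigmaFun fun a => AFml.ex (F a) :=
  of_encode (natPair (const 7) hF)

end SigmaFun

theorem ATerm.mem_range_encode_iff {n : ℕ} : n ∈ Set.range (encode : ATerm → ℕ) ↔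
    Derivable (fun x => (∃ k : ℕ, x = Nat.pair 0 k) ∨ x = Nat.pair 1 0)
      (fun x y z => x = Nat.pair 2 y ∨ x = Nat.pair 3 (Nat.pair y z) ∨
        x = Nat.pair 4 (Nat.pair y z)) n := by
  constructor
  · rintro ⟨t, rfl⟩
    induction t with
    | var k => exact .ax (.inl ⟨k, rfl⟩)
    | zero => exact .ax (.inr rfl)
    | succ t ih => exact .rule ih ih (.inl rfl)
    | add t s iht ihs => exact .rule iht ihs (.inr (.inl rfl))
    | mul t s iht ihs => exact .rule iht ihs (.inr (.inr rfl))
  · intro h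
    induction h with
    | ax h =>
      rcases h with ⟨k, rfl⟩ | rfl
      exacts [⟨.var k, rfl⟩, ⟨.zero, rfl⟩]
    | rule _ _ h ihy ihz =>
      obtain ⟨t, rfl⟩ := ihy
      obtain ⟨s, rfl⟩ := ihz
      rcases h with rfl | rfl | rfl
      exacts [⟨.succ t, rfl⟩, ⟨.add t s, rfl⟩, ⟨.mul t s, rfl⟩]

instance : Sigma1Range ATerm where
  sigmaPred_range := by
    refine .congr (Derivable.sigmaPred ?_ ?_) fun _ => ATerm.mem_range_encode_iff
    · refine .or (.ex (.eq ?_ ?_)) (.eq ?_ ?_) <;> fun_prop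
    · refine .or (.eq ?_ ?_) (.or (.eq ?_ ?_) (.eq ?_ ?_)) <;> fun_prop

theorem AFml.mem_range_encode_iff {n : ℕ} : n ∈ Set.range (encode : AFml → ℕ) ↔
    Derivable (fun x => ∃ t s : ATerm, x = encode (AFml.eq t s) ∨ x = encode (AFml.le t s))
      (fun x y z => x = Nat.pair 2 y ∨ x = Nat.pair 3 (Nat.pair y z) ∨
        x = Nat.pair 4 (Nat.pair y z) ∨ x = Nat.pair 5 (Nat.pair y z) ∨
        x = Nat.pair 6 y ∨ x = Nat.pair 7 y) n := by
  constructor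
  · rintro ⟨φ, rfl⟩
    induction φ with
    | eq t s => exact .ax ⟨t, s, .inl rfl⟩
    | le t s => exact .ax ⟨t, s, .inr rfl⟩
    | neg φ ih => exact .rule ih ih (.inl rfl)
    | and φ ψ ih ih' => exact .rule ih ih' (.inr (.inl rfl))
    | or φ ψ ih ih' => exact .rule ih ih' (.inr (.inr (.inl rfl)))
    | imp φ ψ ih ih' => exact .rule ih ih' (.inr (.inr (.inr (.inl rfl))))
    | all φ ih => exact .rule ih ih (.inr (.inr (.inr (.inr (.inl rfl)))))
    | ex φ ih => exact .rule ih ih (.inr (.inr (.inr (.inr (.inr rfl)))))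
  · intro h
    induction h with
    | ax h =>
      obtain ⟨t, s, rfl | rfl⟩ := h
      exacts [⟨_, rfl⟩, ⟨_, rfl⟩]
    | rule _ _ h ihy ihz =>
      obtain ⟨φ, rfl⟩ := ihy
      obtain ⟨ψ, rfl⟩ := ihz
      rcases h with rfl | rfl | rfl | rfl | rfl | rfl
      exacts [⟨.neg φ, rfl⟩, ⟨.and φ ψ, rfl⟩, ⟨.or φ ψ, rfl⟩, ⟨.imp φ ψ, rfl⟩, ⟨.all φ, rfl⟩,
        ⟨.ex φ, rfl⟩]

instance : Sigma1Range AFml where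
  sigmaPred_range := by
    refine .congr (Derivable.sigmaPred ?_ ?_) fun _ => AFml.mem_range_encode_iff
    · refine .ex (.ex (.or (.eq ?_ ?_) (.eq ?_ ?_))) <;> fun_prop
    · refine .or (.eq ?_ ?_) (.or (.eq ?_ ?_) (.or (.eq ?_ ?_) (.or (.eq ?_ ?_)
        (.or (.eq ?_ ?_) (.eq ?_ ?_))))) <;> fun_prop

@[fun_prop]
theorem SigmaFun.numeral : SigmaFun numeral := by
  have h : SigmaFun fun n => ATerm.succ^[n] .zero := by fun_prop
  convert h using 2 with n
  induction n with
  | zero => rfl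
  | succ n ih => rw [Function.iterate_succ_apply', ← ih]; rfl

section Substitution

variable {ι : Type*} {σ : ι → ℕ → ATerm}

theorem ATerm.eq_substAll_iff {i : ι} {t u : ATerm} : u = t.substAll (σ i) ↔
    Derivable (fun x : ι × ATerm × ATerm =>
        (∃ k : ℕ, x.2.1 = .var k ∧ x.2.2 = σ x.1 k) ∨ (x.2.1 = .zero ∧ x.2.2 = .zero))
      (fun x y z => x.1 = y.1 ∧ x.1 = z.1 ∧ (x.2 = (.succ y.2.1, .succ y.2.2) ∨
        x.2 = (.add y.2.1 z.2.1, .add y.2.2 z.2.2) ∨ x.2 = (.mul y.2.1 z.2.1, .mul y.2.2 z.2.2)))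
      (i, t, u) := by
  constructor
  · rintro rfl
    induction t with
    | var k => exact .ax (.inl ⟨k, rfl, rfl⟩)
    | zero => exact .ax (.inr ⟨rfl, rfl⟩)
    | succ t ih => exact .rule ih ih ⟨rfl, rfl, .inl rfl⟩
    | add t s iht ihs => exact .rule iht ihs ⟨rfl, rfl, .inr (.inl rfl)⟩
    | mul t s iht ihs => exact .rule iht ihs ⟨rfl, rfl, .inr (.inr rfl)⟩
  · intro h
    change (i, t, u).2.2 = (i, t, u).2.1.substAll (σ (i, t, u).1)
    generalize (i, t, u) = x at h ⊢
    induction h with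
    | ax h => rcases h with ⟨k, h, h'⟩ | ⟨h, h'⟩ <;> rw [h, h'] <;> rfl
    | rule _ _ h ihy ihz =>
      obtain ⟨h₁, h₂, h | h | h⟩ := h <;> simp only [h, h₁, ihy, ATerm.substAll]
      all_goals rw [ihz, ← h₁, h₂]

theorem liftSub_iterate (σ : ℕ → ATerm) (d n : ℕ) :
    liftSub^[d] σ n = if n < d then .var n else (ATerm.lift 0)^[d] (σ (n - d)) := by
  induction d generalizing n with
  | zero => rfl
  | succ d ih =>
    rw [Function.iterate_succ_apply']
    cases n with
    | zero => rfl
    | succ n =>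
      rw [Function.iterate_succ_apply', liftSub, ih, Nat.add_sub_add_right]
      split_ifs with h <;> first | rfl | omega

theorem AFml.eq_substAll_iff {p : ι × ℕ} {φ ψ : AFml} :
    ψ = φ.substAll (liftSub^[p.2] (σ p.1)) ↔
    Derivable (fun x : (ι × ℕ) × AFml × AFml => ∃ t s : ATerm,
        (x.2.1 = .eq t s ∧ x.2.2 = .eq (t.substAll (liftSub^[x.1.2] (σ x.1.1)))
          (s.substAll (liftSub^[x.1.2] (σ x.1.1)))) ∨
        (x.2.1 = .le t s ∧ x.2.2 = .le (t.substAll (liftSub^[x.1.2] (σ x.1.1)))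
          (s.substAll (liftSub^[x.1.2] (σ x.1.1)))))
      (fun x y z => (x.1 = y.1 ∧ x.1 = z.1 ∧ (x.2 = (.neg y.2.1, .neg y.2.2) ∨
          x.2 = (.and y.2.1 z.2.1, .and y.2.2 z.2.2) ∨ x.2 = (.or y.2.1 z.2.1, .or y.2.2 z.2.2) ∨
          x.2 = (.imp y.2.1 z.2.1, .imp y.2.2 z.2.2))) ∨
        ((x.1.1, x.1.2 + 1) = y.1 ∧ (x.2 = (.all y.2.1, .all y.2.2) ∨
          x.2 = (.ex y.2.1, .ex y.2.2))))
      (p, φ, ψ) := by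
  have liftSub_succ (d : ℕ) (σ : ℕ → ATerm) : liftSub (liftSub^[d] σ) = liftSub^[d + 1] σ :=
    (Function.iterate_succ_apply' ..).symm
  constructor
  · rintro rfl
    induction φ generalizing p with
    | eq t s => exact .ax ⟨t, s, .inl ⟨rfl, rfl⟩⟩
    | le t s => exact .ax ⟨t, s, .inr ⟨rfl, rfl⟩⟩
    | neg φ ih => exact .rule ih ih (.inl ⟨rfl, rfl, .inl rfl⟩)
    | and φ ψ ih ih' => exact .rule ih ih' (.inl ⟨rfl, rfl, .inr (.inl rfl)⟩)
    | or φ ψ ih ih' => exact .rule ih ih' (.inl ⟨rfl, rfl, .inr (.inr (.inl rfl))⟩)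
    | imp φ ψ ih ih' => exact .rule ih ih' (.inl ⟨rfl, rfl, .inr (.inr (.inr rfl))⟩)
    | all φ ih =>
      simp only [substAll, liftSub_succ]
      exact .rule (@ih (p.1, p.2 + 1)) (@ih (p.1, p.2 + 1)) (.inr ⟨rfl, .inl rfl⟩)
    | ex φ ih =>
      simp only [substAll, liftSub_succ]
      exact .rule (@ih (p.1, p.2 + 1)) (@ih (p.1, p.2 + 1)) (.inr ⟨rfl, .inr rfl⟩)
  · intro h
    change (p, φ, ψ).2.2 = (p, φ, ψ).2.1.substAll
      (liftSub^[(p, φ, ψ).1.2] (σ (p, φ, ψ).1.1))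
    generalize (p, φ, ψ) = x at h ⊢
    induction h with
    | ax h => obtain ⟨t, s, ⟨h, h'⟩ | ⟨h, h'⟩⟩ := h <;> rw [h, h'] <;> rfl
    | rule _ _ h ihy ihz =>
      rcases h with ⟨h₁, h₂, h⟩ | ⟨h₁, h⟩
      · rcases h with h | h | h | h <;> simp only [h, h₁, ihy, substAll]
        all_goals rw [ihz, ← h₁, h₂]
      · rcases h with h | h <;> simp only [h, ihy, ← h₁, substAll, liftSub_succ]

variable [Encodable ι]

theorem SigmaFun.aterm_substAll [Sigma1Range ι] (hσ : SigmaFun fun p : ι × ℕ => σ p.1 p.2) :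
    SigmaFun fun p : ι × ATerm => p.2.substAll (σ p.1) := by
  refine .of_graph (.congr (.comp (Derivable.sigmaPred ?_ ?_) ?_) fun _ => ATerm.eq_substAll_iff)
  · refine .or (.ex (.and (.eq ?_ ?_) (.eq ?_ ?_))) (.and (.eq ?_ ?_) (.eq ?_ ?_)) <;> fun_prop
  · refine .and (.eq ?_ ?_) (.and (.eq ?_ ?_) (.or (.eq ?_ ?_) (.or (.eq ?_ ?_) (.eq ?_ ?_))))
      <;> fun_prop
  · fun_prop

@[fun_prop]
theorem SigmaFun.aterm_lift_zero : SigmaFun (ATerm.lift 0) := by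
  have h : SigmaFun fun p : ℕ × ATerm => p.2.substAll fun n => .var (n + 1) :=
    aterm_substAll (σ := fun _ n => .var (n + 1)) (by fun_prop)
  convert h.comp (f := fun t : ATerm => (0, t)) (by fun_prop) using 2 with t
  exact ATerm.lift_eq_substAll ..

theorem SigmaFun.liftSub_iterate (hσ : SigmaFun fun p : ι × ℕ => σ p.1 p.2) :
    SigmaFun fun p : (ι × ℕ) × ℕ => liftSub^[p.1.2] (σ p.1.1) p.2 := by
  have h : SigmaPred fun p : ((ι × ℕ) × ℕ) × ATerm => (p.1.2 < p.1.1.2 ∧ p.2 = .var p.1.2) ∨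
      ∃ k, k + p.1.1.2 = p.1.2 ∧ p.2 = (ATerm.lift 0)^[p.1.1.2] (σ p.1.1.1 k) := by
    refine .or (.and (.lt ?_ ?_) (.eq ?_ ?_)) (.ex (.and (.eq ?_ ?_) (.eq ?_ ?_))) <;> fun_prop
  refine .of_graph (h.congr fun ⟨⟨⟨i, d⟩, n⟩, t⟩ => ?_)
  simp only [PLN.liftSub_iterate]
  rcases lt_or_ge n d with hn | hn
  · grind
  · obtain ⟨k, rfl⟩ := Nat.exists_eq_add_of_le' hn
    simp

theorem SigmaFun.afml_substAll [Sigma1Range ι] (hσ : SigmaFun fun p : ι × ℕ => σ p.1 p.2) :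
    SigmaFun fun p : ι × AFml => p.2.substAll (σ p.1) := by
  have hterm {f : _ → ATerm} (hf : SigmaFun f) :
      SigmaFun fun q : (((ι × ℕ) × AFml × AFml) × ATerm) × ATerm =>
        (f q).substAll (liftSub^[q.1.1.1.2] (σ q.1.1.1.1)) :=
    (aterm_substAll (σ := fun (p : ι × ℕ) n => liftSub^[p.2] (σ p.1) n) hσ.liftSub_iterate).comp
      (f := fun q => (q.1.1.1, f q)) (by fun_prop)
  have h : SigmaFun fun p : (ι × ℕ) × AFml => p.2.substAll (liftSub^[p.1.2] (σ p.1.1)) := by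
    refine .of_graph (.congr (.comp (Derivable.sigmaPred ?_ ?_) ?_) fun _ => AFml.eq_substAll_iff)
    · refine .ex (.ex (.or (.and (.eq ?_ ?_) (.eq ?_ (.afmlEq (hterm ?_) (hterm ?_))))
        (.and (.eq ?_ ?_) (.eq ?_ (.afmlLe (hterm ?_) (hterm ?_)))))) <;> fun_prop
    · refine .or (.and (.eq ?_ ?_) (.and (.eq ?_ ?_) (.or (.eq ?_ ?_) (.or (.eq ?_ ?_)
        (.or (.eq ?_ ?_) (.eq ?_ ?_)))))) (.and (.eq ?_ ?_) (.or (.eq ?_ ?_) (.eq ?_ ?_)))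
        <;> fun_prop
    · fun_prop
  exact h.comp (f := fun p : ι × AFml => ((p.1, 0), p.2)) (by fun_prop)

end Substitution

namespace SigmaFun

variable {F : α → AFml} {f : α → ATerm}

@[fun_prop]
theorem afml_lift_zero : SigmaFun (AFml.lift 0) := by
  have h : SigmaFun fun p : ℕ × AFml => p.2.substAll fun n => .var (n + 1) :=
    afml_substAll (σ := fun _ n => .var (n + 1)) (by fun_prop)
  convert h.comp (f := fun φ : AFml => (0, φ)) (by fun_prop) using 2 with φ
  exact AFml.lift_eq_substAll ..

@[fun_prop]
theorem afml_subst0 (hF : SigmaFun F) (hf : SigmaFun f) : SigmaFun fun a => (F a).subst0 (f a) := by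
  have hgraph : SigmaPred fun p : (ATerm × ℕ) × ATerm => (p.1.2 = 0 ∧ p.2 = p.1.1) ∨
      ∃ k, p.1.2 = k + 1 ∧ p.2 = .var k := by
    refine .or (.and (.eq ?_ ?_) (.eq ?_ ?_)) (.ex (.and (.eq ?_ ?_) (.eq ?_ ?_))) <;> fun_prop
  have hsubst : SigmaFun fun p : ATerm × ℕ => subst0Env p.1 p.2 := by
    refine .of_graph (hgraph.congr fun ⟨⟨t, n⟩, u⟩ => ?_)
    cases n <;> simp [subst0Env]
  exact (afml_substAll hsubst).comp (hf.prodMk hF)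

end SigmaFun

end Formulas

/-! ### Σ₁ definability of provability -/

theorem AFml.evalProp_congr {v w : AFml → Prop} {φ : AFml}
    (h : ∀ ψ, ψ.code ≤ φ.code → (v ψ ↔ w ψ)) : φ.evalProp v ↔ φ.evalProp w := by
  have le_code {k x y : ℕ} (hx : x ≤ y) : x ≤ Nat.pair k y := hx.trans (Nat.right_le_pair k y)
  induction φ with
  | neg φ ih => exact not_congr (ih fun ψ hψ => h ψ (le_code hψ))
  | and φ χ ih ih' =>
    exact and_congr (ih fun ψ hψ => h ψ (le_code (hψ.trans (Nat.left_le_pair ..))))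
      (ih' fun ψ hψ => h ψ (le_code (le_code hψ)))
  | or φ χ ih ih' =>
    exact or_congr (ih fun ψ hψ => h ψ (le_code (hψ.trans (Nat.left_le_pair ..))))
      (ih' fun ψ hψ => h ψ (le_code (le_code hψ)))
  | imp φ χ ih ih' =>
    exact imp_congr (ih fun ψ hψ => h ψ (le_code (hψ.trans (Nat.left_le_pair ..))))
      (ih' fun ψ hψ => h ψ (le_code (le_code hψ)))
  | _ => exact h _ le_rfl

/-- The valuation making true the formulas whose codes are the positions of the binary digits `1`
of `a`. -/
def bitVal (a : ℕ) (φ : AFml) : Prop := a.testBit φ.code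

theorem aTaut_iff_forall_bitVal {φ : AFml} :
    ATaut φ ↔ ∀ a < 2 ^ (φ.code + 1), φ.evalProp (bitVal a) := by
  refine ⟨fun h a _ => h _, fun h v => ?_⟩
  classical
  let bits : Fin (φ.code + 1) → Bool := fun i => ∃ ψ : AFml, ψ.code = i ∧ v ψ
  refine (AFml.evalProp_congr fun ψ hψ => ?_).1 (h _ (Nat.ofBits_lt_two_pow bits))
  rw [bitVal, Nat.testBit_ofBits_lt bits _ (by omega)]
  simp [bits, AFml.code_injective.eq_iff]

open Classical in
theorem AFml.eq_evalProp_bitVal_iff {a b : ℕ} {φ : AFml} :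
    b = (if φ.evalProp (bitVal a) then 1 else 0) ↔
    Derivable (fun x : ℕ × AFml × ℕ => (∃ (ψ : AFml) (t s : ATerm), x.2.1 = .eq t s ∨
        x.2.1 = .le t s ∨ x.2.1 = .all ψ ∨ x.2.1 = .ex ψ) ∧
        x.2.2 = x.1 / 2 ^ Encodable.encode x.2.1 % 2)
      (fun x y z => x.1 = y.1 ∧ x.1 = z.1 ∧
        ((x.2.1 = .neg y.2.1 ∧ x.2.2 + y.2.2 = 1) ∨
        (x.2.1 = .and y.2.1 z.2.1 ∧ x.2.2 = y.2.2 * z.2.2) ∨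
        (x.2.1 = .or y.2.1 z.2.1 ∧ x.2.2 + y.2.2 * z.2.2 = y.2.2 + z.2.2) ∨
        (x.2.1 = .imp y.2.1 z.2.1 ∧ x.2.2 + y.2.2 = 1 + y.2.2 * z.2.2)))
      (a, φ, b) := by
  have bit_eq (a : ℕ) (ψ : AFml) : a / 2 ^ ψ.code % 2 = if bitVal a ψ then 1 else 0 := by
    rw [bitVal, Nat.testBit_eq_decide_div_mod_eq]
    grind
  constructor
  · rintro rfl
    induction φ with
    | eq t s => exact .ax ⟨⟨botFml, t, s, .inl rfl⟩, (bit_eq ..).symm⟩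
    | le t s => exact .ax ⟨⟨botFml, t, s, .inr (.inl rfl)⟩, (bit_eq ..).symm⟩
    | all ψ => exact .ax ⟨⟨ψ, .zero, .zero, .inr (.inr (.inl rfl))⟩, (bit_eq ..).symm⟩
    | ex ψ => exact .ax ⟨⟨ψ, .zero, .zero, .inr (.inr (.inr rfl))⟩, (bit_eq ..).symm⟩
    | neg ψ ih =>
      exact .rule ih ih ⟨rfl, rfl, .inl ⟨rfl, by simp only [evalProp]; split_ifs <;> grind⟩⟩
    | and ψ χ ih ih' =>
      exact .rule ih ih' ⟨rfl, rfl, .inr (.inl ⟨rfl, by simp only [evalProp]; grind⟩)⟩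
    | or ψ χ ih ih' =>
      exact .rule ih ih' ⟨rfl, rfl, .inr (.inr (.inl ⟨rfl, by simp only [evalProp]; grind⟩))⟩
    | imp ψ χ ih ih' =>
      exact .rule ih ih' ⟨rfl, rfl, .inr (.inr (.inr ⟨rfl, by simp only [evalProp]; grind⟩))⟩
  · intro h
    change (a, φ, b).2.2 = if (a, φ, b).2.1.evalProp (bitVal (a, φ, b).1) then 1 else 0
    generalize (a, φ, b) = x at h ⊢
    induction h with
    | ax h =>
      obtain ⟨⟨ψ, t, s, h⟩, h'⟩ := h
      rw [h']
      refine (bit_eq ..).trans ?_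
      rcases h with h | h | h | h <;> rw [h] <;> rfl
    | rule _ _ h ihy ihz =>
      obtain ⟨h₁, h₂, ⟨h, h'⟩ | ⟨h, h'⟩ | ⟨h, h'⟩ | ⟨h, h'⟩⟩ := h <;> simp only [h, evalProp] <;>
        grind

theorem sigmaPred_aTaut : SigmaPred ATaut := by
  have h : SigmaPred fun p : AFml × ℕ => p.1.evalProp (bitVal p.2) := by
    refine .congr (.comp (Derivable.sigmaPred ?_ ?_) (f := fun p : AFml × ℕ => (p.2, p.1, 1)) ?_)
      fun p => Iff.trans (by simp) AFml.eq_evalProp_bitVal_iff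
    · refine .and (.ex (.ex (.ex (.or (.eq ?_ ?_) (.or (.eq ?_ ?_) (.or (.eq ?_ ?_)
        (.eq ?_ ?_))))))) (.eq ?_ ?_) <;> fun_prop
    · refine .and (.eq ?_ ?_) (.and (.eq ?_ ?_) (.or (.and (.eq ?_ ?_) (.eq ?_ ?_))
        (.or (.and (.eq ?_ ?_) (.eq ?_ ?_)) (.or (.and (.eq ?_ ?_) (.eq ?_ ?_))
          (.and (.eq ?_ ?_) (.eq ?_ ?_)))))) <;> fun_prop
    · fun_prop
  exact .congr (.ball_lt h (f := fun φ : AFml => 2 ^ (Encodable.encode φ + 1)) (by fun_prop))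
    fun _ => aTaut_iff_forall_bitVal

@[fun_prop]
theorem SigmaFun.iffF {α : Type*} [Encodable α] {F G : α → AFml} (hF : SigmaFun F)
    (hG : SigmaFun G) : SigmaFun fun a => iffF (F a) (G a) := by
  unfold PLN.iffF
  fun_prop

theorem proves_iff_derivable {ι : Type*} {Γ : ι → Set AFml} {i : ι} {φ : AFml} :
    Proves (Γ i) φ ↔ Derivable
      (fun p : ι × AFml => p.2 ∈ Γ p.1 ∨ ATaut p.2 ∨ ∃ (ψ χ : AFml) (t s : ATerm),
        p.2 = .imp (.all ψ) (ψ.subst0 t) ∨ p.2 = .imp (ψ.subst0 t) (.ex ψ) ∨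
        p.2 = .imp (.all (.imp ψ χ)) (.imp (.all ψ) (.all χ)) ∨ p.2 = .imp ψ (.all (ψ.lift 0)) ∨
        p.2 = iffF (.ex ψ) (.neg (.all (.neg ψ))) ∨ p.2 = .eq t t ∨
        p.2 = .imp (.eq t s) (.imp (ψ.subst0 t) (ψ.subst0 s)))
      (fun p q r => p.1 = q.1 ∧ p.1 = r.1 ∧ (q.2 = .imp r.2 p.2 ∨ p.2 = .all q.2)) (i, φ) := by
  constructor
  · intro h
    induction h with
    | ax h => exact .ax (.inl h)
    | taut h => exact .ax (.inr (.inl h))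
    | mp _ _ ih ih' => exact .rule ih ih' ⟨rfl, rfl, .inl rfl⟩
    | gen _ ih => exact .rule ih ih ⟨rfl, rfl, .inr rfl⟩
    | allE φ t => exact .ax (.inr (.inr ⟨φ, φ, t, t, .inl rfl⟩))
    | exI φ t => exact .ax (.inr (.inr ⟨φ, φ, t, t, by simp⟩))
    | allImp φ ψ => exact .ax (.inr (.inr ⟨φ, ψ, .zero, .zero, by simp⟩))
    | vacAll φ => exact .ax (.inr (.inr ⟨φ, φ, .zero, .zero, by simp⟩))
    | exDef φ => exact .ax (.inr (.inr ⟨φ, φ, .zero, .zero, by simp⟩))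
    | eqRefl t => exact .ax (.inr (.inr ⟨botFml, botFml, t, t, by simp⟩))
    | eqSubst φ t s => exact .ax (.inr (.inr ⟨φ, φ, t, s, by simp⟩))
  · intro h
    change Proves (Γ (i, φ).1) (i, φ).2
    generalize (i, φ) = p at h ⊢
    induction h with
    | ax h =>
      obtain h | h | ⟨ψ, χ, t, s, h⟩ := h
      · exact .ax h
      · exact .taut h
      · rcases h with h | h | h | h | h | h | h <;> rw [h]
        exacts [.allE .., .exI .., .allImp .., .vacAll .., .exDef .., .eqRefl .., .eqSubst ..]
    | rule _ _ h ihy ihz =>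
      obtain ⟨hy, hz, h⟩ := h
      rw [← hy] at ihy
      rw [← hz] at ihz
      rcases h with h | h
      · exact .mp (h ▸ ihy) ihz
      · exact h ▸ .gen ihy

theorem sigmaPred_proves {ι : Type*} [Encodable ι] [Sigma1Range ι] {Γ : ι → Set AFml}
    (hΓ : SigmaPred fun p : ι × AFml => p.2 ∈ Γ p.1) :
    SigmaPred fun p : ι × AFml => Proves (Γ p.1) p.2 := by
  refine .congr (Derivable.sigmaPred ?_ ?_) fun _ => proves_iff_derivable
  · refine hΓ.or (.or (sigmaPred_aTaut.comp ?_) (.ex (.ex (.ex (.ex (.or (.eq ?_ ?_)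
      (.or (.eq ?_ ?_) (.or (.eq ?_ ?_) (.or (.eq ?_ ?_) (.or (.eq ?_ ?_) (.or (.eq ?_ ?_)
        (.eq ?_ ?_))))))))))))
      <;> fun_prop
  · refine .and (.eq ?_ ?_) (.and (.eq ?_ ?_) (.or (.eq ?_ ?_) (.eq ?_ ?_))) <;> fun_prop

/-! ### Separation of disjoint Σ₁ relations in PA -/

/-- Only the first `k + 1` entries of an environment are read, the last of them standing in for
all later ones. -/
theorem Delta0Rel.exists_freeLt {R : (ℕ → ℕ) → Prop} (h : Delta0Rel R) (k : ℕ) :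
    ∃ θ, IsDelta0 θ ∧ θ.FreeLt (k + 1) ∧ ∀ ρ, θ.Sat ρ ↔ R fun n => ρ (min n k) := by
  obtain ⟨θ, hθ, h⟩ := h
  exact ⟨_, hθ.substAll fun n => .var (min n k),
    AFml.freeLt_substAll (σ := fun n => .var (min n k))
      (fun n => Nat.lt_succ_of_le (min_le_right n k)) θ,
    fun ρ => (AFml.sat_substAll _ ρ θ).trans (h _)⟩

theorem Sigma1Rel.exists_freeLt {R : (ℕ → ℕ) → Prop} (h : Sigma1Rel R) (k : ℕ) :
    ∃ θ, IsDelta0 θ ∧ θ.FreeLt (k + 2) ∧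
      ∀ ρ, (R fun n => ρ (min n k)) ↔ ∃ s, θ.Sat (consEnv s ρ) := by
  obtain ⟨D, hD, h⟩ := h
  obtain ⟨θ, hθ, hfree, hsat⟩ := hD.exists_freeLt (k + 1)
  refine ⟨θ, hθ, hfree, fun ρ => (h _).trans (exists_congr fun s => ?_)⟩
  rw [hsat]
  refine iff_of_eq (congrArg D (funext fun n => ?_))
  cases n with
  | zero => rfl
  | succ n => rw [Nat.succ_min_succ]; rfl

theorem Sigma1Rel.exists_separating {R S : (ℕ → ℕ) → Prop} (hR : Sigma1Rel R) (hS : Sigma1Rel S)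
    (disj : ∀ ρ, R ρ → ¬ S ρ) (k : ℕ) : ∃ θ, IsDelta0 θ ∧ (AFml.ex θ).FreeLt (k + 1) ∧ ∀ ρ,
      ((R fun n => ρ (min n k)) → Proves PA ((AFml.ex θ).inst ρ)) ∧
      ((S fun n => ρ (min n k)) → Proves PA (.neg ((AFml.ex θ).inst ρ))) := by
  obtain ⟨B, hB, hBfree, hR⟩ := hR.exists_freeLt k
  obtain ⟨C, hC, hCfree, hS⟩ := hS.exists_freeLt k
  refine ⟨rosserMatrix B C, hB.rosserMatrix hC, .rosser hBfree hCfree, fun ρ => ⟨?_, ?_⟩⟩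
  · intro h
    obtain ⟨s, hs⟩ := (hR ρ).1 h
    exact provable_rosser hB hC hs fun t _ ht => disj _ h ((hS ρ).2 ⟨t, ht⟩)
  · intro h
    obtain ⟨t, ht⟩ := (hS ρ).1 h
    exact refutable_rosser hB hC ht fun s _ hs => disj _ ((hR ρ).2 ⟨s, hs⟩) h

theorem SigmaPred.sigma1Rel {Q : ℕ × ℕ × ℕ → Prop} (h : SigmaPred Q) :
    Sigma1Rel fun ρ => Q (ρ 0, ρ 1, ρ 2) := by
  obtain ⟨S, hS, h⟩ := h
  have : Sigma1Rel fun ρ => ∃ a b, a = Nat.pair (ρ 1) (ρ 2) ∧ b = Nat.pair (ρ 0) a ∧ S b :=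
    .ex (.ex (.and (.pair 1 3 4) (.and (.pair 0 2 1) (hS.rename₁ 0))))
  convert this using 2 with ρ
  simp [h]

theorem AFml.subst0_numeral_inst (φ : AFml) (a : ℕ) (ρ : ℕ → ℕ) :
    (φ.subst0 (numeral a)).inst ρ = φ.inst (consEnv a ρ) := by
  rw [subst0, inst, substAll_substAll, inst]
  congr 1
  funext n
  cases n with
  | zero => exact substAll_numeral ..
  | succ n => rfl

theorem AFml.FreeLt.subst0_numeral {φ : AFml} {c : ℕ} (hφ : φ.FreeLt (c + 1)) (a : ℕ) :
    (φ.subst0 (numeral a)).FreeLt c :=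
  hφ.substAll fun n hn => by
    cases n with
    | zero => exact (freeLt_numeral a).mono c.zero_le
    | succ n => exact Nat.lt_of_succ_lt_succ hn

/-- Diagonalization: the result of substituting the Gödel number of `θ` in `∃ s θ`. -/
def AFml.diag (θ : AFml) : AFml := (AFml.ex θ).subst0 (numeral θ.code)

@[fun_prop]
theorem sigmaFun_diag : SigmaFun AFml.diag := by
  have h : SigmaFun fun θ : AFml => (AFml.ex θ).subst0 (numeral (Encodable.encode θ)) := by
    fun_prop
  exact h

/-- A form of the fixed point theorem: the Σ₁ relations to be separated may depend on the
separating formula `∃ s θ` itself. -/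
theorem SigmaPred.exists_separating {R S : AFml × ℕ × ℕ → Prop} (hR : SigmaPred R)
    (hS : SigmaPred S) (disj : ∀ p, R p → ¬ S p) :
    ∃ θ, IsDelta0 θ ∧ (AFml.ex θ).FreeLt 2 ∧ ∀ ρ,
      (R (.ex θ, ρ 0, ρ 1) → Proves PA ((AFml.ex θ).inst ρ)) ∧
      (S (.ex θ, ρ 0, ρ 1) → Proves PA (.neg ((AFml.ex θ).inst ρ))) := by
  let atDiag (Q : AFml × ℕ × ℕ → Prop) (ρ : ℕ → ℕ) : Prop :=
    ∃ θ : AFml, ρ 0 = Encodable.encode θ ∧ Q (θ.diag, ρ 1, ρ 2)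
  have sigma1Rel {Q : AFml × ℕ × ℕ → Prop} (hQ : SigmaPred Q) : Sigma1Rel (atDiag Q) := by
    refine SigmaPred.sigma1Rel (Q := fun p => ∃ θ : AFml, p.1 = Encodable.encode θ ∧
      Q (θ.diag, p.2)) (.ex (.and (.eq ?_ ?_) (hQ.comp ?_))) <;> fun_prop
  have atDiag_disj (ρ : ℕ → ℕ) : atDiag R ρ → ¬ atDiag S ρ := by
    rintro ⟨θ, hθ, h⟩ ⟨θ', hθ', h'⟩
    cases Encodable.encode_injective (hθ.symm.trans hθ')
    exact disj _ h h'
  obtain ⟨θ, hθ, hfree, h⟩ := (sigma1Rel hR).exists_separating (sigma1Rel hS) atDiag_disj 2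
  refine ⟨θ.substAll (liftSub (subst0Env (numeral θ.code))), hθ.substAll _,
    hfree.subst0_numeral θ.code, fun ρ => ?_⟩
  change (R (θ.diag, _) → Proves PA (((AFml.ex θ).subst0 (numeral θ.code)).inst ρ)) ∧
    (S (θ.diag, _) → Proves PA (.neg (((AFml.ex θ).subst0 (numeral θ.code)).inst ρ)))
  rw [AFml.subst0_numeral_inst]
  exact ⟨fun hρ => (h _).1 ⟨θ, rfl, hρ⟩, fun hρ => (h _).2 ⟨θ, rfl, hρ⟩⟩

/-! ### A flexible Σ₁ formula -/

theorem SigmaPred.exists_stage {α : Type*} [Encodable α] {R : α → Prop} (h : SigmaPred R) :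
    ∃ M : ℕ → α → Prop, SigmaPred (fun p : ℕ × α => M p.1 p.2) ∧
      SigmaPred (fun p : ℕ × α => ¬ M p.1 p.2) ∧ ∀ a, R a ↔ ∃ t, M t a := by
  obtain ⟨S, ⟨D, hD, hS⟩, h⟩ := h
  have sigmaPred {E : (ℕ → ℕ) → Prop} (hE : Delta0Rel E) : SigmaPred fun p : ℕ × α =>
      E (consEnv p.1 fun _ => Encodable.encode p.2) := by
    refine ⟨fun w => ∃ t x, w = Nat.pair t x ∧ E (consEnv t fun _ => x),
      .ex (.ex (.and (.pair 2 1 0) (.of_delta0Rel ?_))), fun ⟨t, a⟩ => by simp [Nat.pair_eq_pair]⟩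
    convert hE.rename (fun | 0 => 1 | _ => 0) using 3 with ρ
    funext n; cases n <;> rfl
  exact ⟨_, sigmaPred hD, sigmaPred hD.not, fun a => (h a).trans (hS fun _ => Encodable.encode a)⟩

/-- The sentences `τ(k)` or `¬ τ(k)`, for `k < N`, according to whether `k` belongs to `ε`. -/
def literals (τ : AFml) (ε : ℕ → Prop) (N : ℕ) : Set AFml :=
  {φ | ∃ k < N, ε k ∧ φ = τ.subst0 (numeral k) ∨ ¬ ε k ∧ φ = .neg (τ.subst0 (numeral k))}

theorem sigmaPred_refutes {Γ : Set AFml} (hΓ : SigmaPred fun φ => φ ∈ Γ) :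
    SigmaPred fun p : AFml × ℕ × ℕ =>
      Proves (Γ ∪ literals p.1 (fun k => Nat.beta p.2.2 k = 0) p.2.1) botFml := by
  have h : SigmaPred fun q : (AFml × ℕ × ℕ) × AFml =>
      q.2 ∈ Γ ∪ literals q.1.1 (fun k => Nat.beta q.1.2.2 k = 0) q.1.2.1 := by
    refine .or (hΓ.comp ?_) (.ex (.and (.lt ?_ ?_) (.or (.and (.eq ?_ ?_) (.eq ?_ ?_))
      (.and (.ne ?_ ?_) (.eq ?_ ?_))))) <;> fun_prop
  exact (sigmaPred_proves (Γ := fun p : AFml × ℕ × ℕ =>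
    Γ ∪ literals p.1 (fun k => Nat.beta p.2.2 k = 0) p.2.1) h).comp
      (f := fun p => (p, botFml)) (by fun_prop)

theorem Proves.of_literals {Γ : Set AFml} {τ : AFml} {ε : ℕ → Prop} {N : ℕ} {φ : AFml}
    (hφ : Proves (Γ ∪ literals τ ε N) φ)
    (pos : ∀ k < N, ε k → Proves Γ (τ.subst0 (numeral k)))
    (neg : ∀ k < N, ¬ ε k → Proves Γ (.neg (τ.subst0 (numeral k)))) : Proves Γ φ := by
  refine hφ.of_axioms ?_
  rintro ψ (hψ | ⟨k, hk, ⟨hε, rfl⟩ | ⟨hε, rfl⟩⟩)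
  exacts [.ax hψ, pos k hk hε, neg k hk hε]

theorem SigmaPred.exists_separating_self {R S : AFml × ℕ → Prop} (hR : SigmaPred R)
    (hS : SigmaPred S) (disj : ∀ p, R p → ¬ S p) :
    ∃ τ, IsSigma1 τ ∧ τ.FreeLt 1 ∧ ∀ k, (R (τ, k) → Proves PA (τ.subst0 (numeral k))) ∧
      (S (τ, k) → Proves PA (.neg (τ.subst0 (numeral k)))) := by
  have hf : SigmaFun fun p : AFml × ℕ × ℕ => (p.1.subst0 (numeral 0), p.2.2) := by fun_prop
  obtain ⟨θ, hθ, hfree, h⟩ := (hR.comp hf).exists_separating (hS.comp hf) fun p => disj _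
  have hfree' := hfree.subst0_numeral 0
  refine ⟨(AFml.ex θ).subst0 (numeral 0), .ex (.delta0 (hθ.substAll _)), hfree', fun k => ?_⟩
  rw [AFml.subst0_numeral hfree' k id, AFml.subst0_numeral_inst]
  exact h (consEnv 0 (consEnv k id))

/-- `c` is the least number satisfying `G`. -/
def IsFirst (G : ℕ → Prop) (c : ℕ) : Prop := G c ∧ ∀ d < c, ¬ G d

theorem IsFirst.unique {G : ℕ → Prop} {c d : ℕ} (hc : IsFirst G c) (hd : IsFirst G d) : c = d :=
  le_antisymm (not_lt.1 fun h => hc.2 d h hd.1) (not_lt.1 fun h => hd.2 c h hc.1)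

theorem exists_isFirst {G : ℕ → Prop} {c : ℕ} (h : G c) : ∃ c, IsFirst G c := by
  classical exact ⟨_, Nat.find_spec ⟨c, h⟩, fun _ => Nat.find_min ⟨c, h⟩⟩

/-- A Σ₁ formula `τ` which knows its own Gödel number can react to the least `c`, if any, with
`G c τ`, by deciding `τ(k)` as prescribed by `pos c` and `neg c`; until it comes across such a `c`
it accepts all `k` enumerated by `V`. -/
theorem exists_reactive {G : ℕ → AFml → Prop} {V pos neg : ℕ → ℕ → Prop}
    (hG : SigmaPred fun p : ℕ × AFml => G p.1 p.2)
    (hG' : SigmaPred fun p : ℕ × AFml => ¬ G p.1 p.2) (hV : SigmaPred fun p : ℕ × ℕ => V p.1 p.2)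
    (hpos : SigmaPred fun p : ℕ × ℕ => pos p.1 p.2)
    (hneg : SigmaPred fun p : ℕ × ℕ => neg p.1 p.2) (disj : ∀ c k, pos c k → ¬ neg c k)
    (compat : ∀ c τ u k, G c τ → u ≤ c → V u k → ¬ neg c k) :
    ∃ τ, IsSigma1 τ ∧ τ.FreeLt 1 ∧
      (∀ c, G c τ → ∃ c, G c τ ∧ ∀ k, (pos c k → Proves PA (τ.subst0 (numeral k))) ∧
        (neg c k → Proves PA (.neg (τ.subst0 (numeral k))))) ∧
      ((∀ c, ¬ G c τ) → ∀ u k, V u k → Proves PA (τ.subst0 (numeral k))) := by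
  have hFirst : SigmaPred fun p : ℕ × AFml => IsFirst (G · p.2) p.1 :=
    hG.and (.ball_lt (hG'.comp (f := fun q : (ℕ × AFml) × ℕ => (q.2, q.1.2)) (by fun_prop))
      (by fun_prop))
  let accept (p : AFml × ℕ) : Prop := (∃ u, V u p.2 ∧ ∀ c ≤ u, ¬ G c p.1) ∨
    ∃ c, IsFirst (G · p.1) c ∧ pos c p.2
  let reject (p : AFml × ℕ) : Prop := ∃ c, IsFirst (G · p.1) c ∧ neg c p.2
  have haccept : SigmaPred accept := by
    refine .or (.ex (.and (hV.comp (f := fun q : (AFml × ℕ) × ℕ => (q.2, q.1.2)) ?_)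
      (.ball_le (hG'.comp (f := fun q : ((AFml × ℕ) × ℕ) × ℕ => (q.2, q.1.1.1)) ?_) ?_)))
      (.ex (.and (hFirst.comp (f := fun q : (AFml × ℕ) × ℕ => (q.2, q.1.1)) ?_)
        (hpos.comp (f := fun q : (AFml × ℕ) × ℕ => (q.2, q.1.2)) ?_))) <;> fun_prop
  have hreject : SigmaPred reject := by
    refine .ex (.and (hFirst.comp (f := fun q : (AFml × ℕ) × ℕ => (q.2, q.1.1)) ?_)
      (hneg.comp (f := fun q : (AFml × ℕ) × ℕ => (q.2, q.1.2)) ?_)) <;> fun_prop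
  have accept_disj (p : AFml × ℕ) : accept p → ¬ reject p := by
    rintro (⟨u, hu, hlt⟩ | ⟨c, hc, hp⟩) ⟨d, hd, hn⟩
    · exact compat d _ u _ hd.1 (not_lt.1 fun h => hlt d h.le hd.1) hu hn
    · exact disj c _ hp (hc.unique hd ▸ hn)
  obtain ⟨τ, hτ, hfree, h⟩ := haccept.exists_separating_self hreject accept_disj
  refine ⟨τ, hτ, hfree, fun c hc => ?_, fun hG u k hu => (h k).1 (.inl ⟨u, hu, fun c _ => hG c⟩)⟩
  obtain ⟨c, hc⟩ := exists_isFirst (G := (G · τ)) hc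
  exact ⟨c, hc.1, fun k => ⟨fun hk => (h k).1 (.inr ⟨c, hc, hk⟩), fun hk => (h k).2 ⟨c, hc, hk⟩⟩⟩

/-- The number `c` codes a stage `t`, a length `N` and a pattern `k ↦ Nat.beta s k = 0` such that
`M` accepts `(τ, N, s)` at stage `t`, and the pattern contains every `k < N` which `V` has
enumerated up to stage `c`. -/
def FoundAt (M : ℕ → AFml × ℕ × ℕ → Prop) (V : ℕ → ℕ → Prop) (c : ℕ) (τ : AFml) : Prop :=
  M c.unpair.1 (τ, c.unpair.2.unpair) ∧
    ∀ k < c.unpair.2.unpair.1, (∀ u ≤ c, ¬ V u k) ∨ Nat.beta c.unpair.2.unpair.2 k = 0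

section FoundAt

variable {M : ℕ → AFml × ℕ × ℕ → Prop} {V : ℕ → ℕ → Prop}

theorem sigmaPred_foundAt (hM : SigmaPred fun p : ℕ × AFml × ℕ × ℕ => M p.1 p.2)
    (hV : SigmaPred fun p : ℕ × ℕ => ¬ V p.1 p.2) :
    SigmaPred fun p : ℕ × AFml => FoundAt M V p.1 p.2 := by
  refine (hM.comp (f := fun p : ℕ × AFml => (p.1.unpair.1, p.2, p.1.unpair.2.unpair)) ?_).and
    (.ball_lt (.or (.ball_le (hV.comp (f := fun q : ((ℕ × AFml) × ℕ) × ℕ => (q.2, q.1.2)) ?_) ?_)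
      (.eq ?_ ?_)) ?_) <;> fun_prop

theorem sigmaPred_not_foundAt (hM : SigmaPred fun p : ℕ × AFml × ℕ × ℕ => ¬ M p.1 p.2)
    (hV : SigmaPred fun p : ℕ × ℕ => V p.1 p.2) :
    SigmaPred fun p : ℕ × AFml => ¬ FoundAt M V p.1 p.2 := by
  have hseen : SigmaPred fun q : (ℕ × AFml) × ℕ => ∃ u, u ≤ q.1.1 ∧ V u q.2 := by
    refine .ex (.and (.le ?_ ?_)
      (hV.comp (f := fun q : ((ℕ × AFml) × ℕ) × ℕ => (q.2, q.1.2)) ?_)) <;> fun_prop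
  have hfail : SigmaPred fun p : ℕ × AFml => ∃ k, k < p.1.unpair.2.unpair.1 ∧
      (∃ u, u ≤ p.1 ∧ V u k) ∧ Nat.beta p.1.unpair.2.unpair.2 k ≠ 0 := by
    refine .ex (.and (.lt ?_ ?_) (hseen.and (.ne ?_ ?_))) <;> fun_prop
  refine ((hM.comp (f := fun p : ℕ × AFml => (p.1.unpair.1, p.2, p.1.unpair.2.unpair))
    (by fun_prop)).or hfail).congr fun p => ?_
  simp only [FoundAt, not_and_or, not_forall, not_or, not_not, exists_prop, ne_eq]

end FoundAt

/-- For every finite pattern that is compatible with the Σ₁ set `W`, the literals prescribed by the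
pattern are consistent with `Γ`: otherwise `τ` would come across a refutation of such literals and
would make them provable. -/
theorem exists_consistent_literals {Γ : Set AFml} (hΓ : SigmaPred fun φ => φ ∈ Γ) (hPA : PA ⊆ Γ)
    (hcons : ¬ Proves Γ botFml) {W : ℕ → Prop} (hW : SigmaPred W) :
    ∃ τ, IsSigma1 τ ∧ τ.FreeLt 1 ∧ (∀ k, W k → Proves PA (τ.subst0 (numeral k))) ∧
      ∀ ε : ℕ → Prop, (∀ k, W k → ε k) → ∀ N, ¬ Proves (Γ ∪ literals τ ε N) botFml := by
  obtain ⟨M, hM, hM', refutes_iff⟩ := (sigmaPred_refutes hΓ).exists_stage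
  obtain ⟨V, hV, hV', W_iff⟩ := hW.exists_stage
  let pos (c k : ℕ) : Prop := k < c.unpair.2.unpair.1 ∧ Nat.beta c.unpair.2.unpair.2 k = 0
  let neg (c k : ℕ) : Prop := k < c.unpair.2.unpair.1 ∧ Nat.beta c.unpair.2.unpair.2 k ≠ 0
  have hpos : SigmaPred fun p : ℕ × ℕ => pos p.1 p.2 := by
    refine .and (.lt ?_ ?_) (.eq ?_ ?_) <;> fun_prop
  have hneg : SigmaPred fun p : ℕ × ℕ => neg p.1 p.2 := by
    refine .and (.lt ?_ ?_) (.ne ?_ ?_) <;> fun_prop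
  obtain ⟨τ, hτ, hfree, react, accept⟩ := exists_reactive (sigmaPred_foundAt hM hV')
    (sigmaPred_not_foundAt hM' hV) hV hpos hneg (fun _ _ hp hn => hn.2 hp.2)
    fun c τ u k hc hu hV hn => (hc.2 k hn.1).elim (fun h => h u hu hV) hn.2
  have not_foundAt (c : ℕ) : ¬ FoundAt M V c τ := fun hc => by
    obtain ⟨c, hc, h⟩ := react c hc
    exact hcons (((refutes_iff _).2 ⟨_, hc.1⟩).of_literals
      (fun k hk hp => ((h k).1 ⟨hk, hp⟩).mono hPA) fun k hk hp => ((h k).2 ⟨hk, hp⟩).mono hPA)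
  refine ⟨τ, hτ, hfree, fun k hk => ?_, fun ε hε N hN => ?_⟩
  · obtain ⟨u, hu⟩ := (W_iff k).1 hk
    exact accept not_foundAt u k hu
  classical
  obtain ⟨s, hs⟩ := exists_beta_eq (fun k => if ε k then 0 else 1) N
  have hs {k : ℕ} (hk : k < N) : Nat.beta s k = 0 ↔ ε k := by simp [hs k hk]
  have literals_eq : literals τ (fun k => Nat.beta s k = 0) N = literals τ ε N := by
    refine Set.ext fun φ => exists_congr fun k => and_congr_right fun hk => ?_
    simp only [hs hk]
  obtain ⟨t, ht⟩ := (refutes_iff (τ, N, s)).1 (literals_eq ▸ hN)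
  refine not_foundAt (Nat.pair t (Nat.pair N s)) ?_
  simp only [FoundAt, Nat.unpair_pair]
  exact ⟨ht, fun k hk => or_iff_not_imp_right.2 fun hk' u _ hu =>
    hk' ((hs hk).2 (hε k ((W_iff k).2 ⟨u, hu⟩)))⟩

theorem Proves.exists_of_iUnion {Γ : ℕ → Set AFml} (hΓ : Monotone Γ) {φ : AFml}
    (h : Proves (⋃ n, Γ n) φ) : ∃ n, Proves (Γ n) φ := by
  induction h with
  | ax h => exact (Set.mem_iUnion.1 h).imp fun _ => .ax
  | mp _ _ ih₁ ih₂ =>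
    obtain ⟨⟨i, hi⟩, ⟨j, hj⟩⟩ := ih₁, ih₂
    exact ⟨max i j, .mp (hi.mono (hΓ (le_max_left i j))) (hj.mono (hΓ (le_max_right i j)))⟩
  | gen _ ih => exact ih.imp fun _ => .gen
  | taut h => exact ⟨0, .taut h⟩
  | allE φ t => exact ⟨0, .allE φ t⟩
  | exI φ t => exact ⟨0, .exI φ t⟩
  | allImp φ ψ => exact ⟨0, .allImp φ ψ⟩
  | vacAll φ => exact ⟨0, .vacAll φ⟩
  | exDef φ => exact ⟨0, .exDef φ⟩
  | eqRefl t => exact ⟨0, .eqRefl t⟩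
  | eqSubst φ t s => exact ⟨0, .eqSubst φ t s⟩

/-- `τ` is a flexible formula over the set `W`, relative to the theory `Γ`: the instances of `τ` at
elements of `W` are provable, and apart from that they are independent of each other over `Γ`. -/
structure IsFlexible (Γ : Set AFml) (W : ℕ → Prop) (τ : AFml) : Prop where
  provable : ∀ k, W k → Proves PA (τ.subst0 (numeral k))
  exists_propModel : ∀ ε : ℕ → Prop, (∀ k, W k → ε k) →
    ∃ v, IsPropModel Γ v ∧ ∀ k, (τ.subst0 (numeral k)).evalProp v ↔ ε k

theorem exists_isFlexible {Γ : Set AFml} (hΓ : SigmaPred fun φ => φ ∈ Γ) (hPA : PA ⊆ Γ)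
    (hcons : ¬ Proves Γ botFml) {W : ℕ → Prop} (hW : SigmaPred W) :
    ∃ τ : AFml, IsSigma1 τ ∧ τ.FreeLt 1 ∧ IsFlexible Γ W τ := by
  obtain ⟨τ, hτ, hfree, hpos, hcons⟩ := exists_consistent_literals hΓ hPA hcons hW
  refine ⟨τ, hτ, hfree, hpos, fun ε hε => ?_⟩
  have hmono : Monotone fun N => Γ ∪ literals τ ε N := fun M N h =>
    Set.union_subset_union_right _ fun φ ⟨k, hk, hφ⟩ => ⟨k, hk.trans_le h, hφ⟩
  have hcons' : ¬ Proves (⋃ N, Γ ∪ literals τ ε N) botFml := fun h =>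
    (Proves.exists_of_iUnion hmono h).elim (hcons ε hε)
  obtain ⟨v, hv⟩ : ∃ v, IsPropModel (⋃ N, Γ ∪ literals τ ε N) v := by
    by_contra! h
    exact hcons' (.of_forall_propModel fun v hv => (h v hv).elim)
  have holds {k : ℕ} {φ : AFml} (hφ : φ ∈ literals τ ε (k + 1)) : φ.evalProp v :=
    hv (.ax (Set.mem_iUnion.2 ⟨k + 1, .inr hφ⟩))
  refine ⟨v, fun φ hφ => hv (hφ.mono fun ψ hψ => Set.mem_iUnion.2 ⟨0, .inl hψ⟩), fun k => ?_⟩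
  by_cases hk : ε k
  · exact iff_of_true (holds ⟨k, k.lt_succ_self, .inl ⟨hk, rfl⟩⟩) hk
  · exact iff_of_false (holds ⟨k, k.lt_succ_self, .inr ⟨hk, rfl⟩⟩) hk

theorem IsFlexible.subst0_numeral_ne {Γ : Set AFml} {W : ℕ → Prop} {τ : AFml}
    (h : IsFlexible Γ W τ) {i j : ℕ} (hj : ¬ W j) (hij : i ≠ j) :
    τ.subst0 (numeral i) ≠ τ.subst0 (numeral j) := fun heq => by
  obtain ⟨v, -, hv⟩ := h.exists_propModel (· ≠ j) fun k hk hkj => hj (hkj ▸ hk)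
  exact (hv j).1 (heq ▸ (hv i).2 hij) rfl

/-! ### The provability predicate -/

/-- The relation along which a provability predicate spreads: `x` lies a multiple of `d` steps
behind `z` in the orbit of `z` under `g`, where a nonzero number of steps is allowed only if `z` is
an `(n - 1)`-fold value of `g`. -/
def Reaches (g : ℕ → ℕ) (d n z x : ℕ) : Prop :=
  ∃ k, g^[d * k] z = x ∧ (k = 0 ∨ ∃ y, g^[n - 1] y = z)

section Reaches

variable {g : ℕ → ℕ} {d n z x : ℕ}

theorem reaches_refl (z : ℕ) : Reaches g d n z z := ⟨0, rfl, .inl rfl⟩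

theorem add_le_iterate (hg : ∀ y, y < g y) (j z : ℕ) : z + j ≤ g^[j] z := by
  induction j with
  | zero => exact le_rfl
  | succ j ih =>
    rw [Function.iterate_succ_apply']
    exact ih.trans_lt (hg _)

theorem le_iterate (hg : ∀ y, y < g y) (j z : ℕ) : z ≤ g^[j] z :=
  (Nat.le_add_right z j).trans (add_le_iterate hg j z)

theorem Reaches.le (hg : ∀ y, y < g y) (h : Reaches g d n z x) : z ≤ x := by
  obtain ⟨k, rfl, -⟩ := h
  exact le_iterate hg _ _

theorem reaches_iff_of_lt (hg : ∀ y, y < g y) (hd : 1 ≤ d) : Reaches g d n z x ↔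
    ∃ k ≤ x, g^[d * k] z = x ∧ (k = 0 ∨ ∃ y ≤ z, g^[n - 1] y = z) := by
  have bound_k {k : ℕ} (h : g^[d * k] z = x) : k ≤ x := calc
    k ≤ z + d * k := (Nat.le_mul_of_pos_left k hd).trans (Nat.le_add_left _ _)
    _ ≤ x := h ▸ add_le_iterate hg _ _
  have bound_y {y : ℕ} (h : g^[n - 1] y = z) : y ≤ z := h ▸ le_iterate hg _ _
  refine exists_congr fun k => ⟨fun ⟨hx, h⟩ => ⟨bound_k hx, hx, ?_⟩, fun ⟨_, hx, h⟩ => ⟨hx, ?_⟩⟩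
  · exact h.imp_right fun ⟨y, hy⟩ => ⟨y, bound_y hy, hy⟩
  · exact h.imp_right fun ⟨y, _, hy⟩ => ⟨y, hy⟩

theorem Reaches.iterate_add {c : ℕ} (h : Reaches g d n z (g^[n - 1] c)) :
    Reaches g d n z (g^[d + (n - 1)] c) := by
  obtain ⟨k, hk, hk'⟩ := h
  refine ⟨k + 1, ?_, .inr ?_⟩
  · rw [mul_add_one, add_comm, Function.iterate_add_apply, hk, ← Function.iterate_add_apply]
  · obtain rfl | h := hk'
    · exact ⟨c, hk.symm⟩
    · exact h

variable {α : Type*} [Encodable α] [Sigma1Range α] {g : α → ℕ → ℕ}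

theorem sigmaPred_reaches (hg : SigmaFun fun p : α × ℕ => g p.1 p.2) (d n : ℕ) :
    SigmaPred fun p : α × ℕ × ℕ => Reaches (g p.1) d n p.2.1 p.2.2 := by
  have hiter := SigmaFun.iterate_param hg
  refine .ex (.and (.eq (hiter.comp
    (f := fun q : (α × ℕ × ℕ) × ℕ => (q.1.1, d * q.2, q.1.2.1)) ?_) ?_) (.or (.eq ?_ ?_)
    (.ex (.eq (hiter.comp
      (f := fun q : ((α × ℕ × ℕ) × ℕ) × ℕ => (q.1.1.1, n - 1, q.2)) ?_) ?_)))) <;> fun_prop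

theorem sigmaPred_not_reaches (hg : SigmaFun fun p : α × ℕ => g p.1 p.2)
    (hlt : ∀ a y, y < g a y) (hd : 1 ≤ d) (n : ℕ) :
    SigmaPred fun p : α × ℕ × ℕ => ¬ Reaches (g p.1) d n p.2.1 p.2.2 := by
  have hiter := SigmaFun.iterate_param hg
  have not_iterate : SigmaPred fun q : (α × ℕ × ℕ) × ℕ =>
      ∀ y ≤ q.1.2.1, (g q.1.1)^[n - 1] y ≠ q.1.2.1 := by
    have h : SigmaFun fun r : ((α × ℕ × ℕ) × ℕ) × ℕ => (g r.1.1.1)^[n - 1] r.2 :=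
      hiter.comp (f := fun r : ((α × ℕ × ℕ) × ℕ) × ℕ => (r.1.1.1, n - 1, r.2)) (by fun_prop)
    have hne : SigmaPred fun r : ((α × ℕ × ℕ) × ℕ) × ℕ =>
        (g r.1.1.1)^[n - 1] r.2 ≠ r.1.1.2.1 := .ne h (by fun_prop)
    exact .ball_le hne (by fun_prop)
  have h : SigmaPred fun p : α × ℕ × ℕ => ∀ k ≤ p.2.2, (g p.1)^[d * k] p.2.1 ≠ p.2.2 ∨
      k ≠ 0 ∧ ∀ y ≤ p.2.1, (g p.1)^[n - 1] y ≠ p.2.1 := by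
    have h : SigmaFun fun q : (α × ℕ × ℕ) × ℕ => (g q.1.1)^[d * q.2] q.1.2.1 :=
      hiter.comp (f := fun q : (α × ℕ × ℕ) × ℕ => (q.1.1, d * q.2, q.1.2.1)) (by fun_prop)
    have hor : SigmaPred fun q : (α × ℕ × ℕ) × ℕ => (g q.1.1)^[d * q.2] q.1.2.1 ≠ q.1.2.2 ∨
        q.2 ≠ 0 ∧ ∀ y ≤ q.1.2.1, (g q.1.1)^[n - 1] y ≠ q.1.2.1 := by
      refine .or (.ne h ?_) (.and (.ne ?_ ?_) not_iterate) <;> fun_prop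
    exact .ball_le hor (by fun_prop)
  refine h.congr fun p => ?_
  rw [reaches_iff_of_lt (hlt p.1) hd]
  push Not
  simp only [imp_iff_not_or, ne_eq]

end Reaches

theorem le_code_numeral (x : ℕ) : x ≤ (numeral x).code := by
  induction x with
  | zero => exact Nat.zero_le _
  | succ x ih => calc
      x + 1 ≤ 2 + (numeral x).code := by omega
      _ ≤ (numeral (x + 1)).code := Nat.add_le_pair 2 _

/-- The map `x ↦ ⌜P(x̄)⌝`. -/
def AFml.instCode (P : AFml) (x : ℕ) : ℕ := (P.subst0 (numeral x)).code

theorem sigmaFun_instCode : SigmaFun fun p : AFml × ℕ => p.1.instCode p.2 := by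
  have h : SigmaFun fun p : AFml × ℕ => Encodable.encode (p.1.subst0 (numeral p.2)) := by fun_prop
  exact h

/-- The formula `∃ z ≤ x, σ(z, x) ∧ τ(z)`. -/
def boundedEx (σ τ : AFml) : AFml :=
  .ex (.and (.le (.var 0) ((ATerm.var 0).lift 0)) (.and σ τ))

theorem boundedEx_subst0_numeral (σ τ : AFml) (x : ℕ) : ∃ φ,
    (boundedEx σ τ).subst0 (numeral x) = .ex (.and (.le (.var 0) (numeral x)) φ) :=
  ⟨(AFml.and σ τ).substAll (liftSub (subst0Env (numeral x))),
    congrArg (fun t => AFml.ex (.and (.le (.var 0) t) _)) (lift_numeral x 0)⟩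

theorem lt_instCode_boundedEx (σ τ : AFml) (x : ℕ) : x < (boundedEx σ τ).instCode x := by
  obtain ⟨φ, hφ⟩ := boundedEx_subst0_numeral σ τ x
  rw [AFml.instCode, hφ]
  calc x ≤ (numeral x).code := le_code_numeral x
    _ ≤ Nat.pair (ATerm.var 0).code (numeral x).code := Nat.right_le_pair _ _
    _ ≤ (AFml.le (.var 0) (numeral x)).code := Nat.right_le_pair _ _
    _ ≤ Nat.pair (AFml.le (.var 0) (numeral x)).code φ.code := Nat.left_le_pair _ _
    _ ≤ (AFml.and (.le (.var 0) (numeral x)) φ).code := Nat.right_le_pair _ _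
    _ < 7 + (AFml.and (.le (.var 0) (numeral x)) φ).code := Nat.lt_add_of_pos_left (by norm_num)
    _ ≤ (AFml.ex (.and (.le (.var 0) (numeral x)) φ)).code := Nat.add_le_pair _ _

theorem instCode_boundedEx_injective (σ τ : AFml) :
    Function.Injective (boundedEx σ τ).instCode := fun x y h => by
  obtain ⟨φ, hφ⟩ := boundedEx_subst0_numeral σ τ x
  obtain ⟨ψ, hψ⟩ := boundedEx_subst0_numeral σ τ y
  have h := AFml.code_injective h
  rw [hφ, hψ] at h
  injection h with h
  injection h with h
  injection h with _ h
  exact numeral_injective h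

theorem IsPropModel.evalProp_boundedEx {v : AFml → Prop} (hv : IsPropModel PA v) {σ τ : AFml}
    (hfree : (boundedEx σ τ).FreeLt 1) (hτ : τ.FreeLt 1) (x : ℕ) :
    ((boundedEx σ τ).subst0 (numeral x)).evalProp v ↔
      ∃ z ≤ x, (σ.inst (consEnv z (consEnv x id))).evalProp v ∧
        (τ.subst0 (numeral z)).evalProp v := by
  simp only [AFml.subst0_numeral hfree x id, AFml.subst0_numeral hτ _ (consEnv x id)]
  exact hv.evalProp_ex_le_and

/-- Provably in `PA`, `P(x)` holds if and only if `τ(z)` does for some `z` from which `x` can be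
reached along the map `y ↦ ⌜P(ȳ)⌝`. Provability is expressed by truth in all propositional models,
which leaves the quantification over `z` in the metatheory. -/
def Spreads (τ P : AFml) (d n : ℕ) : Prop :=
  ∀ ⦃v⦄, IsPropModel PA v → ∀ x, (P.subst0 (numeral x)).evalProp v ↔
    ∃ z, Reaches P.instCode d n z x ∧ (τ.subst0 (numeral z)).evalProp v

theorem exists_spreads {τ : AFml} (hτ : IsSigma1 τ) (hfree : τ.FreeLt 1) {d : ℕ} (hd : 1 ≤ d)
    (n : ℕ) : ∃ Q : AFml, IsSigma1 (.ex Q) ∧ (AFml.ex Q).FreeLt 1 ∧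
      Function.Injective (AFml.ex Q).instCode ∧ Spreads τ (.ex Q) d n := by
  have hg : SigmaFun fun p : AFml × ℕ => (boundedEx p.1 τ).instCode p.2 := by
    refine sigmaFun_instCode.comp (f := fun p : AFml × ℕ => (boundedEx p.1 τ, p.2)) ?_
    unfold boundedEx
    fun_prop
  have hlt (σ : AFml) := lt_instCode_boundedEx σ τ
  obtain ⟨θ, hθ, hθfree, h⟩ :=
    (sigmaPred_reaches (g := fun σ => (boundedEx σ τ).instCode) hg d n).exists_separating
      (sigmaPred_not_reaches hg hlt hd n) fun p hp hn => hn hp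
  have hPfree : (boundedEx (.ex θ) τ).FreeLt 1 :=
    ⟨⟨by simp [ATerm.FreeLt], by simp [ATerm.FreeLt, ATerm.lift]⟩, hθfree, hfree.mono (by norm_num)⟩
  have hP : IsSigma1 (boundedEx (.ex θ) τ) :=
    .ex (.and (.delta0 (.le _ _)) (.and (.ex (.delta0 hθ)) hτ))
  refine ⟨_, hP, hPfree, instCode_boundedEx_injective _ τ, fun v hv x =>
    (hv.evalProp_boundedEx hPfree hfree x).trans (exists_congr fun z => ?_)⟩
  have h := h (consEnv z (consEnv x id))
  change _ ↔ Reaches (boundedEx (.ex θ) τ).instCode d n z x ∧ _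
  by_cases hzx : Reaches (boundedEx (.ex θ) τ).instCode d n z x
  · simp only [hzx, hzx.le (hlt _), hv (h.1 hzx), true_and]
  · simp only [hzx, false_and, iff_false]
    exact fun hz => hv (h.2 hzx) hz.2.1

/-! ### Modal logic -/

section Modal

variable {m n : ℕ} {A : MFml}

theorem boxIter_add (j k : ℕ) (A : MFml) : boxIter (j + k) A = boxIter j (boxIter k A) := by
  induction j with
  | zero => rw [Nat.zero_add, boxIter]
  | succ j ih => rw [Nat.succ_add, boxIter, ih, boxIter]

theorem NAProves.nec_iter (h : NAProves m n A) (k : ℕ) : NAProves m n (boxIter k A) := by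
  induction k with
  | zero => exact h
  | succ k ih => exact .nec ih

theorem MFml.evalTC_eventually (U : Ultrafilter (MFml → Prop)) (A : MFml) :
    A.evalTC (fun B => ∀ᶠ v : MFml → Prop in U, v B) ↔ ∀ᶠ v in U, A.evalTC v := by
  induction A with
  | bot => exact ⟨False.elim, fun h => h.exists.elim fun _ => id⟩
  | neg A ih => exact (not_congr ih).trans Ultrafilter.eventually_not.symm
  | and A B ih₁ ih₂ => exact (and_congr ih₁ ih₂).trans Filter.eventually_and.symm
  | or A B ih₁ ih₂ => exact (or_congr ih₁ ih₂).trans Ultrafilter.eventually_or.symm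
  | imp A B ih₁ ih₂ => exact (imp_congr ih₁ ih₂).trans Ultrafilter.eventually_imp.symm
  | var | box => exact Iff.rfl

theorem NAProves.exists_evalTC_of_not (hA : ¬ NAProves m n A) :
    ∃ v, (∀ B, NAProves m n B → B.evalTC v) ∧ ¬ A.evalTC v := by
  obtain ⟨U, hthm, hU⟩ := exists_ultrafilter_eventually_of_not_provable
    (eval := fun v A => MFml.evalTC v A) (conj := .and) (fun _ _ _ => Iff.rfl)
    ⟨.imp A A, .taut fun _ h => h⟩
    (fun B C D hB hC h => .mp (.mp (.taut (A := .imp B (.imp C D)) h) hB) hC) hA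
  refine ⟨fun B => ∀ᶠ v : MFml → Prop in U, v B,
    fun B hB => (B.evalTC_eventually U).2 (hthm B hB), ?_⟩
  rw [MFml.evalTC_eventually]
  exact Ultrafilter.eventually_not.1 hU

theorem evalTC_boxIter_add {d : ℕ} {v : MFml → Prop}
    (hv : ∀ B, NAProves (d + n) n B → B.evalTC v) (k : ℕ) (h : (boxIter n A).evalTC v) :
    (boxIter (d * k + n) A).evalTC v := by
  induction k with
  | zero => rwa [mul_zero, Nat.zero_add]
  | succ k ih =>
    rw [mul_add_one, show d * k + d + n = d + n + d * k by ring, boxIter_add]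
    refine hv _ (.acc _) ?_
    rwa [← boxIter_add, add_comm]

theorem NAProves.evalTC_true (hm : 1 ≤ m) (h : NAProves m n A) : A.evalTC fun _ => True := by
  induction h with
  | taut h => exact h _
  | acc A =>
    obtain ⟨m, rfl⟩ := Nat.exists_eq_add_of_le' hm
    exact fun _ => trivial
  | mp _ _ ih₁ ih₂ => exact ih₁ ih₂
  | nec => trivial
  | ros _ ih => exact absurd trivial ih

theorem not_naProves_neg_box (hm : 1 ≤ m) : ¬ NAProves m n (.neg (.box A)) :=
  fun h => h.evalTC_true hm trivial

theorem MFml.evalTC_congr {v w : MFml → Prop} (hvar : ∀ i, v (.var i) ↔ w (.var i))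
    (hbox : ∀ B, IsSub (.box B) A → (v (.box B) ↔ w (.box B))) : A.evalTC v ↔ A.evalTC w := by
  induction A with
  | var i => exact hvar i
  | bot => exact Iff.rfl
  | neg A ih => exact not_congr (ih fun B hB => hbox B hB.neg)
  | and A C ih₁ ih₂ =>
    exact and_congr (ih₁ fun B hB => hbox B hB.andL) (ih₂ fun B hB => hbox B hB.andR)
  | or A C ih₁ ih₂ =>
    exact or_congr (ih₁ fun B hB => hbox B hB.orL) (ih₂ fun B hB => hbox B hB.orR)
  | imp A C ih₁ ih₂ =>
    exact imp_congr (ih₁ fun B hB => hbox B hB.impL) (ih₂ fun B hB => hbox B hB.impR)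
  | box A => exact hbox A (.refl _)

theorem IsSub.sizeOf_le {B : MFml} (h : IsSub B A) : sizeOf B ≤ sizeOf A := by
  induction h with
  | refl => exact le_rfl
  | _ => simp only [MFml.neg.sizeOf_spec, MFml.and.sizeOf_spec, MFml.or.sizeOf_spec,
      MFml.imp.sizeOf_spec, MFml.box.sizeOf_spec]; omega

theorem isSub_boxIter (k : ℕ) (A : MFml) : IsSub A (boxIter k A) := by
  induction k with
  | zero => exact .refl _
  | succ k ih => exact .box ih

end Modal

/-! ### Soundness -/

section Soundness

variable {Γ : Set AFml} {τ P : AFml} {f : MFml → AFml} {d n : ℕ}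

theorem IsInterp.evalProp_iff (hf : IsInterp P f) {v : AFml → Prop} (hv : IsPropModel PA v)
    (A : MFml) : (f A).evalProp v ↔ A.evalTC fun B => (f B).evalProp v := by
  have not_bot : ¬ v botFml := fun h => absurd (hv.numeral_eq (a := 0) (b := 1) |>.1 h) (by simp)
  obtain ⟨-, bot, neg, and, or, imp, -⟩ := hf
  induction A with
  | bot => rw [bot]; exact iff_of_false not_bot id
  | neg A ih => rw [neg]; exact not_congr ih
  | and A B ih₁ ih₂ => rw [and]; exact and_congr ih₁ ih₂
  | or A B ih₁ ih₂ => rw [or]; exact or_congr ih₁ ih₂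
  | imp A B ih₁ ih₂ => rw [imp]; exact imp_congr ih₁ ih₂
  | var | box => exact Iff.rfl

theorem IsInterp.map_box (hf : IsInterp P f) (A : MFml) :
    f (.box A) = P.subst0 (numeral (f A).code) :=
  hf.2.2.2.2.2.2 A

theorem IsInterp.code_boxIter (hf : IsInterp P f) (k : ℕ) (A : MFml) :
    (f (boxIter k A)).code = P.instCode^[k] (f A).code := by
  induction k with
  | zero => rfl
  | succ k ih => rw [Function.iterate_succ_apply', ← ih, boxIter, hf.map_box, AFml.instCode]

/-- `k` is the code of a theorem of `Γ`. -/
def IsTheoremCode (Γ : Set AFml) (k : ℕ) : Prop := ∃ φ : AFml, φ.code = k ∧ Proves Γ φ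

theorem isTheoremCode_code {φ : AFml} : IsTheoremCode Γ φ.code ↔ Proves Γ φ :=
  ⟨fun ⟨_, h, hφ⟩ => AFml.code_injective h ▸ hφ, fun h => ⟨φ, rfl, h⟩⟩

theorem sigmaPred_isTheoremCode (hΓ : SigmaPred fun φ => φ ∈ Γ) : SigmaPred (IsTheoremCode Γ) := by
  have hproves := sigmaPred_proves (ι := ℕ) (Γ := fun _ => Γ) (hΓ.comp .snd)
  exact .ex (.and (.eq (f := fun p : ℕ × AFml => Encodable.encode p.2) (by fun_prop) .fst) hproves)

theorem Spreads.provable (hP : Spreads τ P d n) (hτ : IsFlexible Γ (IsTheoremCode Γ) τ) {φ : AFml}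
    (hφ : Proves Γ φ) : Proves PA (P.appNum φ) :=
  .of_forall_propModel fun _ hv =>
    (hP hv φ.code).2 ⟨_, reaches_refl _, hv (hτ.provable _ ⟨φ, rfl, hφ⟩)⟩

theorem Spreads.isProvPred (hP : Spreads τ P d n) (hfree : P.FreeLt 1) (hPA : PA ⊆ Γ)
    (hτ : IsFlexible Γ (IsTheoremCode Γ) τ) : IsProvPred Γ P := by
  refine ⟨hfree, fun φ => ⟨hP.provable hτ, fun h => ?_⟩⟩
  obtain ⟨v, hv, hvτ⟩ := hτ.exists_propModel (IsTheoremCode Γ) fun _ => id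
  have hvPA : IsPropModel PA v := fun _ hψ => hv (hψ.mono hPA)
  obtain ⟨z, ⟨k, hk, -⟩, hz⟩ := (hP hvPA φ.code).1 (hvPA h)
  have iterate (j : ℕ) : IsTheoremCode Γ (P.instCode^[j] z) := by
    induction j with
    | zero => exact (hvτ z).1 hz
    | succ j ih =>
      obtain ⟨ψ, hψ, hΓψ⟩ := ih
      rw [Function.iterate_succ_apply', ← hψ]
      exact isTheoremCode_code.2 ((hP.provable hτ hΓψ).mono hPA)
  exact isTheoremCode_code.1 (hk ▸ iterate _)

theorem Spreads.evalProp_acc (hP : Spreads τ P d n) (hn : 1 ≤ n) (hf : IsInterp P f)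
    {v : AFml → Prop} (hv : IsPropModel PA v) {A : MFml} (h : (f (boxIter n A)).evalProp v) :
    (f (boxIter (d + n) A)).evalProp v := by
  obtain ⟨n, rfl⟩ := Nat.exists_eq_add_of_le' hn
  rw [boxIter, hf.map_box, hP hv, hf.code_boxIter] at h
  rw [← add_assoc, boxIter, hf.map_box, hP hv, hf.code_boxIter]
  exact h.imp fun z hz => ⟨hz.1.iterate_add, hz.2⟩

theorem Spreads.proves_of_naProves (hP : Spreads τ P d n) (hn : 1 ≤ n) (hPA : PA ⊆ Γ)
    (hτ : IsFlexible Γ (IsTheoremCode Γ) τ) (hf : IsInterp P f) {A : MFml}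
    (h : NAProves (d + n) n A) : Proves Γ (f A) := by
  have of_models {B : MFml} (hB : ∀ v, IsPropModel PA v → (f B).evalProp v) : Proves Γ (f B) :=
    (Proves.of_forall_propModel hB).mono hPA
  induction h with
  | taut h => exact of_models fun v hv => (hf.evalProp_iff hv _).2 (h _)
  | acc A =>
    refine of_models fun v hv => (hf.evalProp_iff hv _).2 fun h => ?_
    rw [← hf.evalProp_iff hv] at h ⊢
    exact hP.evalProp_acc hn hf hv h
  | @mp A B _ _ ih₁ ih₂ =>
    rw [hf.2.2.2.2.2.1] at ih₁
    exact .mp ih₁ ih₂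
  | nec _ ih =>
    rw [hf.map_box]
    exact (hP.provable hτ ih).mono hPA
  | ros h => exact absurd h (not_naProves_neg_box (by omega))

end Soundness

/-! ### Completeness -/

/-- The interpretation based on `P` that sends the `i`-th variable to a statement equivalent to
`τ(⟨8, i⟩)`. The number `⟨8, i⟩` is not the code of a formula, and the vacuous quantifier makes the
image of a variable syntactically different from the image of any other modal formula. -/
def exactInterp (τ P : AFml) : MFml → AFml
  | .var i => .all (τ.subst0 (numeral (Nat.pair 8 i)))
  | .bot => botFml
  | .neg A => .neg (exactInterp τ P A)
  | .and A B => .and (exactInterp τ P A) (exactInterp τ P B)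
  | .or A B => .or (exactInterp τ P A) (exactInterp τ P B)
  | .imp A B => .imp (exactInterp τ P A) (exactInterp τ P B)
  | .box A => P.appNum (exactInterp τ P A)

/-- Given a valuation `v` of the modal language, a truth value for each sentence `τ(z)` that makes
`exactInterp` turn truth in a model of arithmetic into truth under `v`. -/
def ExactTruth (Γ : Set AFml) (f : MFml → AFml) (v : MFml → Prop) (z : ℕ) : Prop :=
  IsTheoremCode Γ z ∨ (∃ B, (f B).code = z ∧ v (.box B)) ∨ ∃ i, Nat.pair 8 i = z ∧ v (.var i)

theorem AFml.code_ne_pair_eight (φ : AFml) (i : ℕ) : φ.code ≠ Nat.pair 8 i := by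
  cases φ <;> simp [AFml.code, Nat.pair_eq_pair]

theorem not_isTheoremCode_pair_eight (Γ : Set AFml) (i : ℕ) : ¬ IsTheoremCode Γ (Nat.pair 8 i) :=
  fun ⟨φ, h, _⟩ => φ.code_ne_pair_eight i h

theorem IsPropModel.evalProp_all_iff {v : AFml → Prop} (hv : IsPropModel PA v) {φ : AFml}
    (hφ : φ.FreeLt 0) : (AFml.all φ).evalProp v ↔ φ.evalProp v := by
  have lift_eq : φ.lift 0 = φ := by rw [AFml.lift_eq_substAll, AFml.substAll_of_freeLt_zero hφ]
  constructor
  · have h := hv (.allE φ .zero)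
    rwa [AFml.subst0, AFml.substAll_of_freeLt_zero hφ] at h
  · have h := hv (.vacAll φ)
    rwa [lift_eq] at h

section Completeness

variable {Γ : Set AFml} {τ Q : AFml} {d n : ℕ}

theorem isInterp_exactInterp (hfree : τ.FreeLt 1) (P : AFml) : IsInterp P (exactInterp τ P) :=
  ⟨fun _ => (hfree.subst0_numeral _).mono (Nat.zero_le _), rfl, fun _ => rfl,
    fun _ _ => rfl, fun _ _ => rfl, fun _ _ => rfl, fun _ => rfl⟩

theorem exactInterp_injective (hQ : Function.Injective (AFml.ex Q).instCode)
    (hτ : IsFlexible Γ (IsTheoremCode Γ) τ) : Function.Injective (exactInterp τ (.ex Q)) := by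
  intro A B h
  induction A generalizing B <;> cases B
  case var.var i j =>
    by_contra hij
    exact hτ.subst0_numeral_ne (not_isTheoremCode_pair_eight Γ j)
      (fun hp => hij (by rw [(Nat.pair_eq_pair.1 hp).2])) (AFml.all.inj h)
  case bot.bot => rfl
  case neg.neg ih _ => rw [ih (AFml.neg.inj h)]
  case and.and ih₁ ih₂ _ _ => rw [ih₁ (AFml.and.inj h).1, ih₂ (AFml.and.inj h).2]
  case or.or ih₁ ih₂ _ _ => rw [ih₁ (AFml.or.inj h).1, ih₂ (AFml.or.inj h).2]
  case imp.imp ih₁ ih₂ _ _ => rw [ih₁ (AFml.imp.inj h).1, ih₂ (AFml.imp.inj h).2]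
  case box.box ih _ => rw [ih (AFml.code_injective (hQ (congrArg AFml.code h)))]
  all_goals nomatch h

theorem exists_eq_boxIter_of_code_eq (hQ : Function.Injective (AFml.ex Q).instCode) {j z : ℕ}
    {A : MFml} (h : (exactInterp τ (.ex Q) A).code = (AFml.ex Q).instCode^[j] z) :
    ∃ B, A = boxIter j B ∧ (exactInterp τ (.ex Q) B).code = z := by
  induction j generalizing A with
  | zero => exact ⟨A, rfl, h⟩
  | succ j ih =>
    rw [Function.iterate_succ_apply'] at h
    cases A with
    | box A =>
      obtain ⟨B, rfl, hB⟩ := ih (hQ h)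
      exact ⟨B, rfl, hB⟩
    | _ => nomatch AFml.code_injective h

theorem evalTC_box_of_reaches (hn : 1 ≤ n) (hQ : Function.Injective (AFml.ex Q).instCode)
    (hτ : IsFlexible Γ (IsTheoremCode Γ) τ) {v : MFml → Prop}
    (hv : ∀ B, NAProves (d + n) n B → B.evalTC v) {B : MFml}
    (ih : ∀ C, IsSub C B → Proves Γ (exactInterp τ (.ex Q) C) → NAProves (d + n) n C) {z : ℕ}
    (hz : Reaches (AFml.ex Q).instCode d n z (exactInterp τ (.ex Q) B).code)
    (h : ExactTruth Γ (exactInterp τ (.ex Q)) v z) : v (.box B) := by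
  obtain ⟨n, rfl⟩ := Nat.exists_eq_add_of_le' hn
  obtain ⟨k, hk, hz⟩ := hz
  obtain ⟨C, rfl, rfl⟩ := exists_eq_boxIter_of_code_eq hQ hk.symm
  obtain hC | ⟨D, hD, hvD⟩ | ⟨i, hi, -⟩ := h
  · have hC := ih C (isSub_boxIter _ C) (isTheoremCode_code.1 hC)
    exact hv _ (hC.nec_iter (d * k + 1))
  · obtain rfl := exactInterp_injective hQ hτ (AFml.code_injective hD)
    obtain rfl | ⟨y, hy⟩ := hz
    · exact hvD
    · obtain ⟨E, rfl, -⟩ := exists_eq_boxIter_of_code_eq hQ hy.symm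
      rw [← boxIter_add]
      exact evalTC_boxIter_add (A := E) hv k hvD
  · exact absurd hi.symm (AFml.code_ne_pair_eight _ i)

theorem naProves_of_proves_exactInterp (hn : 1 ≤ n) (hPA : PA ⊆ Γ) (hfree : τ.FreeLt 1)
    (hQ : Function.Injective (AFml.ex Q).instCode) (hτ : IsFlexible Γ (IsTheoremCode Γ) τ)
    (hP : Spreads τ (.ex Q) d n) {A : MFml} (h : Proves Γ (exactInterp τ (.ex Q) A)) :
    NAProves (d + n) n A := by
  have hf := isInterp_exactInterp hfree (.ex Q)
  induction hs : sizeOf A using Nat.strong_induction_on generalizing A with | _ s ih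
  subst hs
  by_contra hA
  obtain ⟨v, hv, hAv⟩ := NAProves.exists_evalTC_of_not hA
  obtain ⟨u, hu, huτ⟩ :=
    hτ.exists_propModel (ExactTruth Γ (exactInterp τ (.ex Q)) v) fun _ => .inl
  have huPA : IsPropModel PA u := fun _ hψ => hu (hψ.mono hPA)
  have hAu : A.evalTC fun B => (exactInterp τ (.ex Q) B).evalProp u :=
    (hf.evalProp_iff huPA A).1 (hu h)
  refine hAv ((MFml.evalTC_congr (fun i => ?_) fun B hB => ?_).1 hAu)
  · refine (huPA.evalProp_all_iff (hfree.subst0_numeral _)).trans ((huτ _).trans ⟨?_, ?_⟩)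
    · rintro (h | ⟨B, hB, -⟩ | ⟨j, hj, hvj⟩)
      · exact absurd h (not_isTheoremCode_pair_eight Γ i)
      · exact absurd hB (AFml.code_ne_pair_eight _ i)
      · rwa [← (Nat.pair_eq_pair.1 hj).2]
    · exact fun h => .inr (.inr ⟨i, rfl, h⟩)
  · refine (hP huPA _).trans ⟨?_, fun h => ⟨_, reaches_refl _, (huτ _).2 (.inr (.inl ⟨B, rfl, h⟩))⟩⟩
    rintro ⟨z, hz, hzτ⟩
    refine evalTC_box_of_reaches hn hQ hτ hv (fun C hC hCΓ => ih _ ?_ hCΓ rfl) hz ((huτ z).1 hzτ)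
    have hBA := hB.sizeOf_le
    rw [MFml.box.sizeOf_spec] at hBA
    have := hC.sizeOf_le
    omega

end Completeness

theorem statement_9_general (Tax : Set AFml) (hext : PA ⊆ Tax) (hcons : ¬ Proves Tax botFml)
    (hTax : SigmaPred fun φ => φ ∈ Tax) (m n : ℕ) (hn : 1 ≤ n) (hnm : n < m) :
    ∃ P : AFml, IsSigma1 P ∧ IsProvPred Tax P ∧
      (∀ (A : MFml) (f : MFml → AFml), IsInterp P f → NAProves m n A → Proves Tax (f A)) ∧
      (∃ f : MFml → AFml, IsInterp P f ∧ ∀ A : MFml, NAProves m n A ↔ Proves Tax (f A)) := by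
  obtain ⟨d, rfl⟩ := Nat.exists_eq_add_of_le' hnm.le
  obtain ⟨τ, hτ, hfree, hflex⟩ :=
    exists_isFlexible hTax hext hcons (sigmaPred_isTheoremCode hTax)
  obtain ⟨Q, hQ, hQfree, hQinj, hP⟩ := exists_spreads hτ hfree (d := d) (by omega) n
  have hf := isInterp_exactInterp hfree (.ex Q)
  exact ⟨.ex Q, hQ, hP.isProvPred hQfree hext hflex,
    fun _ _ hf => hP.proves_of_naProves hn hext hflex hf, exactInterp τ (.ex Q), hf, fun _ =>
      ⟨hP.proves_of_naProves hn hext hflex hf,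
        naProves_of_proves_exactInterp hn hext hfree hQinj hflex hP⟩⟩

/-- Theorem 4.5: Suppose `m > n ≥ 1` (no `Σ₁`-soundness assumed). Then
there is a `Σ₁` provability predicate `PR_T(x)` of `T` such that (1) `N⁺A_{m,n}` is sound for
every arithmetical interpretation based on `PR_T(x)`, and (2) some arithmetical interpretation
based on `PR_T(x)` is exact for `N⁺A_{m,n}`. -/
theorem statement_9 (Tax : Set AFml) (hext : PA ⊆ Tax)
    (hcons : ¬ Proves Tax botFml) (hpr : PrAxiomatized Tax)
    (m n : ℕ) (hn : 1 ≤ n) (hnm : n < m) :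
    ∃ P : AFml, IsSigma1 P ∧ IsProvPred Tax P ∧
      (∀ (A : MFml) (f : MFml → AFml), IsInterp P f → NAProves m n A → Proves Tax (f A)) ∧
      (∃ f : MFml → AFml, IsInterp P f ∧ ∀ A : MFml, NAProves m n A ↔ Proves Tax (f A)) :=
  statement_9_general Tax hext hcons hpr.sigmaPred m n hn hnm

end PLN
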